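/- arXiv:0902.0132 — 2 statements merged into one kernel-verified Lean document; each statement's English description precedes it below -/
import Mathlib

section
/- Existence of the limit graphon: for every sequence (G_n) of finite simple graphs with |V(G_n)| → ∞ such that the sequence (t(F,G_n))_n converges for every finite simple graph F, there exists a graphon W such that t(F,G_n) → t(F,W) for every finite simple graph F. -/
open MeasureTheory Set Filter

/-- The Lebesgue measure restricted to `[0,1]`. -/
noncomputable abbrev μ01 : MeasureTheory.Measure ℝ :=
  MeasureTheory.volume.restrict (Set.Icc (0:ℝ) 1)

/-- A graphon: a symmetric measurable function `[0,1]² → [0,1]`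
(defined on all of `ℝ²` for convenience). -/
def IsGraphon (W : ℝ → ℝ → ℝ) : Prop :=
  Measurable (Function.uncurry W) ∧ (∀ x y, W x y = W y x) ∧ ∀ x y, W x y ∈ Set.Icc (0:ℝ) 1

-- The homomorphism density `t(F,W)` of a finite simple graph `F` in a graphon `W`.
open scoped Classical in
noncomputable def homDensity {n : ℕ} (F : SimpleGraph (Fin n)) (W : ℝ → ℝ → ℝ) : ℝ :=
  ∫ x : Fin n → ℝ,
    (∏ p ∈ Finset.univ.filter (fun p : Fin n × Fin n => p.1 < p.2 ∧ F.Adj p.1 p.2),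
      W (x p.1) (x p.2)) ∂(MeasureTheory.Measure.pi fun _ => μ01)

/-- The cut norm `‖U‖_□` of a kernel `U`. -/
noncomputable def cutNorm (U : ℝ → ℝ → ℝ) : ℝ :=
  sSup { r : ℝ | ∃ S T : Set ℝ, MeasurableSet S ∧ MeasurableSet T ∧
    S ⊆ Set.Icc (0:ℝ) 1 ∧ T ⊆ Set.Icc (0:ℝ) 1 ∧
    r = |∫ x in S, ∫ y in T, U x y| }

/-- An invertible measure preserving map of `[0,1]` onto itself. -/
def IsInvMeasurePreserving (φ : ℝ → ℝ) : Prop :=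
  Set.MapsTo φ (Set.Icc (0:ℝ) 1) (Set.Icc (0:ℝ) 1) ∧
  MeasureTheory.MeasurePreserving φ μ01 μ01 ∧
  ∃ ψ : ℝ → ℝ, Set.MapsTo ψ (Set.Icc (0:ℝ) 1) (Set.Icc (0:ℝ) 1) ∧
    MeasureTheory.MeasurePreserving ψ μ01 μ01 ∧
    (∀ x ∈ Set.Icc (0:ℝ) 1, ψ (φ x) = x) ∧ (∀ x ∈ Set.Icc (0:ℝ) 1, φ (ψ x) = x)

/-- The cut distance `δ_□(U,W)` between two graphons. -/
noncomputable def cutDist (U W : ℝ → ℝ → ℝ) : ℝ :=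
  sInf { r : ℝ | ∃ φ : ℝ → ℝ, IsInvMeasurePreserving φ ∧
    r = cutNorm (fun x y => U x y - W (φ x) (φ y)) }

-- The step-function graphon `W_G` associated with a finite simple graph `G` on `{0,…,n−1}`,
-- using the intervals `J_i = [i/n, (i+1)/n)`.
open scoped Classical in
noncomputable def graphonOf {n : ℕ} (G : SimpleGraph (Fin n)) : ℝ → ℝ → ℝ :=
  fun x y =>
    if ∃ i j : Fin n, G.Adj i j ∧
        x ∈ Set.Ico (((i : ℕ) : ℝ) / n) ((((i : ℕ) : ℝ) + 1) / n) ∧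
        y ∈ Set.Ico (((j : ℕ) : ℝ) / n) ((((j : ℕ) : ℝ) + 1) / n)
    then 1 else 0

-- The homomorphism density `t(F,G) = hom(F,G)/|V(G)|^{|V(F)|}` for finite simple graphs.
open scoped Classical in
noncomputable def homDensityFin {m n : ℕ} (F : SimpleGraph (Fin m)) (G : SimpleGraph (Fin n)) : ℝ :=
  (Fintype.card { f : Fin m → Fin n // ∀ i j, F.Adj i j → G.Adj (f i) (f j) } : ℝ) / (n : ℝ) ^ m

/-!
Weak (Frieze–Kannan) regularity codes the vertices of a graph by points of the Cantor space
`(Bool × Bool)^ℕ` in such a way that, for every `k`, the graph is `2 / √k`-close in cut norm to a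
kernel depending only on the first `k` letters of the codes. The laws of the code of a random vertex
and of the codes of the ends of a random edge live on compact spaces, so along an ultrafilter they
converge weakly, to a measure `σ` and to a measure with a `[0, 1]`-valued density `W` in `σ × σ`.

A step function `h` of the first `k` letters that is `L¹`-close to `W` is then cut-norm-close to
almost all of the graphs: the graph is close to some step function, and the difference of the two is
read off the finitely many cell integrals, which converge. The counting lemma compares the subgraph
densities of the graphs and of `W` with those of `h`, which converge by weak convergence of the
vertex laws. Hence all densities of the graphs converge to those of `W`, and a measure-preserving
map from `[0, 1]` to the Cantor space turns `W` into a graphon.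
-/
open scoped Classical in
/-- The edge set of a graph on a linearly ordered vertex type, each edge being listed once, in
increasing order: this is the index set of the product in `homDensity`. -/
noncomputable def orientedEdges {V : Type*} [Fintype V] [LinearOrder V] (F : SimpleGraph V) :
    Finset (V × V) :=
  Finset.univ.filter fun e => e.1 < e.2 ∧ F.Adj e.1 e.2

lemma mem_orientedEdges {V : Type*} [Fintype V] [LinearOrder V] {F : SimpleGraph V} {e : V × V} :
    e ∈ orientedEdges F ↔ e.1 < e.2 ∧ F.Adj e.1 e.2 := by
  simp [orientedEdges]

/-- The density of a set `E` of oriented edges in a kernel `W` on a probability space `(Ω, μ)`: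
the quantity `t(F, W)`, for `E` the edge set of `F`. Kernels are functions of pairs here. -/
noncomputable def edgeDensity {V Ω : Type*} [Fintype V] [MeasurableSpace Ω] (E : Finset (V × V))
    (μ : Measure Ω) (W : Ω × Ω → ℝ) : ℝ :=
  ∫ x : V → Ω, ∏ e ∈ E, W (x e.1, x e.2) ∂Measure.pi fun _ => μ

/-- A measurable function with values in `[0, 1]`; such functions serve both as the kernels and as
the test functions (fuzzy sets) of the cut norm. -/
def IsUnitFunction {α : Type*} [MeasurableSpace α] (f : α → ℝ) : Prop :=
  Measurable f ∧ ∀ x, f x ∈ Icc (0 : ℝ) 1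

namespace IsUnitFunction

variable {α β : Type*} [MeasurableSpace α] [MeasurableSpace β] {f g : α → ℝ}

lemma measurable (hf : IsUnitFunction f) : Measurable f := hf.1

lemma nonneg (hf : IsUnitFunction f) (x : α) : 0 ≤ f x := (hf.2 x).1

lemma le_one (hf : IsUnitFunction f) (x : α) : f x ≤ 1 := (hf.2 x).2

lemma abs_le_one (hf : IsUnitFunction f) (x : α) : |f x| ≤ 1 := by
  rw [abs_of_nonneg (hf.nonneg x)]; exact hf.le_one x

lemma ofReal_le_one (hf : IsUnitFunction f) (x : α) : ENNReal.ofReal (f x) ≤ 1 :=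
  ENNReal.ofReal_le_one.2 (hf.le_one x)

lemma comp {φ : β → α} (hf : IsUnitFunction f) (hφ : Measurable φ) : IsUnitFunction (f ∘ φ) :=
  ⟨hf.measurable.comp hφ, fun x => hf.2 (φ x)⟩

lemma mul (hf : IsUnitFunction f) (hg : IsUnitFunction g) :
    IsUnitFunction fun x => f x * g x :=
  ⟨hf.measurable.mul hg.measurable, fun x => unitInterval.mul_mem (hf.2 x) (hg.2 x)⟩

lemma tensor {k : β → ℝ} (hf : IsUnitFunction f) (hk : IsUnitFunction k) :
    IsUnitFunction fun z : α × β => f z.1 * k z.2 :=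
  (hf.comp measurable_fst).mul (hk.comp measurable_snd)

lemma prod {ι : Type*} {K : ι → α → ℝ} (s : Finset ι) (hK : ∀ i, IsUnitFunction (K i)) :
    IsUnitFunction fun x => ∏ i ∈ s, K i x :=
  ⟨Finset.measurable_fun_prod s fun i _ => (hK i).measurable, fun x =>
    ⟨Finset.prod_nonneg fun i _ => (hK i).nonneg x,
      Finset.prod_le_one (fun i _ => (hK i).nonneg x) fun i _ => (hK i).le_one x⟩⟩

lemma one_sub (hf : IsUnitFunction f) : IsUnitFunction fun x => 1 - f x :=
  ⟨measurable_const.sub hf.measurable, fun x => Icc.mem_iff_one_sub_mem.1 (hf.2 x)⟩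

lemma indicator_one {s : Set α} (hs : MeasurableSet s) :
    IsUnitFunction (s.indicator (1 : α → ℝ)) :=
  ⟨measurable_one.indicator hs, fun x =>
    ⟨indicator_nonneg (fun _ _ => zero_le_one) x,
      indicator_le_self' (fun _ _ => zero_le_one) x⟩⟩

lemma integrable (hf : IsUnitFunction f) (μ : Measure α) [IsFiniteMeasure μ] : Integrable f μ :=
  .of_bound hf.measurable.aestronglyMeasurable 1 (ae_of_all _ hf.abs_le_one)

lemma integrable_mul {μ : Measure α} (hg : IsUnitFunction g) (hf : Integrable f μ) :
    Integrable (fun x => f x * g x) μ :=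
  hf.mul_bdd hg.measurable.aestronglyMeasurable (ae_of_all _ hg.abs_le_one)

lemma abs_mul_le (hg : IsUnitFunction g) (x : α) : |f x * g x| ≤ |f x| := by
  rw [abs_mul]
  exact mul_le_of_le_one_right (abs_nonneg _) (hg.abs_le_one x)

lemma integral_withDensity (hf : IsUnitFunction f) (μ : Measure α) (g : α → ℝ) :
    ∫ x, g x ∂μ.withDensity (fun x => ENNReal.ofReal (f x)) = ∫ x, f x * g x ∂μ := by
  rw [integral_withDensity_eq_integral_toReal_smul hf.measurable.ennreal_ofReal
    (ae_of_all _ fun _ => ENNReal.ofReal_lt_top)]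
  simp only [ENNReal.toReal_ofReal (hf.nonneg _), smul_eq_mul]

end IsUnitFunction

section CutNorm

variable {Ω : Type*} [MeasurableSpace Ω]

/-- The cut norm of the kernel `U` on `(Ω, μ)` is at most `δ`. The cut norm is taken in its
functional form, with test functions `a, b : Ω → [0, 1]` in the role of the two sets. -/
def CutNormLE (μ : Measure Ω) (U : Ω × Ω → ℝ) (δ : ℝ) : Prop :=
  ∀ a b : Ω → ℝ, IsUnitFunction a → IsUnitFunction b →
    |∫ z, U z * (a z.1 * b z.2) ∂μ.prod μ| ≤ δ

lemma abs_integral_mul_le_integral_abs {μ : Measure Ω} {f g : Ω → ℝ} (hf : Integrable f μ)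
    (hg : IsUnitFunction g) : |∫ x, f x * g x ∂μ| ≤ ∫ x, |f x| ∂μ :=
  abs_integral_le_integral_abs.trans <|
    integral_mono (hg.integrable_mul hf).abs hf.abs fun _ => hg.abs_mul_le _

lemma CutNormLE.mono {μ : Measure Ω} {U : Ω × Ω → ℝ} {δ η : ℝ} (hU : CutNormLE μ U δ)
    (hδη : δ ≤ η) : CutNormLE μ U η :=
  fun a b ha hb => (hU a b ha hb).trans hδη

lemma CutNormLE.of_integral_abs {μ : Measure Ω} {U : Ω × Ω → ℝ} (hU : Integrable U (μ.prod μ)) :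
    CutNormLE μ U (∫ z, |U z| ∂μ.prod μ) :=
  fun _ _ ha hb => abs_integral_mul_le_integral_abs hU (ha.tensor hb)

end CutNorm

section Counting

variable {V Ω : Type*} [Fintype V] [MeasurableSpace Ω] {μ : Measure Ω} [IsProbabilityMeasure μ]

lemma measurePreserving_update [DecidableEq V] (i : V) :
    MeasurePreserving (fun p : (V → Ω) × Ω => Function.update p.1 i p.2)
      ((Measure.pi fun _ => μ).prod μ) (Measure.pi fun _ => μ) := by
  refine ⟨measurable_update', (Measure.pi_eq fun s hs => ?_).symm⟩
  have hpre : (fun p : (V → Ω) × Ω => Function.update p.1 i p.2) ⁻¹' univ.pi s =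
      univ.pi (Function.update s i univ) ×ˢ s i := by
    ext ⟨x, u⟩
    simp only [mem_preimage, mem_univ_pi, mem_prod]
    constructor
    · intro h
      refine ⟨fun j => ?_, by simpa using h i⟩
      rcases eq_or_ne j i with rfl | hj
      · simp
      · simpa [hj] using h j
    · rintro ⟨h, hu⟩ j
      rcases eq_or_ne j i with rfl | hj
      · simpa using hu
      · simpa [hj] using h j
  rw [Measure.map_apply measurable_update' (.univ_pi hs), hpre, Measure.prod_prod, Measure.pi_pi,
    ← Finset.prod_erase_mul _ _ (Finset.mem_univ i),
    ← Finset.prod_erase_mul (a := i) Finset.univ (fun j => μ (s j)) (Finset.mem_univ i)]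
  simp only [Function.update_self, measure_univ, mul_one]
  congr 1
  exact Finset.prod_congr rfl fun j hj => by rw [Function.update_of_ne (Finset.ne_of_mem_erase hj)]

lemma measurePreserving_update_update [DecidableEq V] (i j : V) :
    MeasurePreserving
      (fun p : (V → Ω) × Ω × Ω => Function.update (Function.update p.1 i p.2.1) j p.2.2)
      ((Measure.pi fun _ => μ).prod (μ.prod μ)) (Measure.pi fun _ => μ) :=
  ((measurePreserving_update j).comp ((measurePreserving_update i).prod (.id μ))).comp
    (measurePreserving_prodAssoc (Measure.pi fun _ => μ) μ μ).symm

lemma measurePreserving_eval_pair {i j : V} (hij : i ≠ j) :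
    MeasurePreserving (fun x : V → Ω => (x i, x j)) (Measure.pi fun _ => μ) (μ.prod μ) := by
  have hindep : ProbabilityTheory.IndepFun (fun x : V → Ω => x i) (fun x => x j)
      (Measure.pi fun _ => μ) :=
    (ProbabilityTheory.iIndepFun_pi (X := fun _ => id) fun _ => aemeasurable_id).indepFun hij
  refine ⟨by fun_prop, ?_⟩
  rw [(ProbabilityTheory.indepFun_iff_map_prod_eq_prod_map_map (measurable_pi_apply i).aemeasurable
    (measurable_pi_apply j).aemeasurable).1 hindep,
    (measurePreserving_eval _ i).map_eq, (measurePreserving_eval _ j).map_eq]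

variable {i j : V} {U A B : Ω × Ω → ℝ} {δ : ℝ}

lemma CutNormLE.abs_integral_pi_le (hUδ : CutNormLE μ U δ) (hU : Integrable U (μ.prod μ))
    (hij : i ≠ j) {f g : (V → Ω) → ℝ} (hf : IsUnitFunction f) (hg : IsUnitFunction g)
    (hfj : DependsOn f {j}ᶜ) (hgi : DependsOn g {i}ᶜ) :
    |∫ x, U (x i, x j) * (f x * g x) ∂Measure.pi fun _ => μ| ≤ δ := by
  classical
  have hupd := measurePreserving_update_update (μ := μ) i j
  have hfu : ∀ x u v, f (Function.update (Function.update x i u) j v) =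
      f (Function.update x i u) := fun x u v =>
    hfj fun _ hk => Function.update_of_ne hk ..
  have hgv : ∀ x u v, g (Function.update (Function.update x i u) j v) =
      g (Function.update x j v) := fun x u v => hgi fun k hk => by
    simp only [Function.update_apply, if_neg (show k ≠ i from hk)]
  have hmeas : AEStronglyMeasurable (fun x : V → Ω => U (x i, x j) * (f x * g x))
      (Measure.pi fun _ => μ) :=
    (hU.1.comp_quasiMeasurePreserving (measurePreserving_eval_pair hij).quasiMeasurePreserving).mul
      (hf.mul hg).measurable.aestronglyMeasurable
  rw [← hupd.map_eq] at hmeas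
  rw [← hupd.map_eq, integral_map hupd.aemeasurable hmeas]
  simp only [hfu, hgv, Function.update_self, Function.update_of_ne hij]
  have hfm : IsUnitFunction fun p : (V → Ω) × Ω × Ω => f (Function.update p.1 i p.2.1) :=
    hf.comp (measurable_update'.comp
      (by fun_prop : Measurable fun p : (V → Ω) × Ω × Ω => (p.1, p.2.1)))
  have hgm : IsUnitFunction fun p : (V → Ω) × Ω × Ω => g (Function.update p.1 j p.2.2) :=
    hg.comp (measurable_update'.comp
      (by fun_prop : Measurable fun p : (V → Ω) × Ω × Ω => (p.1, p.2.2)))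
  rw [integral_prod _ ((hfm.mul hgm).integrable_mul (hU.comp_snd _))]
  have hslice : ∀ x : V → Ω, ‖∫ z : Ω × Ω, U z *
      (f (Function.update x i z.1) * g (Function.update x j z.2)) ∂μ.prod μ‖ ≤ δ := fun x =>
    hUδ _ _ (hf.comp (measurable_update x)) (hg.comp (measurable_update x))
  simpa using norm_integral_le_of_norm_le_const (ae_of_all (Measure.pi fun _ : V => μ) hslice)

-- No other edge contains both ends of `e`, so the product splits into a factor independent of the
-- second end and a factor independent of the first one: test functions for the cut norm.
lemma CutNormLE.abs_integral_prod_le [LinearOrder V] (hUδ : CutNormLE μ U δ)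
    (hU : Integrable U (μ.prod μ)) {D : Finset (V × V)} (hD : ∀ d ∈ D, d.1 < d.2) {e : V × V}
    (he : e.1 < e.2) (heD : e ∉ D) {K : V × V → Ω × Ω → ℝ} (hK : ∀ d, IsUnitFunction (K d)) :
    |∫ x, U (x e.1, x e.2) * ∏ d ∈ D, K d (x d.1, x d.2) ∂Measure.pi fun _ => μ| ≤ δ := by
  have hunit : ∀ s : Finset (V × V),
      IsUnitFunction fun x : V → Ω => ∏ d ∈ s, K d (x d.1, x d.2) := fun s =>
    .prod s fun d => (hK d).comp (by fun_prop : Measurable fun x : V → Ω => (x d.1, x d.2))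
  simp only [← Finset.prod_filter_not_mul_prod_filter D fun d => d.1 = e.2 ∨ d.2 = e.2]
  refine hUδ.abs_integral_pi_le hU he.ne (hunit _) (hunit _) ?_ ?_
  · intro x y hxy
    refine Finset.prod_congr rfl fun d hd => ?_
    obtain ⟨-, hd⟩ := Finset.mem_filter.1 hd
    rw [hxy d.1 fun h => hd (.inl h), hxy d.2 fun h => hd (.inr h)]
  · intro x y hxy
    refine Finset.prod_congr rfl fun d hd => ?_
    obtain ⟨hdD, hd⟩ := Finset.mem_filter.1 hd
    have hlt := hD d hdD
    have h₁ : d.1 ≠ e.1 := by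
      rintro h
      rcases hd with hd | hd
      · exact he.ne (h.symm.trans hd)
      · exact heD (Prod.ext h hd ▸ hdD)
    have h₂ : d.2 ≠ e.1 := by
      rintro h
      rcases hd with hd | hd
      · exact (he.trans (hd ▸ h ▸ hlt)).false
      · exact he.ne (h.symm.trans hd)
    rw [hxy d.1 h₁, hxy d.2 h₂]

lemma abs_edgeDensity_sub_le [LinearOrder V] (hA : IsUnitFunction A) (hB : IsUnitFunction B)
    (hδ : CutNormLE μ (A - B) δ) {E : Finset (V × V)} (hE : ∀ e ∈ E, e.1 < e.2) :
    |edgeDensity E μ A - edgeDensity E μ B| ≤ E.card * δ := by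
  let K : Finset (V × V) → V × V → Ω × Ω → ℝ := fun S e => if e ∈ S then A else B
  have hK : ∀ S e, IsUnitFunction (K S e) := fun S e => by
    simp only [K]; split_ifs <;> assumption
  let P : Finset (V × V) → (V → Ω) → ℝ := fun S x => ∏ e ∈ E, K S e (x e.1, x e.2)
  have hP : ∀ S, Integrable (P S) (Measure.pi fun _ => μ) := fun S =>
    (IsUnitFunction.prod E fun e => (hK S e).comp
      (by fun_prop : Measurable fun x : V → Ω => (x e.1, x e.2))).integrable _
  have hreplace : ∀ S ⊆ E, |∫ x, P S x ∂(Measure.pi fun _ => μ) - edgeDensity E μ B| ≤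
      S.card * δ := by
    intro S
    induction S using Finset.induction_on with
    | empty => simp [P, K, edgeDensity]
    | insert e S heS ih =>
      intro hS
      obtain ⟨heE, hSE⟩ := Finset.insert_subset_iff.1 hS
      have hdiff : ∀ x, P (insert e S) x - P S x =
          (A - B) (x e.1, x e.2) * ∏ d ∈ E.erase e, K S d (x d.1, x d.2) := by
        intro x
        have hrest : ∏ d ∈ E.erase e, K (insert e S) d (x d.1, x d.2) =
            ∏ d ∈ E.erase e, K S d (x d.1, x d.2) :=
          Finset.prod_congr rfl fun d hd => by
            simp only [K, Finset.mem_insert, Finset.ne_of_mem_erase hd, false_or]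
        simp only [P]
        rw [← Finset.mul_prod_erase E _ heE, ← Finset.mul_prod_erase E _ heE, hrest, ← sub_mul]
        simp [K, heS]
      have hstep := hδ.abs_integral_prod_le ((hA.integrable _).sub (hB.integrable _))
        (fun d hd => hE d (Finset.mem_of_mem_erase hd)) (hE e heE) (Finset.notMem_erase e E) (hK S)
      simp only [← hdiff] at hstep
      rw [integral_sub (hP _) (hP _)] at hstep
      rw [Finset.card_insert_of_notMem heS]
      push_cast
      linarith [abs_sub_le (∫ x, P (insert e S) x ∂Measure.pi fun _ => μ)
        (∫ x, P S x ∂Measure.pi fun _ => μ) (edgeDensity E μ B), ih hSE]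
  have hall := hreplace E subset_rfl
  have hPE : P E = fun x => ∏ e ∈ E, A (x e.1, x e.2) :=
    funext fun x => Finset.prod_congr rfl fun e he => by simp [K, he]
  rwa [hPE] at hall

end Counting

section EdgeDensity

lemma homDensity_eq_edgeDensity {n : ℕ} (F : SimpleGraph (Fin n)) (W : ℝ → ℝ → ℝ) :
    homDensity F W = edgeDensity (orientedEdges F) μ01 (Function.uncurry W) := rfl

lemma edgeDensity_map {V Ω Ω' : Type*} [Fintype V] [MeasurableSpace Ω] [MeasurableSpace Ω']
    (E : Finset (V × V)) (μ : Measure Ω) [IsProbabilityMeasure μ] {φ : Ω → Ω'} (hφ : Measurable φ)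
    {W : Ω' × Ω' → ℝ} (hW : Measurable W) :
    edgeDensity E (μ.map φ) W = edgeDensity E μ (W ∘ Prod.map φ φ) := by
  have := Measure.isProbabilityMeasure_map (μ := μ) hφ.aemeasurable
  have hmeas : Measurable fun (x : V → Ω) v => φ (x v) := by fun_prop
  have hmap := Measure.pi_map_pi (μ := fun _ : V => μ) (f := fun _ => φ) fun _ => hφ.aemeasurable
  rw [edgeDensity, ← hmap, integral_map hmeas.aemeasurable]
  · rfl
  · exact (Finset.measurable_fun_prod E fun e _ => by fun_prop).aestronglyMeasurable

/-- The adjacency matrix of `G` as a kernel on its vertex set. -/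
noncomputable def adjKernel {V : Type*} (G : SimpleGraph V) : V × V → ℝ :=
  {z | G.Adj z.1 z.2}.indicator 1

lemma adjKernel_swap {V : Type*} (G : SimpleGraph V) (z : V × V) :
    adjKernel G z.swap = adjKernel G z := by
  classical simp [adjKernel, indicator_apply, G.adj_comm]

lemma isUnitFunction_adjKernel {V : Type*} [MeasurableSpace V] [MeasurableSingletonClass V]
    [Countable V] (G : SimpleGraph V) : IsUnitFunction (adjKernel G) :=
  .indicator_one (to_countable _).measurableSet

lemma card_hom_eq_sum_prod {V V' : Type*} [Fintype V] [LinearOrder V] [Fintype V']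
    (F : SimpleGraph V) (G : SimpleGraph V') :
    (Nat.card {f : V → V' // ∀ i j, F.Adj i j → G.Adj (f i) (f j)} : ℝ) =
      ∑ f : V → V', ∏ e ∈ orientedEdges F,
        adjKernel G (f e.1, f e.2) := by
  classical
  rw [Nat.card_eq_fintype_card, Fintype.card_subtype, Finset.card_filter]
  push_cast
  refine Finset.sum_congr rfl fun f _ => ?_
  simp only [adjKernel, indicator_apply, mem_ofPred_eq, Pi.one_apply, Finset.prod_ite_zero,
    Finset.prod_const_one, mem_orientedEdges]
  refine if_congr ⟨fun h e he => h _ _ he.2, fun h i j hij => ?_⟩ rfl rfl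
  rcases lt_trichotomy i j with hlt | rfl | hgt
  · exact h (i, j) ⟨hlt, hij⟩
  · exact (F.loopless.irrefl i hij).elim
  · exact (h (j, i) ⟨hgt, hij.symm⟩).symm

lemma homDensityFin_eq_edgeDensity {m n : ℕ} [NeZero n] (F : SimpleGraph (Fin m))
    (G : SimpleGraph (Fin n)) :
    homDensityFin F G = edgeDensity (orientedEdges F) (ProbabilityTheory.uniformOn univ)
      (adjKernel G) := by
  classical
  have hpi : ∀ x : Fin m → Fin n,
      (Measure.pi fun _ : Fin m => ProbabilityTheory.uniformOn (univ : Set (Fin n))).real {x} =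
        ((n : ℝ) ^ m)⁻¹ := fun x => by
    simp [measureReal_def, Measure.pi_singleton, ProbabilityTheory.uniformOn_univ]
  rw [homDensityFin, ← Nat.card_eq_fintype_card, card_hom_eq_sum_prod, edgeDensity,
    integral_fintype .of_finite]
  simp only [hpi, smul_eq_mul, ← Finset.mul_sum]
  rw [mul_comm, div_eq_mul_inv]

end EdgeDensity

section Regularity

lemma exists_measurableSet_abs_integral_mul_le {α : Type*} [MeasurableSpace α] {μ : Measure α}
    {w a : α → ℝ} (hw : Measurable w) (hwi : Integrable w μ) (ha : IsUnitFunction a) :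
    ∃ S, MeasurableSet S ∧ |∫ x, w x * a x ∂μ| ≤ |∫ x, w x * S.indicator 1 x ∂μ| := by
  have hpos : ∀ g : α → ℝ, Measurable g → Integrable g μ →
      ∫ x, g x * a x ∂μ ≤ ∫ x, g x * {y | 0 < g y}.indicator 1 x ∂μ := fun g hg hgi =>
    integral_mono (ha.integrable_mul hgi)
      ((IsUnitFunction.indicator_one (measurableSet_lt measurable_const hg)).integrable_mul hgi)
      fun x => by
        by_cases hx : 0 < g x
        · simpa [hx] using mul_le_of_le_one_right hx.le (ha.le_one x)
        · simpa [hx] using mul_nonpos_of_nonpos_of_nonneg (not_lt.1 hx) (ha.nonneg x)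
  rcases abs_choice (∫ x, w x * a x ∂μ) with h | h
  · exact ⟨_, measurableSet_lt measurable_const hw, h ▸ (hpos w hw hwi).trans (le_abs_self _)⟩
  · refine ⟨{x | 0 < -w x}, measurableSet_lt measurable_const hw.neg, ?_⟩
    rw [h, ← integral_neg, ← abs_neg, ← integral_neg]
    simp only [← neg_mul]
    exact (hpos _ hw.neg hwi.neg).trans (le_abs_self _)

variable {Ω : Type*} [MeasurableSpace Ω] {μ : Measure Ω} {U : Ω × Ω → ℝ}

section SFinite

variable [SFinite μ]

lemma integral_mul_tensor {a b : Ω → ℝ} (hU : Integrable U (μ.prod μ)) (ha : IsUnitFunction a)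
    (hb : IsUnitFunction b) :
    ∫ z, U z * (a z.1 * b z.2) ∂μ.prod μ = ∫ u, (∫ v, U (u, v) * b v ∂μ) * a u ∂μ := by
  rw [integral_prod _ ((ha.tensor hb).integrable_mul hU)]
  simp only [← integral_mul_const]
  exact integral_congr_ae (ae_of_all _ fun u => integral_congr_ae (ae_of_all _ fun v => by ring))

lemma integral_mul_tensor_symm {a b : Ω → ℝ} (hU : Integrable U (μ.prod μ))
    (ha : IsUnitFunction a) (hb : IsUnitFunction b) :
    ∫ z, U z * (a z.1 * b z.2) ∂μ.prod μ = ∫ v, (∫ u, U (u, v) * a u ∂μ) * b v ∂μ := by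
  rw [integral_prod_symm _ ((ha.tensor hb).integrable_mul hU)]
  simp only [← integral_mul_const]
  exact integral_congr_ae (ae_of_all _ fun u => integral_congr_ae (ae_of_all _ fun v => by ring))

lemma exists_abs_integral_mul_tensor_le_setIntegral {a b : Ω → ℝ} (hU : Measurable U)
    (hUi : Integrable U (μ.prod μ)) (ha : IsUnitFunction a) (hb : IsUnitFunction b) :
    ∃ S T, MeasurableSet S ∧ MeasurableSet T ∧
      |∫ z, U z * (a z.1 * b z.2) ∂μ.prod μ| ≤ |∫ z in S ×ˢ T, U z ∂μ.prod μ| := by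
  have hw : Measurable fun u => ∫ v, U (u, v) * b v ∂μ :=
    (hU.mul (hb.measurable.comp measurable_snd)).stronglyMeasurable.integral_prod_right'.measurable
  have hwi : Integrable (fun u => ∫ v, U (u, v) * b v ∂μ) μ :=
    ((hb.comp measurable_snd).integrable_mul hUi).integral_prod_left
  obtain ⟨S, hS, hle⟩ := exists_measurableSet_abs_integral_mul_le hw hwi ha
  have hS' : IsUnitFunction (S.indicator (1 : Ω → ℝ)) := .indicator_one hS
  have hw' : Measurable fun v => ∫ u, U (u, v) * S.indicator 1 u ∂μ :=
    (hU.mul (hS'.measurable.comp measurable_fst)).stronglyMeasurable.integral_prod_left'.measurable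
  have hwi' : Integrable (fun v => ∫ u, U (u, v) * S.indicator 1 u ∂μ) μ :=
    ((hS'.comp measurable_fst).integrable_mul hUi).integral_prod_right
  obtain ⟨T, hT, hle'⟩ := exists_measurableSet_abs_integral_mul_le hw' hwi' hb
  refine ⟨S, T, hS, hT, ?_⟩
  rw [← integral_mul_tensor hUi ha hb, ← integral_mul_tensor hUi hS' hb,
    integral_mul_tensor_symm hUi hS' hb] at hle
  rw [← integral_mul_tensor_symm hUi hS' (.indicator_one hT)] at hle'
  refine (hle.trans hle').trans_eq ?_
  rw [← integral_indicator (hS.prod hT)]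
  congr 2 with z
  by_cases h₁ : z.1 ∈ S <;> by_cases h₂ : z.2 ∈ T <;> simp [h₁, h₂]

lemma exists_cutNormLE_two_mul_abs_setIntegral (hU : Measurable U)
    (hUi : Integrable U (μ.prod μ)) :
    ∃ S T, MeasurableSet S ∧ MeasurableSet T ∧
      CutNormLE μ U (2 * |∫ z in S ×ˢ T, U z ∂μ.prod μ|) := by
  let values : Set ℝ := {r | ∃ S T, MeasurableSet S ∧ MeasurableSet T ∧
    |∫ z in S ×ˢ T, U z ∂μ.prod μ| = r}
  have hbdd : BddAbove values := by
    refine ⟨∫ z, |U z| ∂μ.prod μ, ?_⟩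
    rintro _ ⟨S, T, -, -, rfl⟩
    exact abs_integral_le_integral_abs.trans
      (setIntegral_le_integral hUi.abs (ae_of_all _ fun z => abs_nonneg (U z)))
  have hcut : CutNormLE μ U (sSup values) := fun a b ha hb => by
    obtain ⟨S, T, hS, hT, hle⟩ := exists_abs_integral_mul_tensor_le_setIntegral hU hUi ha hb
    exact hle.trans (le_csSup hbdd ⟨S, T, hS, hT, rfl⟩)
  rcases le_or_gt (sSup values) 0 with h0 | hpos
  · exact ⟨∅, ∅, .empty, .empty, fun a b ha hb => by simpa using (hcut a b ha hb).trans h0⟩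
  · have hne : values.Nonempty := ⟨_, ∅, ∅, .empty, .empty, rfl⟩
    obtain ⟨_, ⟨S, T, hS, hT, rfl⟩, hlt⟩ := exists_lt_of_lt_csSup hne (half_lt_self hpos)
    exact ⟨S, T, hS, hT, fun a b ha hb => (hcut a b ha hb).trans (by linarith)⟩

end SFinite

/-- One step of the greedy decomposition behind the regularity lemma: the integral of `R` over `Q`
is subtracted from the values of `R` on `Q`. On a probability space this lowers `∫ R ^ 2` by at
least the square of the subtracted constant. -/
noncomputable def subIntegralOn {α : Type*} [MeasurableSpace α] (ρ : Measure α) (Q : Set α)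
    (R : α → ℝ) : α → ℝ :=
  R - Q.indicator fun _ => ∫ y in Q, R y ∂ρ

section SubIntegralOn

variable {α : Type*} [MeasurableSpace α] {ρ : Measure α} {R : α → ℝ} {Q : Set α}

lemma measurable_subIntegralOn (hR : Measurable R) (hQ : MeasurableSet Q) :
    Measurable (subIntegralOn ρ Q R) :=
  hR.sub (measurable_const.indicator hQ)

lemma memLp_subIntegralOn [IsFiniteMeasure ρ] (hR : MemLp R 2 ρ) (hQ : MeasurableSet Q) :
    MemLp (subIntegralOn ρ Q R) 2 ρ :=
  hR.sub ((memLp_const _).indicator hQ)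

lemma integral_subIntegralOn_sq_le [IsProbabilityMeasure ρ] (hR : MemLp R 2 ρ)
    (hQ : MeasurableSet Q) :
    ∫ x, subIntegralOn ρ Q R x ^ 2 ∂ρ ≤ ∫ x, R x ^ 2 ∂ρ - (∫ x in Q, R x ∂ρ) ^ 2 := by
  set c := ∫ x in Q, R x ∂ρ with hc
  have hRi : Integrable R ρ := hR.integrable one_le_two
  calc ∫ x, subIntegralOn ρ Q R x ^ 2 ∂ρ
      = ∫ x, (R x ^ 2 - 2 * c * Q.indicator R x + Q.indicator (fun _ => c ^ 2) x) ∂ρ := by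
        congr 1 with x
        by_cases hx : x ∈ Q
        · simp only [subIntegralOn, Pi.sub_apply, ← hc, indicator_of_mem hx]; ring
        · simp [subIntegralOn, indicator_of_notMem hx]
    _ = ∫ x, R x ^ 2 ∂ρ - 2 * c * c + c ^ 2 * ρ.real Q := by
        rw [integral_add, integral_sub, integral_const_mul, integral_indicator hQ,
          integral_indicator_const _ hQ, smul_eq_mul, mul_comm (ρ.real Q)]
        · exact hR.integrable_sq
        · exact (hRi.indicator hQ).const_mul _
        · exact hR.integrable_sq.sub ((hRi.indicator hQ).const_mul _)
        · exact (integrable_const _).indicator hQ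
    _ ≤ ∫ x, R x ^ 2 ∂ρ - c ^ 2 := by
        linarith [mul_le_of_le_one_right (sq_nonneg c) (measureReal_le_one (μ := ρ) (s := Q))]

lemma sum_sq_setIntegral_le [IsProbabilityMeasure ρ] {R : ℕ → α → ℝ} {Q : ℕ → Set α}
    (hR : ∀ j, MemLp (R j) 2 ρ) (hQ : ∀ j, MeasurableSet (Q j))
    (hsucc : ∀ j, R (j + 1) = subIntegralOn ρ (Q j) (R j)) (k : ℕ) :
    ∑ j ∈ Finset.range k, (∫ x in Q j, R j x ∂ρ) ^ 2 ≤ ∫ x, R 0 x ^ 2 ∂ρ := by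
  suffices h : ∑ j ∈ Finset.range k, (∫ x in Q j, R j x ∂ρ) ^ 2 + ∫ x, R k x ^ 2 ∂ρ ≤
      ∫ x, R 0 x ^ 2 ∂ρ from (le_add_of_nonneg_right (integral_nonneg fun x => sq_nonneg _)).trans h
  induction k with
  | zero => simp
  | succ k ih =>
    rw [Finset.sum_range_succ, hsucc]
    linarith [integral_subIntegralOn_sq_le (hR k) (hQ k)]

lemma sub_apply_eq_of_forall_mem_iff {R : ℕ → α → ℝ} {Q : ℕ → Set α}
    (hsucc : ∀ j, R (j + 1) = subIntegralOn ρ (Q j) (R j)) {x y : α} {k : ℕ}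
    (hxy : ∀ j < k, x ∈ Q j ↔ y ∈ Q j) : R 0 x - R k x = R 0 y - R k y := by
  classical
  induction k with
  | zero => simp
  | succ k ih =>
    have hQ : (Q k).indicator (fun _ => ∫ z in Q k, R k z ∂ρ) x =
        (Q k).indicator (fun _ => ∫ z in Q k, R k z ∂ρ) y := by
      simp only [indicator_apply, hxy k k.lt_succ_self]
    simp only [hsucc, subIntegralOn, Pi.sub_apply, hQ]
    linarith [ih fun j hj => hxy j (hj.trans k.lt_succ_self)]

end SubIntegralOn

lemma exists_abs_le_one_div_sqrt {c : ℕ → ℝ} {k : ℕ} (hk : k ≠ 0)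
    (hc : ∑ j ∈ Finset.range k, c j ^ 2 ≤ 1) : ∃ j < k, |c j| ≤ 1 / √k := by
  have hk0 : (k : ℝ) ≠ 0 := Nat.cast_ne_zero.2 hk
  obtain ⟨j, hj, hle⟩ : ∃ j ∈ Finset.range k, c j ^ 2 ≤ 1 / k :=
    Finset.exists_le_of_sum_le (Finset.nonempty_range_iff.2 hk) (by simpa [hk0] using hc)
  refine ⟨j, Finset.mem_range.1 hj, ?_⟩
  simpa only [Real.sqrt_div zero_le_one, Real.sqrt_one] using Real.abs_le_sqrt hle

lemma exists_greedy_cuts [IsFiniteMeasure μ] {A : Ω × Ω → ℝ} (hA : Measurable A)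
    (hA2 : MemLp A 2 (μ.prod μ)) :
    ∃ (R : ℕ → Ω × Ω → ℝ) (S T : ℕ → Set Ω), R 0 = A ∧
      (∀ j, R (j + 1) = subIntegralOn (μ.prod μ) (S j ×ˢ T j) (R j)) ∧
      (∀ j, MeasurableSet (S j)) ∧ (∀ j, MeasurableSet (T j)) ∧
      (∀ j, MemLp (R j) 2 (μ.prod μ)) ∧
      ∀ j, CutNormLE μ (R j) (2 * |∫ z in S j ×ˢ T j, R j z ∂μ.prod μ|) := by
  choose! S T hS hT hcut using fun (U : Ω × Ω → ℝ)
      (hU : Measurable U ∧ MemLp U 2 (μ.prod μ)) =>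
    exists_cutNormLE_two_mul_abs_setIntegral hU.1 (hU.2.integrable one_le_two)
  let R : ℕ → Ω × Ω → ℝ := fun j => (fun U => subIntegralOn (μ.prod μ) (S U ×ˢ T U) U)^[j] A
  have hsucc : ∀ j, R (j + 1) = subIntegralOn (μ.prod μ) (S (R j) ×ˢ T (R j)) (R j) := fun j =>
    Function.iterate_succ_apply' ..
  have hR : ∀ j, Measurable (R j) ∧ MemLp (R j) 2 (μ.prod μ) := fun j => by
    induction j with
    | zero => exact ⟨hA, hA2⟩
    | succ j ih =>
      have hQ := (hS _ ih).prod (hT _ ih)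
      rw [hsucc]
      exact ⟨measurable_subIntegralOn ih.1 hQ, memLp_subIntegralOn ih.2 hQ⟩
  exact ⟨R, fun j => S (R j), fun j => T (R j), rfl, hsucc, fun j => hS _ (hR j),
    fun j => hT _ (hR j), fun j => (hR j).2, fun j => hcut _ (hR j)⟩

/-- The sequences that serve as vertex codes: the `j`-th letter of the code of a vertex tells on
which sides of the `j`-th cut of the greedy decomposition the vertex lies. -/
abbrev VertexCode : Type := ℕ → Bool × Bool

/-- The first `k` letters of a code, and so the cell of the vertex in the common refinement of the
first `k` cuts. -/
def codePrefix (k : ℕ) (x : VertexCode) : Fin k → Bool × Bool := fun j => x j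

lemma continuous_codePrefix (k : ℕ) : Continuous (codePrefix k) := by
  unfold codePrefix; fun_prop

lemma exists_code_cutNormLE [IsProbabilityMeasure μ] {A : Ω × Ω → ℝ} (hA : IsUnitFunction A) :
    ∃ κ : Ω → VertexCode, Measurable κ ∧ ∀ k : ℕ, k ≠ 0 →
      ∃ f : (Fin k → Bool × Bool) × (Fin k → Bool × Bool) → ℝ,
        CutNormLE μ (A - f ∘ Prod.map (codePrefix k ∘ κ) (codePrefix k ∘ κ)) (2 / √k) := by
  classical
  have hA2 : MemLp A 2 (μ.prod μ) :=
    .of_bound hA.measurable.aestronglyMeasurable 1 (ae_of_all _ hA.abs_le_one)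
  have hsq : ∫ z, A z ^ 2 ∂μ.prod μ ≤ 1 := by
    simpa using integral_mono hA2.integrable_sq (integrable_const (1 : ℝ)) fun z =>
      pow_le_one₀ (hA.nonneg z) (hA.le_one z)
  obtain ⟨R, S, T, rfl, hsucc, hS, hT, hR, hcut⟩ := exists_greedy_cuts hA.measurable hA2
  refine ⟨fun u j => (decide (u ∈ S j), decide (u ∈ T j)), ?_, fun k hk => ?_⟩
  · exact measurable_pi_lambda _ fun j =>
      (measurable_to_bool (by simpa [preimage] using hS j)).prodMk
        (measurable_to_bool (by simpa [preimage] using hT j))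
  obtain ⟨j, hjk, hj⟩ := exists_abs_le_one_div_sqrt hk
    ((sum_sq_setIntegral_le hR (fun j => (hS j).prod (hT j)) hsucc k).trans hsq)
  have hfactor : Function.FactorsThrough (R 0 - R j) (Prod.map
      (codePrefix k ∘ fun u j => (decide (u ∈ S j), decide (u ∈ T j)))
      (codePrefix k ∘ fun u j => (decide (u ∈ S j), decide (u ∈ T j)))) := by
    intro z w hzw
    refine sub_apply_eq_of_forall_mem_iff hsucc fun l hl => ?_
    have hfst : (decide (z.1 ∈ S l), decide (z.1 ∈ T l)) =
        (decide (w.1 ∈ S l), decide (w.1 ∈ T l)) :=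
      congrFun (congrArg Prod.fst hzw) ⟨l, hl.trans hjk⟩
    have hsnd : (decide (z.2 ∈ S l), decide (z.2 ∈ T l)) =
        (decide (w.2 ∈ S l), decide (w.2 ∈ T l)) :=
      congrFun (congrArg Prod.snd hzw) ⟨l, hl.trans hjk⟩
    simp only [Prod.mk.injEq, decide_eq_decide] at hfst hsnd
    rw [mem_prod, mem_prod, hfst.1, hsnd.2]
  obtain ⟨f, hf⟩ := (Function.factorsThrough_iff _).1 hfactor
  refine ⟨f, fun a b ha hb => ?_⟩
  rw [← hf, sub_sub_cancel]
  exact (hcut j a b ha hb).trans (by rw [← mul_one_div]; gcongr)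

end Regularity

section Averaging

lemma exists_withDensity_eq_of_le {α : Type*} [MeasurableSpace α] {μ ν : Measure α}
    [IsFiniteMeasure μ] (hνμ : ν ≤ μ) :
    ∃ θ : α → ℝ, IsUnitFunction θ ∧ μ.withDensity (fun x => ENNReal.ofReal (θ x)) = ν := by
  have := isFiniteMeasure_of_le μ hνμ
  refine ⟨fun x => min (ν.rnDeriv μ x).toReal 1, ⟨?_, fun x => ?_⟩, ?_⟩
  · exact (ν.measurable_rnDeriv μ).ennreal_toReal.min measurable_const
  · exact ⟨le_min ENNReal.toReal_nonneg zero_le_one, min_le_right _ _⟩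
  · conv_rhs => rw [← Measure.withDensity_rnDeriv_eq ν μ hνμ.absolutelyContinuous]
    refine withDensity_congr_ae ?_
    filter_upwards [Measure.rnDeriv_le_one_of_le hνμ] with x hx
    have hx' : ν.rnDeriv μ x ≠ ⊤ := (hx.trans_lt ENNReal.one_lt_top).ne
    rw [min_eq_left (ENNReal.toReal_le_of_le_ofReal zero_le_one (by simpa using hx)),
      ENNReal.ofReal_toReal hx']

variable {Ω E : Type*} [MeasurableSpace Ω] [MeasurableSpace E] {μ : Measure Ω} [IsFiniteMeasure μ]
  {κ : Ω → E} {a b : Ω → ℝ}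

lemma exists_integral_comp_mul_eq (hκ : Measurable κ) (ha : IsUnitFunction a) :
    ∃ θ : E → ℝ, IsUnitFunction θ ∧ ∀ g : E → ℝ, Measurable g →
      ∫ u, g (κ u) * a u ∂μ = ∫ u, g (κ u) * θ (κ u) ∂μ := by
  have hle : (μ.withDensity fun u => ENNReal.ofReal (a u)).map κ ≤ μ.map κ := by
    refine Measure.map_mono ?_ hκ
    calc μ.withDensity (fun u => ENNReal.ofReal (a u)) ≤ μ.withDensity 1 :=
          withDensity_mono (ae_of_all _ ha.ofReal_le_one)
      _ = μ := withDensity_one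
  obtain ⟨θ, hθ, heq⟩ := exists_withDensity_eq_of_le hle
  refine ⟨θ, hθ, fun g hg => ?_⟩
  calc ∫ u, g (κ u) * a u ∂μ
      = ∫ y, g y ∂(μ.withDensity fun u => ENNReal.ofReal (a u)).map κ := by
        rw [integral_map hκ.aemeasurable hg.aestronglyMeasurable, ha.integral_withDensity]
        simp only [mul_comm]
    _ = ∫ u, g (κ u) * θ (κ u) ∂μ := by
        rw [← heq, hθ.integral_withDensity, integral_map hκ.aemeasurable
          (f := fun y => θ y * g y) (hθ.measurable.mul hg).aestronglyMeasurable]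
        simp only [mul_comm]

lemma exists_integral_comp_mul_tensor_eq (hκ : Measurable κ) (ha : IsUnitFunction a)
    (hb : IsUnitFunction b) :
    ∃ θ τ : E → ℝ, IsUnitFunction θ ∧ IsUnitFunction τ ∧ ∀ f : E × E → ℝ, Measurable f →
      Integrable (f ∘ Prod.map κ κ) (μ.prod μ) →
      ∫ z, (f ∘ Prod.map κ κ) z * (a z.1 * b z.2) ∂μ.prod μ =
        ∫ z, (f ∘ Prod.map κ κ) z * ((θ ∘ κ) z.1 * (τ ∘ κ) z.2) ∂μ.prod μ := by
  obtain ⟨θ, hθ, hθa⟩ := exists_integral_comp_mul_eq (μ := μ) hκ ha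
  obtain ⟨τ, hτ, hτb⟩ := exists_integral_comp_mul_eq (μ := μ) hκ hb
  refine ⟨θ, τ, hθ, hτ, fun f hf hfi => ?_⟩
  have hfst : ∀ u, ∫ v, (f ∘ Prod.map κ κ) (u, v) * b v ∂μ =
      ∫ v, (f ∘ Prod.map κ κ) (u, v) * (τ ∘ κ) v ∂μ := fun u =>
    hτb _ (hf.comp measurable_prodMk_left)
  have hsnd : ∀ v, ∫ u, (f ∘ Prod.map κ κ) (u, v) * a u ∂μ =
      ∫ u, (f ∘ Prod.map κ κ) (u, v) * (θ ∘ κ) u ∂μ := fun v =>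
    hθa (fun x => f (x, κ v)) (hf.comp measurable_prodMk_right)
  rw [integral_mul_tensor hfi ha hb]
  simp only [hfst]
  rw [← integral_mul_tensor hfi ha (hτ.comp hκ), integral_mul_tensor_symm hfi ha (hτ.comp hκ)]
  simp only [hsnd]
  rw [← integral_mul_tensor_symm hfi (hθ.comp hκ) (hτ.comp hκ)]

-- Conditioning the test functions on `κ` does not change their integrals against functions of the
-- code. Comparing `A` with `f` before and after the conditioning costs `δ` each time.
lemma CutNormLE.of_comp {A : Ω × Ω → ℝ} {f h : E × E → ℝ} {δ η : ℝ} (hκ : Measurable κ)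
    (hA : Integrable A (μ.prod μ)) (hf : Measurable f)
    (hfi : Integrable (f ∘ Prod.map κ κ) (μ.prod μ)) (hh : Measurable h)
    (hhi : Integrable (h ∘ Prod.map κ κ) (μ.prod μ))
    (hδ : CutNormLE μ (A - f ∘ Prod.map κ κ) δ)
    (hη : ∀ θ τ : E → ℝ, IsUnitFunction θ → IsUnitFunction τ →
      |∫ z, (A - h ∘ Prod.map κ κ) z * ((θ ∘ κ) z.1 * (τ ∘ κ) z.2) ∂μ.prod μ| ≤ η) :
    CutNormLE μ (A - h ∘ Prod.map κ κ) (2 * δ + η) := by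
  intro a b ha hb
  obtain ⟨θ, τ, hθ, hτ, heq⟩ := exists_integral_comp_mul_tensor_eq (μ := μ) hκ ha hb
  have hab := ha.tensor hb
  have hθτ := (hθ.comp hκ).tensor (hτ.comp hκ)
  have hab' := hδ a b ha hb
  have hθτ' := hδ _ _ (hθ.comp hκ) (hτ.comp hκ)
  have hη' := hη θ τ hθ hτ
  have hfeq := heq f hf hfi
  have hheq := heq h hh hhi
  simp only [Pi.sub_apply, sub_mul] at hab' hθτ' hη' ⊢
  rw [integral_sub (hab.integrable_mul hA) (hab.integrable_mul hfi), abs_le] at hab'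
  rw [integral_sub (hθτ.integrable_mul hA) (hθτ.integrable_mul hfi), abs_le] at hθτ'
  rw [integral_sub (hθτ.integrable_mul hA) (hθτ.integrable_mul hhi), abs_le] at hη'
  rw [integral_sub (hab.integrable_mul hA) (hab.integrable_mul hhi), abs_le]
  constructor <;> linarith [hab'.1, hab'.2, hθτ'.1, hθτ'.2, hη'.1, hη'.2]

lemma CutNormLE.of_comp_of_fintype [Fintype E] [MeasurableSingletonClass E] {A : Ω × Ω → ℝ}
    {f h : E × E → ℝ} {δ : ℝ} (hκ : Measurable κ) (hA : Integrable A (μ.prod μ))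
    (hδ : CutNormLE μ (A - f ∘ Prod.map κ κ) δ) :
    CutNormLE μ (A - h ∘ Prod.map κ κ) (2 * δ + ∑ p, |∫ z, (A - h ∘ Prod.map κ κ) z *
      ({p} : Set (E × E)).indicator 1 (Prod.map κ κ z) ∂μ.prod μ|) := by
  classical
  have hκκ : Measurable (Prod.map κ κ) := hκ.prodMap hκ
  have hint : ∀ g : E × E → ℝ, Integrable (g ∘ Prod.map κ κ) (μ.prod μ) := fun g =>
    Integrable.of_finite.comp_measurable hκκ
  refine hδ.of_comp hκ hA (measurable_of_finite f) (hint f) (measurable_of_finite h) (hint h)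
    fun θ τ hθ hτ => ?_
  set D : Ω × Ω → ℝ := A - h ∘ Prod.map κ κ
  have hD : Integrable D (μ.prod μ) := hA.sub (hint h)
  have hcell : ∀ p : E × E, IsUnitFunction fun z => ({p} : Set (E × E)).indicator (1 : E × E → ℝ)
      (Prod.map κ κ z) := fun p => (IsUnitFunction.indicator_one (.singleton p)).comp hκκ
  have hsplit : ∀ z, D z * ((θ ∘ κ) z.1 * (τ ∘ κ) z.2) = ∑ p : E × E, θ p.1 * τ p.2 *
      (D z * ({p} : Set (E × E)).indicator 1 (Prod.map κ κ z)) := fun z => by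
    simp [indicator_apply, mul_comm]
  simp only [hsplit]
  rw [integral_finsetSum _ fun p _ => ((hcell p).integrable_mul hD).const_mul _]
  refine (Finset.abs_sum_le_sum_abs _ _).trans (Finset.sum_le_sum fun p _ => ?_)
  rw [integral_const_mul, mul_comm]
  exact (hθ.tensor hτ).abs_mul_le (f := fun _ => _) p

end Averaging

section LimitKernel

open Topology BoundedContinuousFunction

variable {ι : Type*} {𝒰 : Ultrafilter ι}

section Density

variable {α : ι → Type*} [∀ i, MeasurableSpace (α i)] {ρ : ∀ i, Measure (α i)}
  [∀ i, IsProbabilityMeasure (ρ i)] {Z : Type*} [TopologicalSpace Z] [CompactSpace Z] [T2Space Z]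
  [MeasurableSpace Z] [BorelSpace Z] {q : ∀ i, α i → Z} {A : ∀ i, α i → ℝ}

lemma exists_finiteMeasure_tendsto_integral_mul (hq : ∀ i, Measurable (q i))
    (hA : ∀ i, IsUnitFunction (A i)) :
    ∃ ν : FiniteMeasure Z, ∀ g : Z →ᵇ ℝ,
      Tendsto (fun i => ∫ x, A i x * g (q i x) ∂ρ i) 𝒰 (𝓝 (∫ z, g z ∂ν)) := by
  have hle : ∀ i, (ρ i).withDensity (fun x => ENNReal.ofReal (A i x)) ≤ ρ i := fun i =>
    (withDensity_mono (ae_of_all _ (hA i).ofReal_le_one)).trans_eq withDensity_one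
  have hfin : ∀ i, IsFiniteMeasure ((ρ i).withDensity fun x => ENNReal.ofReal (A i x)) := fun i =>
    isFiniteMeasure_of_le _ (hle i)
  let lam : ι → FiniteMeasure Z := fun i =>
    ⟨((ρ i).withDensity fun x => ENNReal.ofReal (A i x)).map (q i), inferInstance⟩
  have hmass : ∀ i, (lam i).mass ≤ 1 := fun i => by
    rw [← ENNReal.coe_le_coe, FiniteMeasure.ennreal_mass, FiniteMeasure.toMeasure_mk,
      Measure.map_apply (hq i) .univ]
    exact (hle i _).trans prob_le_one
  have hcompact := isCompact_setOfPred_finiteMeasure_le_of_compactSpace Z 1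
  obtain ⟨ν, -, hν⟩ := hcompact.ultrafilter_le_nhds (𝒰.map lam)
    (tendsto_principal.2 (Eventually.of_forall hmass))
  refine ⟨ν, fun g => ?_⟩
  refine (FiniteMeasure.tendsto_iff_forall_integral_tendsto.1 hν g).congr fun i => ?_
  rw [FiniteMeasure.toMeasure_mk, integral_map (hq i).aemeasurable
    g.continuous.measurable.aestronglyMeasurable, (hA i).integral_withDensity]

-- The limits of the laws weighted by `A` and by `1 - A` add up to `σ`, so the former has a density
-- in `σ` with values in `[0, 1]`.
lemma exists_tendsto_integral_mul [HasOuterApproxClosed Z] (hq : ∀ i, Measurable (q i))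
    (hA : ∀ i, IsUnitFunction (A i)) {σ : Measure Z} [IsFiniteMeasure σ]
    (hσ : ∀ g : Z →ᵇ ℝ, Tendsto (fun i => ∫ x, g (q i x) ∂ρ i) 𝒰 (𝓝 (∫ z, g z ∂σ))) :
    ∃ W : Z → ℝ, IsUnitFunction W ∧ ∀ g : Z →ᵇ ℝ,
      Tendsto (fun i => ∫ x, A i x * g (q i x) ∂ρ i) 𝒰 (𝓝 (∫ z, W z * g z ∂σ)) := by
  obtain ⟨ν, hν⟩ := exists_finiteMeasure_tendsto_integral_mul (ρ := ρ) (𝒰 := 𝒰) hq hA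
  obtain ⟨ν', hν'⟩ :=
    exists_finiteMeasure_tendsto_integral_mul (ρ := ρ) (𝒰 := 𝒰) hq fun i => (hA i).one_sub
  have hsum : (ν + ν' : Measure Z) = σ := by
    refine ext_of_forall_integral_eq_of_IsFiniteMeasure fun g => ?_
    rw [integral_add_measure (g.integrable _) (g.integrable _)]
    refine tendsto_nhds_unique ((hν g).add (hν' g)) ((hσ g).congr fun i => ?_)
    have hg : Integrable (fun x => g (q i x)) (ρ i) :=
      .of_bound (g.continuous.measurable.comp (hq i)).aestronglyMeasurable ‖g‖
        (ae_of_all _ fun x => g.norm_coe_le_norm _)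
    rw [← integral_add]
    · simp only [← add_mul, add_sub_cancel, one_mul]
    · simpa only [mul_comm] using (hA i).integrable_mul hg
    · simpa only [mul_comm] using (hA i).one_sub.integrable_mul hg
  obtain ⟨W, hW, hWν⟩ := exists_withDensity_eq_of_le (Measure.le_add_right le_rfl |>.trans_eq hsum)
  exact ⟨W, hW, fun g => by simpa only [← hWν, hW.integral_withDensity] using hν g⟩

end Density

variable {Ω : ι → Type*} [∀ i, MeasurableSpace (Ω i)] {μ : ∀ i, ProbabilityMeasure (Ω i)}
  {E : Type*} [TopologicalSpace E] [CompactSpace E] [TopologicalSpace.MetrizableSpace E]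
  [MeasurableSpace E] [BorelSpace E] {κ : ∀ i, Ω i → E} {A : ∀ i, Ω i × Ω i → ℝ}
  {σ : ProbabilityMeasure E}

lemma tendsto_integral_comp_prodMap {l : Filter ι} (hκ : ∀ i, Measurable (κ i))
    (hσ : Tendsto (fun i => (μ i).map (hκ i).aemeasurable) l (𝓝 σ)) (g : E × E →ᵇ ℝ) :
    Tendsto (fun i => ∫ z, g (Prod.map (κ i) (κ i) z) ∂(μ i : Measure (Ω i)).prod (μ i))
      l (𝓝 (∫ z, g z ∂(σ : Measure E).prod σ)) := by
  have hprod := (ProbabilityMeasure.continuous_prod.tendsto (σ, σ)).comp (hσ.prodMk_nhds hσ)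
  refine (ProbabilityMeasure.tendsto_iff_forall_integral_tendsto.1 hprod g).congr fun i => ?_
  rw [Function.comp_apply, ProbabilityMeasure.map_prod_map _ _ (hκ i) (hκ i),
    ProbabilityMeasure.toMeasure_map,
    integral_map ((hκ i).prodMap (hκ i)).aemeasurable g.continuous.measurable.aestronglyMeasurable]
  rfl

/-- The coded kernels `(μ i, κ i, A i)` converge weakly along `l` to the kernel `W` on `(E, σ)`: the
laws `κ i ∗ μ i` of the codes converge to `σ`, and the laws of the codes of a random edge, which are
measures on `E × E` of total mass `∫ A i`, converge to the measure with density `W` in `σ × σ`. -/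
structure IsCodedLimit (l : Filter ι) (μ : ∀ i, ProbabilityMeasure (Ω i)) (κ : ∀ i, Ω i → E)
    (A : ∀ i, Ω i × Ω i → ℝ) (σ : ProbabilityMeasure E) (W : E × E → ℝ) : Prop where
  measurable : ∀ i, Measurable (κ i)
  tendsto_map : Tendsto (fun i => (μ i).map (measurable i).aemeasurable) l (𝓝 σ)
  tendsto_integral_mul : ∀ g : E × E →ᵇ ℝ, Tendsto
    (fun i => ∫ z, A i z * g (Prod.map (κ i) (κ i) z) ∂(μ i : Measure (Ω i)).prod (μ i))
    l (𝓝 (∫ z, W z * g z ∂(σ : Measure E).prod σ))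

lemma exists_symm_isCodedLimit (hκ : ∀ i, Measurable (κ i)) (hA : ∀ i, IsUnitFunction (A i))
    (hsymm : ∀ i z, A i z.swap = A i z) :
    ∃ (σ : ProbabilityMeasure E) (W : E × E → ℝ), IsUnitFunction W ∧ (∀ z, W z.swap = W z) ∧
      IsCodedLimit 𝒰 μ κ A σ W := by
  obtain ⟨σ, hσ⟩ : ∃ σ, Tendsto (fun i => (μ i).map (hκ i).aemeasurable) 𝒰 (𝓝 σ) :=
    ⟨_, (𝒰.map fun i => (μ i).map (hκ i).aemeasurable).le_nhds_lim⟩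
  obtain ⟨θ, hθ, hlim⟩ := exists_tendsto_integral_mul (fun i => (hκ i).prodMap (hκ i)) hA
    (tendsto_integral_comp_prodMap hκ hσ)
  have hlim_swap : ∀ g : E × E →ᵇ ℝ, Tendsto
      (fun i => ∫ z, A i z * g (Prod.map (κ i) (κ i) z) ∂(μ i : Measure (Ω i)).prod (μ i))
      𝒰 (𝓝 (∫ z, θ z.swap * g z ∂(σ : Measure E).prod σ)) := fun g => by
    have h := hlim (g.compContinuous ⟨Prod.swap, continuous_swap⟩)
    rw [← integral_prod_swap] at h
    refine h.congr fun i => ?_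
    rw [← integral_prod_swap]
    simp only [hsymm, compContinuous_apply, ContinuousMap.coe_mk]
    rfl
  refine ⟨σ, fun z => (θ z + θ z.swap) / 2, ⟨?_, fun z => ?_⟩, fun z => ?_, hκ, hσ, fun g => ?_⟩
  · exact (hθ.measurable.add (hθ.measurable.comp measurable_swap)).div_const 2
  · constructor <;> linarith [hθ.nonneg z, hθ.nonneg z.swap, hθ.le_one z, hθ.le_one z.swap]
  · simp only [Prod.swap_swap, add_comm]
  · have heq : ∫ z, θ z.swap * g z ∂(σ : Measure E).prod σ =
        ∫ z, θ z * g z ∂(σ : Measure E).prod σ := tendsto_nhds_unique (hlim_swap g) (hlim g)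
    have hmean : ∫ z, (θ z + θ z.swap) / 2 * g z ∂(σ : Measure E).prod σ =
        ∫ z, θ z * g z ∂(σ : Measure E).prod σ := by
      have hg := g.integrable ((σ : Measure E).prod σ)
      simp only [div_mul_eq_mul_div, add_mul]
      rw [integral_div, integral_add, heq, add_self_div_two]
      · simpa only [mul_comm] using hθ.integrable_mul hg
      · simpa only [mul_comm, Function.comp_apply] using
          (hθ.comp measurable_swap).integrable_mul hg
    rw [hmean]
    exact hlim g

end LimitKernel

section StepApproximation

open Topology

/-- A code with the given first `k` letters; the remaining ones are filled up with a fixed value. -/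
def extendPrefix (k : ℕ) (p : Fin k → Bool × Bool) : VertexCode :=
  fun j => if hj : j < k then p ⟨j, hj⟩ else default

lemma tendsto_extendPrefix_codePrefix (x : VertexCode) :
    Tendsto (fun k => extendPrefix k (codePrefix k x)) atTop (𝓝 x) :=
  tendsto_pi_nhds.2 fun j => tendsto_const_nhds.congr' <| by
    filter_upwards [eventually_gt_atTop j] with k hk
    simp only [extendPrefix, codePrefix, dif_pos hk]

lemma IsUnitFunction.exists_continuous_integral_abs_sub_le {α : Type*} [TopologicalSpace α]
    [TopologicalSpace.PseudoMetrizableSpace α] [MeasurableSpace α] [BorelSpace α] {ρ : Measure α}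
    [IsFiniteMeasure ρ] {W : α → ℝ} (hW : IsUnitFunction W) {ε : ℝ} (hε : 0 < ε) :
    ∃ g : α → ℝ, Continuous g ∧ IsUnitFunction g ∧ ∫ x, |W x - g x| ∂ρ ≤ ε := by
  obtain ⟨g, hg, hgi⟩ := (hW.integrable ρ).exists_boundedContinuous_integral_sub_le hε
  have hcont : Continuous fun x => (projIcc (0 : ℝ) 1 zero_le_one (g x) : ℝ) := by fun_prop
  have hunit : IsUnitFunction fun x => (projIcc (0 : ℝ) 1 zero_le_one (g x) : ℝ) :=
    ⟨hcont.measurable, fun x => Subtype.coe_prop _⟩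
  refine ⟨_, hcont, hunit, (integral_mono ?_ ?_ fun x => ?_).trans hg⟩
  · exact ((hW.integrable ρ).sub (hunit.integrable ρ)).abs
  · exact ((hW.integrable ρ).sub hgi).norm
  · have h := abs_projIcc_sub_projIcc (a := (0 : ℝ)) (b := 1) (c := W x) (d := g x) zero_le_one
    rwa [projIcc_of_mem _ (hW.2 x)] at h

lemma IsUnitFunction.eventually_exists_integral_abs_sub_codePrefix_le
    {ρ : Measure (VertexCode × VertexCode)} [IsFiniteMeasure ρ] {W : VertexCode × VertexCode → ℝ}
    (hW : IsUnitFunction W) {ε : ℝ} (hε : 0 < ε) :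
    ∀ᶠ k in atTop, ∃ h : (Fin k → Bool × Bool) × (Fin k → Bool × Bool) → ℝ, IsUnitFunction h ∧
      ∫ z, |(W - h ∘ Prod.map (codePrefix k) (codePrefix k)) z| ∂ρ ≤ ε := by
  obtain ⟨g, hgc, hg, hWg⟩ := hW.exists_continuous_integral_abs_sub_le (ρ := ρ) (half_pos hε)
  let h : ∀ k, (Fin k → Bool × Bool) × (Fin k → Bool × Bool) → ℝ := fun k =>
    g ∘ Prod.map (extendPrefix k) (extendPrefix k)
  have hh : ∀ k, IsUnitFunction (h k) := fun k => hg.comp (measurable_of_finite _)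
  have hstep : ∀ k, IsUnitFunction (h k ∘ Prod.map (codePrefix k) (codePrefix k)) := fun k =>
    (hh k).comp ((continuous_codePrefix k).prodMap (continuous_codePrefix k)).measurable
  have hlim : Tendsto (fun k => ∫ z, |(W - h k ∘ Prod.map (codePrefix k) (codePrefix k)) z| ∂ρ)
      atTop (𝓝 (∫ z, |W z - g z| ∂ρ)) := by
    refine tendsto_integral_of_dominated_convergence 1
      (fun k => (hW.measurable.sub (hstep k).measurable).abs.aestronglyMeasurable)
      (integrable_const 1) (fun k => ae_of_all _ fun z => ?_) (ae_of_all _ fun z => ?_)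
    · rw [Real.norm_eq_abs, abs_abs]
      exact abs_sub_le_of_nonneg_of_le (hW.nonneg z) (hW.le_one z) ((hstep k).nonneg z)
        ((hstep k).le_one z)
    · exact (((hgc.tendsto z).comp ((tendsto_extendPrefix_codePrefix z.1).prodMk_nhds
        (tendsto_extendPrefix_codePrefix z.2))).const_sub (W z)).abs
  filter_upwards [hlim.eventually_lt_const (hWg.trans_lt (half_lt_self hε))] with k hk
  exact ⟨h k, hh k, hk.le⟩

end StepApproximation

section Convergence

open Topology

lemma sum_abs_integral_mul_indicator_le {α P : Type*} [MeasurableSpace α] {ρ : Measure α}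
    [Fintype P] [MeasurableSpace P] [MeasurableSingletonClass P] {D : α → ℝ} (hD : Integrable D ρ)
    {q : α → P} (hq : Measurable q) :
    ∑ p, |∫ x, D x * ({p} : Set P).indicator 1 (q x) ∂ρ| ≤ ∫ x, |D x| ∂ρ := by
  classical
  have hcell : ∀ p, IsUnitFunction fun x => ({p} : Set P).indicator (1 : P → ℝ) (q x) := fun p =>
    (IsUnitFunction.indicator_one (.singleton p)).comp hq
  calc ∑ p, |∫ x, D x * ({p} : Set P).indicator 1 (q x) ∂ρ|
      ≤ ∑ p, ∫ x, |D x| * ({p} : Set P).indicator 1 (q x) ∂ρ := by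
        refine Finset.sum_le_sum fun p _ => abs_integral_le_integral_abs.trans_eq ?_
        simp only [abs_mul, abs_of_nonneg ((hcell p).nonneg _)]
    _ = ∫ x, |D x| ∂ρ := by
        rw [← integral_finsetSum _ fun p _ => (hcell p).integrable_mul hD.abs]
        simp [indicator_apply]

lemma integral_sub_comp_mul {α P : Type*} [MeasurableSpace α] {ρ : Measure α} [IsFiniteMeasure ρ]
    [Finite P] [MeasurableSpace P] [MeasurableSingletonClass P] {B : α → ℝ} (hB : Integrable B ρ)
    {q : α → P} (hq : Measurable q) (h φ : P → ℝ) :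
    ∫ x, (B - h ∘ q) x * φ (q x) ∂ρ = ∫ x, B x * φ (q x) ∂ρ - ∫ x, (h * φ) (q x) ∂ρ := by
  obtain ⟨C, hC⟩ := (finite_range fun p => ‖φ p‖).bddAbove
  have hφ : Measurable fun x => φ (q x) := (measurable_of_finite φ).comp hq
  rw [← integral_sub]
  · simp only [Pi.sub_apply, Function.comp_apply, Pi.mul_apply, sub_mul]
  · exact hB.mul_bdd hφ.aestronglyMeasurable (ae_of_all _ fun x => hC (mem_range_self (q x)))
  · exact Integrable.of_finite.comp_measurable hq

variable {ι : Type*} {l : Filter ι} {Ω : ι → Type*} [∀ i, MeasurableSpace (Ω i)]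
  {μ : ∀ i, ProbabilityMeasure (Ω i)} {A : ∀ i, Ω i × Ω i → ℝ}

section Compact

variable {E : Type*} [TopologicalSpace E] [CompactSpace E] [TopologicalSpace.MetrizableSpace E]
  [MeasurableSpace E] [BorelSpace E] {κ : ∀ i, Ω i → E} {σ : ProbabilityMeasure E}

lemma tendsto_edgeDensity_of_continuous {V : Type*} [Fintype V] (S : Finset (V × V))
    {ν : ι → ProbabilityMeasure E} (hν : Tendsto ν l (𝓝 σ)) {g : E × E → ℝ} (hg : Continuous g) :
    Tendsto (fun i => edgeDensity S (ν i : Measure E) g) l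
      (𝓝 (edgeDensity S (σ : Measure E) g)) := by
  have hpi := ((ProbabilityMeasure.continuous_pi (ι := V)).tendsto fun _ => σ).comp
    (tendsto_pi_nhds.2 fun _ => hν)
  exact ProbabilityMeasure.tendsto_iff_forall_integral_tendsto.1 hpi
    (.mkOfCompact ⟨fun x : V → E => ∏ e ∈ S, g (x e.1, x e.2), by fun_prop⟩)

lemma IsCodedLimit.tendsto_edgeDensity_comp {W : E × E → ℝ} (hlim : IsCodedLimit l μ κ A σ W)
    {V : Type*} [Fintype V] (S : Finset (V × V)) {g : E × E → ℝ} (hg : Continuous g) :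
    Tendsto (fun i => edgeDensity S (μ i : Measure (Ω i)) (g ∘ Prod.map (κ i) (κ i))) l
      (𝓝 (edgeDensity S (σ : Measure E) g)) :=
  (tendsto_edgeDensity_of_continuous S hlim.tendsto_map hg).congr fun i => by
    rw [ProbabilityMeasure.toMeasure_map, edgeDensity_map S _ (hlim.measurable i) hg.measurable]

variable {P : Type*} [Finite P] [TopologicalSpace P] [DiscreteTopology P]
  [MeasurableSpace P] [BorelSpace P] {π : E → P} {W : E × E → ℝ} {h : P × P → ℝ}

namespace IsCodedLimit

lemma tendsto_integral_sub_comp_mul (hlim : IsCodedLimit l μ κ A σ W)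
    (hA : ∀ i, IsUnitFunction (A i)) (hW : IsUnitFunction W) (hπ : Continuous π) (φ : P × P → ℝ) :
    Tendsto (fun i => ∫ z, (A i - h ∘ Prod.map (π ∘ κ i) (π ∘ κ i)) z *
        φ (Prod.map (π ∘ κ i) (π ∘ κ i) z) ∂(μ i : Measure (Ω i)).prod (μ i))
      l (𝓝 (∫ z, (W - h ∘ Prod.map π π) z * φ (Prod.map π π z) ∂(σ : Measure E).prod σ)) := by
  have hππ : Continuous (Prod.map π π) := hπ.prodMap hπ
  let cell : (P × P → ℝ) → BoundedContinuousFunction (E × E) ℝ := fun ψ =>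
    .mkOfCompact ⟨ψ ∘ Prod.map π π, continuous_of_discreteTopology.comp hππ⟩
  rw [integral_sub_comp_mul (hW.integrable _) hππ.measurable]
  refine ((hlim.tendsto_integral_mul (cell φ)).sub (tendsto_integral_comp_prodMap hlim.measurable
    hlim.tendsto_map (cell (h * φ)))).congr fun i => ?_
  have hπκ := hπ.measurable.comp (hlim.measurable i)
  rw [integral_sub_comp_mul ((hA i).integrable _) (hπκ.prodMap hπκ)]
  rfl

-- The cut norm is controlled by the integrals over the finitely many cells. These converge, so the
-- `L¹` bound on the limit kernel passes to the kernels `A i`.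
lemma eventually_cutNormLE (hlim : IsCodedLimit l μ κ A σ W) (hA : ∀ i, IsUnitFunction (A i))
    (hW : IsUnitFunction W) (hπ : Continuous π) {δ : ℝ} (hδ : 0 < δ)
    (hcut : ∀ i, ∃ f : P × P → ℝ,
      CutNormLE (μ i : Measure (Ω i)) (A i - f ∘ Prod.map (π ∘ κ i) (π ∘ κ i)) δ)
    (hh : ∫ z, |(W - h ∘ Prod.map π π) z| ∂(σ : Measure E).prod σ ≤ δ) :
    ∀ᶠ i in l,
      CutNormLE (μ i : Measure (Ω i)) (A i - h ∘ Prod.map (π ∘ κ i) (π ∘ κ i)) (4 * δ) := by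
  cases nonempty_fintype P
  have hππ : Measurable (Prod.map π π) := (hπ.prodMap hπ).measurable
  have hstep : Integrable (h ∘ Prod.map π π) ((σ : Measure E).prod σ) :=
    Integrable.of_finite.comp_measurable hππ
  have hsum := tendsto_finsetSum Finset.univ fun p _ =>
    (hlim.tendsto_integral_sub_comp_mul (h := h) hA hW hπ (({p} : Set (P × P)).indicator 1)).abs
  have hlt := (sum_abs_integral_mul_indicator_le ((hW.integrable _).sub hstep) hππ).trans_lt
    (hh.trans_lt (lt_two_mul_self hδ))
  filter_upwards [hsum.eventually_lt_const hlt] with i hi a b ha hb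
  obtain ⟨f, hf⟩ := hcut i
  have hcut' := hf.of_comp_of_fintype (h := h) (hπ.measurable.comp (hlim.measurable i))
    ((hA i).integrable _) a b ha hb
  linarith

end IsCodedLimit

end Compact

lemma IsCodedLimit.tendsto_edgeDensity {κ : ∀ i, Ω i → VertexCode}
    {σ : ProbabilityMeasure VertexCode} {W : VertexCode × VertexCode → ℝ}
    (hlim : IsCodedLimit l μ κ A σ W) (hA : ∀ i, IsUnitFunction (A i)) (hW : IsUnitFunction W)
    (hcut : ∀ i, ∀ k : ℕ, k ≠ 0 → ∃ f : (Fin k → Bool × Bool) × (Fin k → Bool × Bool) → ℝ,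
      CutNormLE (μ i : Measure (Ω i))
        (A i - f ∘ Prod.map (codePrefix k ∘ κ i) (codePrefix k ∘ κ i)) (2 / √k))
    {V : Type*} [Fintype V] [LinearOrder V] {S : Finset (V × V)} (hS : ∀ e ∈ S, e.1 < e.2) :
    Tendsto (fun i => edgeDensity S (μ i : Measure (Ω i)) (A i)) l
      (𝓝 (edgeDensity S (σ : Measure VertexCode) W)) := by
  refine Metric.tendsto_nhds.2 fun ε hε => ?_
  let δ : ℝ := ε / (5 * S.card + 1)
  have hδ : 0 < δ := by positivity
  have hδε : (5 * S.card + 1) * δ = ε := mul_div_cancel₀ ε (by positivity)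
  have hsqrt : ∀ᶠ k : ℕ in atTop, 2 / √(k : ℝ) ≤ δ :=
    (tendsto_const_nhds.div_atTop (Real.tendsto_sqrt_atTop.comp
      tendsto_natCast_atTop_atTop)).eventually_le_const hδ
  obtain ⟨k, ⟨⟨h, hh, hWh⟩, hkδ⟩, hk⟩ :=
    ((hW.eventually_exists_integral_abs_sub_codePrefix_le (ρ := (σ : Measure VertexCode).prod σ)
      hδ).and hsqrt).and (eventually_ne_atTop 0) |>.exists
  have hprefix := continuous_codePrefix k
  have hstep := hh.comp (hprefix.prodMap hprefix).measurable
  have hWstep := (CutNormLE.of_integral_abs ((hW.integrable _).sub (hstep.integrable _))).mono hWh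
  have hcut' := hlim.eventually_cutNormLE hA hW hprefix hδ
    (fun i => (hcut i k hk).imp fun f hf => hf.mono hkδ) hWh
  have hstep_lim := hlim.tendsto_edgeDensity_comp S
    ((continuous_of_discreteTopology (f := h)).comp (hprefix.prodMap hprefix))
  filter_upwards [hcut', Metric.tendsto_nhds.1 hstep_lim δ hδ] with i hi hclose
  have hπκ := hprefix.measurable.comp (hlim.measurable i)
  have h₁ := abs_edgeDensity_sub_le (hA i) (hh.comp (hπκ.prodMap hπκ)) hi hS
  have h₂ := abs_edgeDensity_sub_le hW hstep hWstep hS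
  have hε_eq : 5 * (S.card * δ) + δ = ε := by rw [← hδε]; ring
  rw [Real.dist_eq] at hclose ⊢
  rw [Function.comp_assoc, Prod.map_comp_map] at hclose
  obtain ⟨hlo, hhi⟩ := abs_lt.1 hclose
  obtain ⟨hlo₁, hhi₁⟩ := abs_le.1 h₁
  obtain ⟨hlo₂, hhi₂⟩ := abs_le.1 h₂
  exact abs_lt.2 ⟨by linarith, by linarith⟩

end Convergence

section Transfer

open Topology

lemma map_projIcc_μ01 :
    μ01.map (projIcc (0 : ℝ) 1 zero_le_one) = (volume : Measure unitInterval) := by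
  rw [μ01, ← (measurePreserving_subtype_coe measurableSet_Icc).map_eq,
    Measure.map_map continuous_projIcc.measurable measurable_subtype_coe]
  have : projIcc (0 : ℝ) 1 zero_le_one ∘ Subtype.val = id := funext fun x => projIcc_val _ x
  rw [this, Measure.map_id]
  rfl

lemma exists_isGraphon_homDensity_eq {Y : Type*} [MeasurableSpace Y] [StandardBorelSpace Y]
    (σ : Measure Y) [IsProbabilityMeasure σ] {W : Y × Y → ℝ} (hW : IsUnitFunction W)
    (hsymm : ∀ z, W z.swap = W z) :
    ∃ U : ℝ → ℝ → ℝ, IsGraphon U ∧ ∀ (m : ℕ) (F : SimpleGraph (Fin m)),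
      homDensity F U = edgeDensity (orientedEdges F) σ W := by
  have := nonempty_of_isProbabilityMeasure σ
  obtain ⟨φ, hφ, rfl⟩ := σ.exists_measurable_map_eq
  have hproj : Measurable (projIcc (0 : ℝ) 1 zero_le_one) := continuous_projIcc.measurable
  have hφproj := hφ.comp hproj
  refine ⟨fun x y => W (φ (projIcc 0 1 zero_le_one x), φ (projIcc 0 1 zero_le_one y)),
    ⟨hW.measurable.comp (hφproj.prodMap hφproj), fun x y => (hsymm _).symm, fun x y => hW.2 _⟩,
    fun m F => ?_⟩
  have : IsProbabilityMeasure μ01 := ⟨by simp⟩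
  rw [← map_projIcc_μ01, Measure.map_map hφ hproj, edgeDensity_map _ _ hφproj hW.measurable]
  exact homDensity_eq_edgeDensity F _

lemma exists_isGraphon_tendsto_edgeDensity {ι : Type*} {𝒰 : Ultrafilter ι} {Ω : ι → Type*}
    [∀ i, MeasurableSpace (Ω i)] {μ : ∀ i, ProbabilityMeasure (Ω i)} {A : ∀ i, Ω i × Ω i → ℝ}
    (hA : ∀ i, IsUnitFunction (A i)) (hsymm : ∀ i z, A i z.swap = A i z) :
    ∃ U : ℝ → ℝ → ℝ, IsGraphon U ∧ ∀ (m : ℕ) (F : SimpleGraph (Fin m)),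
      Tendsto (fun i => edgeDensity (orientedEdges F) (μ i : Measure (Ω i)) (A i)) 𝒰
        (𝓝 (homDensity F U)) := by
  choose κ hκ hcut using fun i => exists_code_cutNormLE (μ := (μ i : Measure (Ω i))) (hA i)
  obtain ⟨σ, W, hW, hWsymm, hlim⟩ := exists_symm_isCodedLimit (𝒰 := 𝒰) (μ := μ) hκ hA hsymm
  obtain ⟨U, hU, hUW⟩ := exists_isGraphon_homDensity_eq (σ : Measure VertexCode) hW hWsymm
  refine ⟨U, hU, fun m F => ?_⟩
  rw [hUW]
  exact hlim.tendsto_edgeDensity hA hW hcut fun e he => (mem_orientedEdges.1 he).1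

end Transfer

lemma limit_graphon_exists_general {ι : Type*} {l : Filter ι} (N : ι → ℕ)
    (G : ∀ i, SimpleGraph (Fin (N i))) (hN : ∃ᶠ i in l, N i ≠ 0)
    (hconv : ∀ (m : ℕ) (F : SimpleGraph (Fin m)), ∃ L : ℝ,
      Tendsto (fun i => homDensityFin F (G i)) l (nhds L)) :
    ∃ W : ℝ → ℝ → ℝ, IsGraphon W ∧ ∀ (m : ℕ) (F : SimpleGraph (Fin m)),
      Tendsto (fun i => homDensityFin F (G i)) l (nhds (homDensity F W)) := by
  have : NeBot (comap ((↑) : {i // N i ≠ 0} → ι) l) := comap_neBot_iff_frequently.2 <|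
    hN.mono fun i hi => ⟨⟨i, hi⟩, rfl⟩
  have hle := Ultrafilter.of_le (comap ((↑) : {i // N i ≠ 0} → ι) l)
  have : ∀ i : {i // N i ≠ 0}, NeZero (N i) := fun i => ⟨i.2⟩
  let μ (i : {i // N i ≠ 0}) : ProbabilityMeasure (Fin (N i)) :=
    ⟨ProbabilityTheory.uniformOn univ, inferInstance⟩
  obtain ⟨W, hW, hlim⟩ := exists_isGraphon_tendsto_edgeDensity (μ := μ)
    (fun i => isUnitFunction_adjKernel (G i)) fun i => adjKernel_swap (G i)
  refine ⟨W, hW, fun m F => ?_⟩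
  obtain ⟨L, hL⟩ := hconv m F
  have hL' := (hL.comp tendsto_comap).mono_left hle
  have hWF := (hlim m F).congr fun i => (homDensityFin_eq_edgeDensity F (G i)).symm
  rwa [← tendsto_nhds_unique hL' hWF]

/-- Existence of the limit graphon: if all homomorphism densities of a graph sequence with
`|V(G_n)| → ∞` converge, then there is a graphon `W` with `t(F,G_n) → t(F,W)` for all `F`. -/
theorem limit_graphon_exists (N : ℕ → ℕ) (G : ∀ i, SimpleGraph (Fin (N i)))
    (hN : Filter.Tendsto N Filter.atTop Filter.atTop)
    (hconv : ∀ (m : ℕ) (F : SimpleGraph (Fin m)), ∃ L : ℝ,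
      Filter.Tendsto (fun i => homDensityFin F (G i)) Filter.atTop (nhds L)) :
    ∃ W : ℝ → ℝ → ℝ, IsGraphon W ∧ ∀ (m : ℕ) (F : SimpleGraph (Fin m)),
      Filter.Tendsto (fun i => homDensityFin F (G i)) Filter.atTop (nhds (homDensity F W)) :=
  limit_graphon_exists_general N G (hN.eventually_ne_atTop 0).frequently hconv
end

section
/- For a sequence (G_n) of finite simple graphs with |V(G_n)| → ∞ and a graphon W, one has t(F,G_n) → t(F,W) for every finite simple graph F if and only if δ_□(W_{G_n}, W) → 0. -/
open MeasureTheory Set Filter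

/-!
For a fixed graph `F`, the counting lemma bounds `|t(F,U) - t(F,W)|` by `|E(F)| δ_□(U,W)`, so
convergence in cut distance implies convergence of all homomorphism densities.

Conversely, let `G(k,W)` be the random graph on `k` vertices sampled from `W`. Its distribution is
a finite list of polynomials in homomorphism densities, so if the densities of `U_i` converge to
those of `W`, the distributions of `G(k,U_i)` converge to that of `G(k,W)` for each `k`. Since
`δ_□(U,W) ≤ δ_□(U,H) + δ_□(H,W)` for every `H`, averaging over a common sample `H` reduces the
claim to the sampling lemma: for large `k`, uniformly in `W`, the expectation of `δ_□(G(k,W), W)`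
is small.

For the sampling lemma, only an expectation is needed, and only for step functions, which are
dense. A weak regularity partition into boundedly many classes makes `W` close to a block kernel,
with the error measured by the density of the 4-cycle, which bounds the cut norm. This density is
an average over four vertices, so it is nearly preserved by sampling in expectation; the
randomness of the edges contributes `O(1/k)` to it. Finally, two block kernels with the same
matrix are at cut distance at most a multiple of the difference of their cumulative class sizes,
which concentrate under sampling.
-/

open scoped BigOperators

/-! ### Cut norm and cut distance -/

instance isProbabilityMeasure_μ01 : IsProbabilityMeasure μ01 := ⟨by simp⟩

/-- A bounded measurable kernel `U : ℝ² → ℝ`: the class of functions, closed under differences, on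
which the cut norm is computed. -/
def IsBoundedKernel (U : ℝ → ℝ → ℝ) : Prop :=
  Measurable (Function.uncurry U) ∧ ∃ C, ∀ x y, |U x y| ≤ C

namespace IsBoundedKernel

variable {U V : ℝ → ℝ → ℝ}

theorem sub (hU : IsBoundedKernel U) (hV : IsBoundedKernel V) :
    IsBoundedKernel fun x y => U x y - V x y := by
  obtain ⟨hUm, C, hC⟩ := hU
  obtain ⟨hVm, D, hD⟩ := hV
  exact ⟨hUm.sub hVm, C + D, fun x y => (abs_sub _ _).trans (add_le_add (hC x y) (hD x y))⟩

theorem measurable_apply {α : Type*} [MeasurableSpace α] (hU : IsBoundedKernel U) {f g : α → ℝ}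
    (hf : Measurable f) (hg : Measurable g) : Measurable fun a => U (f a) (g a) :=
  Measurable.comp (g := Function.uncurry U) (f := fun a => (f a, g a)) hU.1 (hf.prodMk hg)

theorem comp (hU : IsBoundedKernel U) {φ : ℝ → ℝ} (hφ : Measurable φ) :
    IsBoundedKernel fun x y => U (φ x) (φ y) :=
  ⟨hU.measurable_apply (hφ.comp measurable_fst) (hφ.comp measurable_snd),
    hU.2.imp fun _ hC _ _ => hC _ _⟩

theorem measurable_right (hU : IsBoundedKernel U) (x : ℝ) : Measurable (U x) :=
  hU.1.comp measurable_prodMk_left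

theorem measurable_integral (hU : IsBoundedKernel U) {ν : Measure ℝ} [SFinite ν] :
    Measurable fun x => ∫ y, U x y ∂ν :=
  hU.1.stronglyMeasurable.integral_prod_right'.measurable

variable {μ ν : Measure ℝ} [IsFiniteMeasure μ] [IsFiniteMeasure ν]

theorem integrable_uncurry (hU : IsBoundedKernel U) :
    Integrable (Function.uncurry U) (μ.prod ν) := by
  obtain ⟨hUm, C, hC⟩ := hU
  exact .of_bound hUm.aestronglyMeasurable C (.of_forall fun p => hC p.1 p.2)

theorem integrable_right (hU : IsBoundedKernel U) (x : ℝ) : Integrable (U x) μ := by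
  obtain ⟨C, hC⟩ := hU.2
  exact .of_bound (hU.measurable_right x).aestronglyMeasurable C (.of_forall (hC x))

theorem integrable_integral (hU : IsBoundedKernel U) :
    Integrable (fun x => ∫ y, U x y ∂ν) μ :=
  hU.integrable_uncurry.integral_prod_left

end IsBoundedKernel

namespace IsGraphon

variable {W : ℝ → ℝ → ℝ}

theorem abs_le_one (hW : IsGraphon W) (x y : ℝ) : |W x y| ≤ 1 :=
  (abs_of_nonneg (hW.2.2 x y).1).trans_le (hW.2.2 x y).2

theorem isBoundedKernel (hW : IsGraphon W) : IsBoundedKernel W :=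
  ⟨hW.1, 1, hW.abs_le_one⟩

theorem comp (hW : IsGraphon W) {φ : ℝ → ℝ} (hφ : Measurable φ) :
    IsGraphon fun x y => W (φ x) (φ y) :=
  ⟨(hW.isBoundedKernel.comp hφ).1, fun _ _ => hW.2.1 _ _, fun _ _ => hW.2.2 _ _⟩

end IsGraphon

section CutNorm

variable {U V : ℝ → ℝ → ℝ}

theorem cutNorm_eq_sSup (U : ℝ → ℝ → ℝ) :
    cutNorm U = sSup {r : ℝ | ∃ S T : Set ℝ, MeasurableSet S ∧ MeasurableSet T ∧
      r = |∫ x in S, ∫ y in T, U x y ∂μ01 ∂μ01|} := by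
  unfold cutNorm
  congr 1
  ext r
  constructor
  · rintro ⟨S, T, hS, hT, hSI, hTI, rfl⟩
    exact ⟨S, T, hS, hT, by
      rw [Measure.restrict_restrict_of_subset hSI, Measure.restrict_restrict_of_subset hTI]⟩
  · rintro ⟨S, T, hS, hT, rfl⟩
    exact ⟨S ∩ Icc 0 1, T ∩ Icc 0 1, hS.inter measurableSet_Icc, hT.inter measurableSet_Icc,
      inter_subset_right, inter_subset_right, by
        rw [Measure.restrict_restrict hS, Measure.restrict_restrict hT]⟩

theorem cutNorm_nonneg (U : ℝ → ℝ → ℝ) : 0 ≤ cutNorm U := by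
  apply Real.sSup_nonneg
  rintro _ ⟨S, T, -, -, -, -, rfl⟩
  exact abs_nonneg _

theorem cutNorm_le {r : ℝ} (h : ∀ S T : Set ℝ, MeasurableSet S → MeasurableSet T →
    |∫ x in S, ∫ y in T, U x y ∂μ01 ∂μ01| ≤ r) : cutNorm U ≤ r := by
  rw [cutNorm_eq_sSup]
  refine csSup_le ⟨_, ∅, ∅, .empty, .empty, rfl⟩ ?_
  rintro _ ⟨S, T, hS, hT, rfl⟩
  exact h S T hS hT

theorem abs_setIntegral_le_integral_abs (hU : Integrable (Function.uncurry U) (μ01.prod μ01))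
    (S T : Set ℝ) :
    |∫ x in S, ∫ y in T, U x y ∂μ01 ∂μ01| ≤ ∫ p, |U p.1 p.2| ∂μ01.prod μ01 := by
  calc |∫ x in S, ∫ y in T, U x y ∂μ01 ∂μ01|
      = |∫ p in S ×ˢ T, U p.1 p.2 ∂μ01.prod μ01| := by
        rw [setIntegral_prod (fun p => U p.1 p.2) hU.integrableOn]
    _ ≤ ∫ p in S ×ˢ T, |U p.1 p.2| ∂μ01.prod μ01 := abs_integral_le_integral_abs
    _ ≤ ∫ p, |U p.1 p.2| ∂μ01.prod μ01 :=
        setIntegral_le_integral hU.abs (.of_forall fun _ => abs_nonneg _)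

theorem cutNorm_le_integral_abs (hU : Integrable (Function.uncurry U) (μ01.prod μ01)) :
    cutNorm U ≤ ∫ p, |U p.1 p.2| ∂μ01.prod μ01 :=
  cutNorm_le fun S T _ _ => abs_setIntegral_le_integral_abs hU S T

theorem abs_setIntegral_le_cutNorm (hU : IsBoundedKernel U) {S T : Set ℝ} (hS : MeasurableSet S)
    (hT : MeasurableSet T) : |∫ x in S, ∫ y in T, U x y ∂μ01 ∂μ01| ≤ cutNorm U := by
  rw [cutNorm_eq_sSup]
  refine le_csSup ⟨∫ p, |U p.1 p.2| ∂μ01.prod μ01, ?_⟩ ⟨S, T, hS, hT, rfl⟩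
  rintro _ ⟨S, T, -, -, rfl⟩
  exact abs_setIntegral_le_integral_abs hU.integrable_uncurry S T

theorem cutNorm_congr_ae (h : ∀ᵐ x ∂μ01, ∀ᵐ y ∂μ01, U x y = V x y) : cutNorm U = cutNorm V := by
  have integral_eq (S T : Set ℝ) : ∫ x in S, ∫ y in T, U x y ∂μ01 ∂μ01 =
      ∫ x in S, ∫ y in T, V x y ∂μ01 ∂μ01 :=
    integral_congr_ae <| ae_restrict_of_ae <| h.mono fun x hx =>
      integral_congr_ae <| ae_restrict_of_ae hx
  simp only [cutNorm_eq_sSup, integral_eq]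

theorem cutNorm_add_le (hU : IsBoundedKernel U) (hV : IsBoundedKernel V) :
    cutNorm (fun x y => U x y + V x y) ≤ cutNorm U + cutNorm V := by
  refine cutNorm_le fun S T hS hT => ?_
  have integral_eq : ∫ x in S, ∫ y in T, (U x y + V x y) ∂μ01 ∂μ01 =
      (∫ x in S, ∫ y in T, U x y ∂μ01 ∂μ01) + ∫ x in S, ∫ y in T, V x y ∂μ01 ∂μ01 := by
    rw [← integral_add hU.integrable_integral hV.integrable_integral]
    exact integral_congr_ae <| .of_forall fun x =>
      integral_add (hU.integrable_right x) (hV.integrable_right x)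
  rw [integral_eq]
  exact (abs_add_le _ _).trans (add_le_add (abs_setIntegral_le_cutNorm hU hS hT)
    (abs_setIntegral_le_cutNorm hV hS hT))

theorem cutNorm_sub_comm (U V : ℝ → ℝ → ℝ) :
    cutNorm (fun x y => U x y - V x y) = cutNorm fun x y => V x y - U x y := by
  rw [cutNorm_eq_sSup, cutNorm_eq_sSup]
  simp only [← neg_sub (V _ _) (U _ _), integral_neg, abs_neg]

end CutNorm

section CutDist

namespace IsInvMeasurePreserving

variable {φ ψ : ℝ → ℝ}

theorem measurable (hφ : IsInvMeasurePreserving φ) : Measurable φ := hφ.2.1.measurable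

theorem id : IsInvMeasurePreserving fun x => x :=
  ⟨fun _ h => h, .id _, fun x => x, fun _ h => h, .id _, fun _ _ => rfl, fun _ _ => rfl⟩

theorem comp (hφ : IsInvMeasurePreserving φ) (hψ : IsInvMeasurePreserving ψ) :
    IsInvMeasurePreserving fun x => φ (ψ x) := by
  obtain ⟨hφI, hφμ, φ', hφ'I, hφ'μ, hφ'φ, hφφ'⟩ := hφ
  obtain ⟨hψI, hψμ, ψ', hψ'I, hψ'μ, hψ'ψ, hψψ'⟩ := hψ
  refine ⟨hφI.comp hψI, hφμ.comp hψμ, fun x => ψ' (φ' x), hψ'I.comp hφ'I, hψ'μ.comp hφ'μ,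
    fun x hx => ?_, fun x hx => ?_⟩
  · simp only [hφ'φ _ (hψI hx), hψ'ψ x hx]
  · simp only [hψψ' _ (hφ'I hx), hφφ' x hx]

theorem exists_inverse (hφ : IsInvMeasurePreserving φ) : ∃ ψ, IsInvMeasurePreserving ψ ∧
    (∀ x ∈ Icc (0 : ℝ) 1, ψ (φ x) = x) ∧ ∀ x ∈ Icc (0 : ℝ) 1, φ (ψ x) = x := by
  obtain ⟨hφI, hφμ, ψ, hψI, hψμ, hψφ, hφψ⟩ := hφ
  exact ⟨ψ, ⟨hψI, hψμ, φ, hφI, hφμ, hφψ, hψφ⟩, hψφ, hφψ⟩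

theorem exists_setIntegral_comp_eq (hφ : IsInvMeasurePreserving φ) {S : Set ℝ}
    (hS : MeasurableSet S) : ∃ S' : Set ℝ, MeasurableSet S' ∧
      ∀ f : ℝ → ℝ, Measurable f → ∫ x in S, f (φ x) ∂μ01 = ∫ x in S', f x ∂μ01 := by
  obtain ⟨ψ, hψ, hψφ, -⟩ := hφ.exists_inverse
  refine ⟨ψ ⁻¹' S, hψ.measurable hS, fun f hf => ?_⟩
  have preimage_ae : S =ᵐ[μ01] φ ⁻¹' (ψ ⁻¹' S) := by
    filter_upwards [ae_restrict_mem measurableSet_Icc] with x hx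
    exact congrArg S (hψφ x hx).symm
  rw [setIntegral_congr_set preimage_ae]
  conv_rhs => rw [← hφ.2.1.map_eq]
  exact (setIntegral_map (hψ.measurable hS) hf.aestronglyMeasurable hφ.measurable.aemeasurable).symm

end IsInvMeasurePreserving

variable {U V W : ℝ → ℝ → ℝ} {φ ψ : ℝ → ℝ}

theorem cutNorm_comp_le (hU : IsBoundedKernel U) (hφ : IsInvMeasurePreserving φ) :
    cutNorm (fun x y => U (φ x) (φ y)) ≤ cutNorm U := by
  refine cutNorm_le fun S T hS hT => ?_
  obtain ⟨S', hS', integral_S⟩ := hφ.exists_setIntegral_comp_eq hS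
  obtain ⟨T', hT', integral_T⟩ := hφ.exists_setIntegral_comp_eq hT
  simp only [integral_T _ (hU.measurable_right _), integral_S _ hU.measurable_integral]
  exact abs_setIntegral_le_cutNorm hU hS' hT'

theorem cutDist_nonneg (U W : ℝ → ℝ → ℝ) : 0 ≤ cutDist U W := by
  apply Real.sInf_nonneg
  rintro _ ⟨φ, -, rfl⟩
  exact cutNorm_nonneg _

theorem cutDist_le (hφ : IsInvMeasurePreserving φ) :
    cutDist U W ≤ cutNorm fun x y => U x y - W (φ x) (φ y) := by
  refine csInf_le ⟨0, ?_⟩ ⟨φ, hφ, rfl⟩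
  rintro _ ⟨φ, -, rfl⟩
  exact cutNorm_nonneg _

theorem cutDist_le_cutNorm (U W : ℝ → ℝ → ℝ) :
    cutDist U W ≤ cutNorm fun x y => U x y - W x y :=
  cutDist_le .id

theorem exists_cutNorm_lt_of_cutDist_lt {r : ℝ} (h : cutDist U W < r) :
    ∃ φ, IsInvMeasurePreserving φ ∧ cutNorm (fun x y => U x y - W (φ x) (φ y)) < r := by
  obtain ⟨_, ⟨φ, hφ, rfl⟩, hr⟩ := exists_lt_of_csInf_lt (s := {r : ℝ | ∃ φ : ℝ → ℝ,
    IsInvMeasurePreserving φ ∧ r = cutNorm fun x y => U x y - W (φ x) (φ y)}) ⟨_, _, .id, rfl⟩ h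
  exact ⟨φ, hφ, hr⟩

theorem cutDist_le_cutNorm_comp_sub_comp (hU : IsBoundedKernel U) (hV : IsBoundedKernel V)
    (hφ : IsInvMeasurePreserving φ) (hψ : IsInvMeasurePreserving ψ) :
    cutDist U V ≤ cutNorm fun x y => U (φ x) (φ y) - V (ψ x) (ψ y) := by
  obtain ⟨φ', hφ', -, hφφ'⟩ := hφ.exists_inverse
  calc cutDist U V
      ≤ cutNorm fun x y => U x y - V (ψ (φ' x)) (ψ (φ' y)) := cutDist_le (hψ.comp hφ')
    _ = cutNorm fun x y => U (φ (φ' x)) (φ (φ' y)) - V (ψ (φ' x)) (ψ (φ' y)) := by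
        apply cutNorm_congr_ae
        filter_upwards [ae_restrict_mem measurableSet_Icc] with x hx
        filter_upwards [ae_restrict_mem measurableSet_Icc] with y hy
        rw [hφφ' x hx, hφφ' y hy]
    _ ≤ cutNorm fun x y => U (φ x) (φ y) - V (ψ x) (ψ y) :=
        cutNorm_comp_le ((hU.comp hφ.measurable).sub (hV.comp hψ.measurable)) hφ'

theorem cutDist_comm (hU : IsBoundedKernel U) (hV : IsBoundedKernel V) :
    cutDist U V = cutDist V U := by
  have le {U V : ℝ → ℝ → ℝ} (hU : IsBoundedKernel U) (hV : IsBoundedKernel V) :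
      cutDist U V ≤ cutDist V U := by
    refine le_of_forall_gt fun r hr => ?_
    obtain ⟨φ, hφ, hφr⟩ := exists_cutNorm_lt_of_cutDist_lt hr
    rw [cutNorm_sub_comm] at hφr
    exact (cutDist_le_cutNorm_comp_sub_comp hU hV hφ .id).trans_lt hφr
  exact (le hU hV).antisymm (le hV hU)

theorem cutDist_triangle (hU : IsBoundedKernel U) (hV : IsBoundedKernel V)
    (hW : IsBoundedKernel W) : cutDist U W ≤ cutDist U V + cutDist V W := by
  refine le_of_forall_pos_lt_add fun ε hε => ?_
  obtain ⟨φ, hφ, hφε⟩ := exists_cutNorm_lt_of_cutDist_lt (lt_add_of_pos_right (cutDist U V)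
    (half_pos hε))
  obtain ⟨ψ, hψ, hψε⟩ := exists_cutNorm_lt_of_cutDist_lt (lt_add_of_pos_right (cutDist V W)
    (half_pos hε))
  have hVW := hV.sub (hW.comp hψ.measurable)
  calc cutDist U W
      ≤ cutNorm fun x y => U x y - W (ψ (φ x)) (ψ (φ y)) := cutDist_le (hψ.comp hφ)
    _ = cutNorm fun x y => (U x y - V (φ x) (φ y)) +
          (V (φ x) (φ y) - W (ψ (φ x)) (ψ (φ y))) := by simp only [sub_add_sub_cancel]
    _ ≤ (cutNorm fun x y => U x y - V (φ x) (φ y)) +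
          cutNorm fun x y => V (φ x) (φ y) - W (ψ (φ x)) (ψ (φ y)) :=
        cutNorm_add_le (hU.sub (hV.comp hφ.measurable)) (hVW.comp hφ.measurable)
    _ ≤ (cutNorm fun x y => U x y - V (φ x) (φ y)) +
          cutNorm fun x y => V x y - W (ψ x) (ψ y) := by
        gcongr
        exact cutNorm_comp_le hVW hφ
    _ < cutDist U V + cutDist V W + ε := by linarith

theorem cutDist_le_one (hU : IsGraphon U) (hW : IsGraphon W) : cutDist U W ≤ 1 := by
  have hUW := (hU.isBoundedKernel.sub hW.isBoundedKernel).integrable_uncurry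
    (μ := μ01) (ν := μ01)
  calc cutDist U W
      ≤ ∫ p, |U p.1 p.2 - W p.1 p.2| ∂μ01.prod μ01 :=
        (cutDist_le_cutNorm U W).trans (cutNorm_le_integral_abs hUW)
    _ ≤ ∫ _, 1 ∂μ01.prod μ01 := integral_mono hUW.abs (integrable_const _) fun p =>
        abs_sub_le_of_nonneg_of_le (hU.2.2 _ _).1 (hU.2.2 _ _).2 (hW.2.2 _ _).1 (hW.2.2 _ _).2
    _ = 1 := by simp

end CutDist

/-! ### The counting lemma -/

section WeightedCutNorm

theorem exists_abs_integral_mul_le_abs_setIntegral {α : Type*} [MeasurableSpace α] {μ : Measure α}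
    {a h : α → ℝ} (ham : Measurable a) (ha : ∀ x, a x ∈ Icc (0 : ℝ) 1) (hhm : Measurable h)
    (hh : Integrable h μ) :
    ∃ S, MeasurableSet S ∧ |∫ x, a x * h x ∂μ| ≤ |∫ x in S, h x ∂μ| := by
  have integral_mul_le {h : α → ℝ} (hhm : Measurable h) (hh : Integrable h μ) :
      ∫ x, a x * h x ∂μ ≤ ∫ x in {x | 0 < h x}, h x ∂μ := by
    rw [← integral_indicator (measurableSet_lt measurable_const hhm)]
    refine integral_mono (hh.bdd_mul (c := 1) ham.aestronglyMeasurable (.of_forall fun x =>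
      abs_le.2 ⟨by linarith [(ha x).1], (ha x).2⟩))
      (hh.indicator (measurableSet_lt measurable_const hhm)) fun x => ?_
    by_cases hx : 0 < h x
    · rw [indicator_of_mem (show x ∈ {x | 0 < h x} from hx)]
      exact mul_le_of_le_one_left hx.le (ha x).2
    · rw [indicator_of_notMem (show x ∉ {x | 0 < h x} from hx)]
      exact mul_nonpos_of_nonneg_of_nonpos (ha x).1 (not_lt.1 hx)
  rcases le_total 0 (∫ x, a x * h x ∂μ) with h_nonneg | h_nonpos
  · refine ⟨{x | 0 < h x}, measurableSet_lt measurable_const hhm, ?_⟩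
    rw [abs_of_nonneg h_nonneg]
    exact (integral_mul_le hhm hh).trans (le_abs_self _)
  · refine ⟨{x | 0 < -h x}, measurableSet_lt measurable_const hhm.neg, ?_⟩
    have hneg := integral_mul_le hhm.neg hh.neg
    simp only [Pi.neg_apply, mul_neg, integral_neg] at hneg
    rw [abs_of_nonpos h_nonpos]
    exact hneg.trans (neg_le_abs _)

theorem abs_integral_mul_mul_le_cutNorm {U : ℝ → ℝ → ℝ} (hU : IsBoundedKernel U) {a b : ℝ → ℝ}
    (ham : Measurable a) (ha : ∀ x, a x ∈ Icc (0 : ℝ) 1) (hbm : Measurable b)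
    (hb : ∀ y, b y ∈ Icc (0 : ℝ) 1) :
    |∫ x, ∫ y, a x * (b y * U x y) ∂μ01 ∂μ01| ≤ cutNorm U := by
  have hbU : IsBoundedKernel fun x y => b y * U x y := by
    obtain ⟨hUm, C, hC⟩ := hU
    refine ⟨(hbm.comp measurable_snd).mul hUm, C, fun x y => ?_⟩
    rw [abs_mul, abs_of_nonneg (hb y).1]
    exact (mul_le_of_le_one_left (abs_nonneg _) (hb y).2).trans (hC x y)
  have hUswap : IsBoundedKernel fun y x => U x y :=
    ⟨hU.1.comp measurable_swap, hU.2.imp fun _ hC _ _ => hC _ _⟩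
  obtain ⟨S, hS, le_S⟩ := exists_abs_integral_mul_le_abs_setIntegral ham ha
    hbU.measurable_integral (hbU.integrable_integral (μ := μ01) (ν := μ01))
  obtain ⟨T, hT, le_T⟩ := exists_abs_integral_mul_le_abs_setIntegral hbm hb
    hUswap.measurable_integral (hUswap.integrable_integral (μ := μ01) (ν := μ01.restrict S))
  calc |∫ x, ∫ y, a x * (b y * U x y) ∂μ01 ∂μ01|
      = |∫ x, a x * ∫ y, b y * U x y ∂μ01 ∂μ01| := by simp only [integral_const_mul]
    _ ≤ |∫ x in S, ∫ y, b y * U x y ∂μ01 ∂μ01| := le_S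
    _ = |∫ y, b y * ∫ x in S, U x y ∂μ01 ∂μ01| := by
        rw [integral_integral_swap hbU.integrable_uncurry]
        simp only [integral_const_mul]
    _ ≤ |∫ y in T, ∫ x in S, U x y ∂μ01 ∂μ01| := le_T
    _ = |∫ x in S, ∫ y in T, U x y ∂μ01 ∂μ01| := by
        rw [integral_integral_swap hUswap.integrable_uncurry]
    _ ≤ cutNorm U := abs_setIntegral_le_cutNorm hU hS hT

end WeightedCutNorm

section Resampling

variable {ι : Type*} [Fintype ι] [DecidableEq ι] {X : ι → Type*} [∀ i, MeasurableSpace (X i)]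
  (μ : ∀ i, Measure (X i)) [∀ i, IsProbabilityMeasure (μ i)] (i : ι)

theorem measurePreserving_update_s14 :
    MeasurePreserving (fun q : (∀ i, X i) × X i => Function.update q.1 i q.2)
      ((Measure.pi μ).prod (μ i)) (Measure.pi μ) := by
  refine ⟨measurable_update', (Measure.pi_eq fun s hs => ?_).symm⟩
  have preimage_eq : (fun q : (∀ i, X i) × X i => Function.update q.1 i q.2) ⁻¹' univ.pi s =
      univ.pi (Function.update s i univ) ×ˢ s i := by
    ext ⟨x, u⟩
    simp only [mem_preimage, mem_univ_pi, mem_prod]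
    rw [Function.forall_update_iff x fun j y => y ∈ s j,
      Function.forall_update_iff s fun j t => x j ∈ t]
    simp [and_comm]
  rw [Measure.map_apply measurable_update' (.univ_pi hs), preimage_eq, Measure.prod_prod,
    Measure.pi_pi, ← Finset.prod_erase_mul _ _ (Finset.mem_univ i),
    ← Finset.prod_erase_mul _ (fun j => μ j (s j)) (Finset.mem_univ i), Function.update_self,
    measure_univ, mul_one]
  congr 1
  exact Finset.prod_congr rfl fun j hj => by rw [Function.update_of_ne (Finset.ne_of_mem_erase hj)]

variable {μ} in
theorem integral_pi_eq_integral_integral_update {f : (∀ i, X i) → ℝ}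
    (hf : Integrable f (Measure.pi μ)) :
    ∫ x, f x ∂Measure.pi μ = ∫ x, ∫ u, f (Function.update x i u) ∂μ i ∂Measure.pi μ := by
  have hupdate := measurePreserving_update_s14 μ i
  calc ∫ x, f x ∂Measure.pi μ
      = ∫ q, f (Function.update q.1 i q.2) ∂(Measure.pi μ).prod (μ i) := by
        conv_lhs => rw [← hupdate.map_eq]
        exact integral_map hupdate.measurable.aemeasurable
          (hupdate.map_eq.symm ▸ hf.aestronglyMeasurable)
    _ = _ := integral_prod _ (hupdate.integrable_comp_of_integrable hf)

end Resampling

section Counting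

variable {V : Type*}

theorem abs_integral_mul_mul_pair_le_cutNorm [Fintype V] [DecidableEq V] {i j : V} (hij : i ≠ j)
    {U : ℝ → ℝ → ℝ} (hU : IsBoundedKernel U) {a b : (V → ℝ) → ℝ}
    (ham : Measurable a) (ha : ∀ x, a x ∈ Icc (0 : ℝ) 1)
    (haj : ∀ x v, a (Function.update x j v) = a x)
    (hbm : Measurable b) (hb : ∀ x, b x ∈ Icc (0 : ℝ) 1)
    (hbi : ∀ x u, b (Function.update x i u) = b x) :
    |∫ x, a x * (b x * U (x i) (x j)) ∂Measure.pi fun _ => μ01| ≤ cutNorm U := by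
  have hf : Integrable (fun x => a x * (b x * U (x i) (x j))) (Measure.pi fun _ => μ01) := by
    have hUx : Measurable fun x : V → ℝ => U (x i) (x j) :=
      hU.measurable_apply (measurable_pi_apply i) (measurable_pi_apply j)
    obtain ⟨-, C, hC⟩ := hU
    refine .of_bound (ham.mul (hbm.mul hUx)).aestronglyMeasurable C (.of_forall fun x => ?_)
    rw [Real.norm_eq_abs, abs_mul, abs_mul, abs_of_nonneg (ha x).1, abs_of_nonneg (hb x).1]
    exact (mul_le_of_le_one_left (mul_nonneg (hb x).1 (abs_nonneg _)) (ha x).2).trans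
      ((mul_le_of_le_one_left (abs_nonneg _) (hb x).2).trans (hC _ _))
  have hfj : Integrable (fun x => ∫ v, a (Function.update x j v) * (b (Function.update x j v) *
      U (Function.update x j v i) (Function.update x j v j)) ∂μ01) (Measure.pi fun _ => μ01) :=
    Integrable.integral_prod_left
      ((measurePreserving_update_s14 (fun _ => μ01) j).integrable_comp_of_integrable hf)
  rw [integral_pi_eq_integral_integral_update j hf, integral_pi_eq_integral_integral_update i hfj]
  have inner_le (x : V → ℝ) : |∫ u, ∫ v, a (Function.update x i u) *
      (b (Function.update x j v) * U u v) ∂μ01 ∂μ01| ≤ cutNorm U :=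
    abs_integral_mul_mul_le_cutNorm hU (ham.comp (measurable_update x)) (fun _ => ha _)
      (hbm.comp (measurable_update x)) fun _ => hb _
  simp only [haj, Function.update_self, Function.update_of_ne hij]
  simp only [Function.update_comm hij, hbi]
  rw [← Real.norm_eq_abs]
  exact (norm_integral_le_of_norm_le_const (.of_forall inner_le)).trans_eq (by simp)

/-- The homomorphism density of the graph with edge set `R`, where the edge `p` is weighted by its
own kernel `w p`. A constant family gives the density of `R` in a single kernel; varying families
serve to exchange the kernel one edge at a time. -/
noncomputable def decoratedDensity [Fintype V] (R : Finset (V × V)) (w : V × V → ℝ → ℝ → ℝ) : ℝ :=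
  ∫ x, ∏ p ∈ R, w p (x p.1) (x p.2) ∂Measure.pi fun _ => μ01

section Family

variable {w w' : V × V → ℝ → ℝ → ℝ} (hw : ∀ p, IsGraphon (w p))

include hw

theorem measurable_prod_graphon (R : Finset (V × V)) :
    Measurable fun x : V → ℝ => ∏ p ∈ R, w p (x p.1) (x p.2) :=
  Finset.measurable_prod R fun p _ =>
    (hw p).isBoundedKernel.measurable_apply (measurable_pi_apply p.1) (measurable_pi_apply p.2)

theorem prod_graphon_mem_Icc (R : Finset (V × V)) (x : V → ℝ) :
    ∏ p ∈ R, w p (x p.1) (x p.2) ∈ Icc (0 : ℝ) 1 :=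
  ⟨Finset.prod_nonneg fun p _ => ((hw p).2.2 _ _).1,
    Finset.prod_le_one (fun p _ => ((hw p).2.2 _ _).1) fun p _ => ((hw p).2.2 _ _).2⟩

variable [Fintype V]

theorem integrable_prod_graphon (R : Finset (V × V)) :
    Integrable (fun x : V → ℝ => ∏ p ∈ R, w p (x p.1) (x p.2)) (Measure.pi fun _ => μ01) :=
  .of_bound (measurable_prod_graphon hw R).aestronglyMeasurable 1 <| .of_forall fun x => by
    rw [Real.norm_eq_abs, abs_of_nonneg (prod_graphon_mem_Icc hw R x).1]
    exact (prod_graphon_mem_Icc hw R x).2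

variable [LinearOrder V] {R : Finset (V × V)}

theorem abs_integral_prod_mul_le_cutNorm (hR : ∀ p ∈ R, p.1 < p.2) {q : V × V} (hq : q.1 < q.2)
    (hqR : q ∉ R) {U : ℝ → ℝ → ℝ} (hU : IsBoundedKernel U) :
    |∫ x, (∏ p ∈ R, w p (x p.1) (x p.2)) * U (x q.1) (x q.2) ∂Measure.pi fun _ => μ01| ≤
      cutNorm U := by
  have prod_eq (x : V → ℝ) : (∏ p ∈ R, w p (x p.1) (x p.2)) * U (x q.1) (x q.2) =
      (∏ p ∈ R with ¬(p.1 = q.2 ∨ p.2 = q.2), w p (x p.1) (x p.2)) *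
        ((∏ p ∈ R with p.1 = q.2 ∨ p.2 = q.2, w p (x p.1) (x p.2)) * U (x q.1) (x q.2)) := by
    rw [← Finset.prod_filter_mul_prod_filter_not R fun p => p.1 = q.2 ∨ p.2 = q.2]
    ring
  simp only [prod_eq]
  refine abs_integral_mul_mul_pair_le_cutNorm hq.ne hU (measurable_prod_graphon hw _)
    (prod_graphon_mem_Icc hw _) (fun x v => Finset.prod_congr rfl fun p hp => ?_)
    (measurable_prod_graphon hw _) (prod_graphon_mem_Icc hw _)
    (fun x u => Finset.prod_congr rfl fun p hp => ?_)
  · rw [Finset.mem_filter, not_or] at hp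
    rw [Function.update_of_ne hp.2.1, Function.update_of_ne hp.2.2]
  · rw [Finset.mem_filter] at hp
    have hlt := hR p hp.1
    have hpq : p ≠ q := fun h => hqR (h ▸ hp.1)
    have fst_ne : p.1 ≠ q.1 := by
      rintro h
      rcases hp.2 with h' | h'
      · exact hq.ne (h.symm.trans h')
      · exact hpq (Prod.ext h h')
    have snd_ne : p.2 ≠ q.1 := by
      rintro h
      rcases hp.2 with h' | h'
      · exact (hlt.trans (h ▸ hq)).ne h'
      · exact hq.ne (h.symm.trans h')
    rw [Function.update_of_ne fst_ne, Function.update_of_ne snd_ne]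

theorem abs_decoratedDensity_sub_update_le (hR : ∀ p ∈ R, p.1 < p.2) {q : V × V} (hq : q ∈ R)
    {U : ℝ → ℝ → ℝ} (hU : IsGraphon U) :
    |decoratedDensity R w - decoratedDensity R (Function.update w q U)| ≤
      cutNorm fun x y => w q x y - U x y := by
  have hwU (p : V × V) : IsGraphon (Function.update w q U p) := by
    rcases eq_or_ne p q with rfl | hp
    · rwa [Function.update_self]
    · rw [Function.update_of_ne hp]
      exact hw p
  have sub_eq (x : V → ℝ) : (∏ p ∈ R, w p (x p.1) (x p.2)) -
      ∏ p ∈ R, Function.update w q U p (x p.1) (x p.2) =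
        (∏ p ∈ R.erase q, w p (x p.1) (x p.2)) *
          (w q (x q.1) (x q.2) - U (x q.1) (x q.2)) := by
    have erase_eq : ∏ p ∈ R.erase q, Function.update w q U p (x p.1) (x p.2) =
        ∏ p ∈ R.erase q, w p (x p.1) (x p.2) := Finset.prod_congr rfl fun p hp => by
      rw [Function.update_of_ne (Finset.ne_of_mem_erase hp)]
    rw [← Finset.prod_erase_mul _ _ hq, ← Finset.prod_erase_mul _ _ hq, erase_eq,
      Function.update_self, mul_sub]
  rw [decoratedDensity, decoratedDensity,
    ← integral_sub (integrable_prod_graphon hw R) (integrable_prod_graphon hwU R)]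
  simp only [sub_eq]
  exact abs_integral_prod_mul_le_cutNorm hw (fun p hp => hR p (Finset.mem_of_mem_erase hp))
    (hR q hq) (Finset.notMem_erase q R) ((hw q).isBoundedKernel.sub hU.isBoundedKernel)

theorem abs_decoratedDensity_sub_le_sum_cutNorm (hw' : ∀ p, IsGraphon (w' p))
    (hR : ∀ p ∈ R, p.1 < p.2) :
    |decoratedDensity R w - decoratedDensity R w'| ≤
      ∑ p ∈ R, cutNorm fun x y => w p x y - w' p x y := by
  have hybrid {S : Finset (V × V)} (hS : S ⊆ R) :
      |decoratedDensity R w - decoratedDensity R (S.piecewise w' w)| ≤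
        ∑ p ∈ S, cutNorm fun x y => w p x y - w' p x y := by
    induction S using Finset.induction_on with
    | empty => simp
    | insert q S hqS ih =>
      have hpiecewise (p : V × V) : IsGraphon (S.piecewise w' w p) := by
        by_cases hp : p ∈ S <;> simp [hp, hw p, hw' p]
      have step := abs_decoratedDensity_sub_update_le hpiecewise hR (hS (S.mem_insert_self q))
        (hw' q)
      simp only [Finset.piecewise_eq_of_notMem S w' w hqS] at step
      rw [Finset.piecewise_insert, Finset.sum_insert hqS, add_comm]
      exact (abs_sub_le _ _ _).trans
        (add_le_add (ih ((S.subset_insert q).trans hS)) step)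
  refine le_of_eq_of_le ?_ (hybrid subset_rfl)
  congr 2
  exact integral_congr_ae (.of_forall fun x => Finset.prod_congr rfl fun p hp => by
    rw [Finset.piecewise_eq_of_mem R w' w hp])

end Family

theorem decoratedDensity_comp [Fintype V] {W : ℝ → ℝ → ℝ} (hW : IsGraphon W) {φ : ℝ → ℝ}
    (hφ : IsInvMeasurePreserving φ) (R : Finset (V × V)) :
    decoratedDensity R (fun _ x y => W (φ x) (φ y)) = decoratedDensity R fun _ => W := by
  have hpi : MeasurePreserving (fun x : V → ℝ => fun v => φ (x v)) (Measure.pi fun _ => μ01)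
      (Measure.pi fun _ => μ01) := measurePreserving_pi _ _ fun _ => hφ.2.1
  unfold decoratedDensity
  conv_rhs => rw [← hpi.map_eq]
  exact (integral_map hpi.measurable.aemeasurable
    (measurable_prod_graphon (fun _ => hW) R).aestronglyMeasurable).symm

theorem abs_decoratedDensity_sub_le_card_mul_cutDist [Fintype V] [LinearOrder V]
    {R : Finset (V × V)}
    (hR : ∀ p ∈ R, p.1 < p.2) {U W : ℝ → ℝ → ℝ} (hU : IsGraphon U) (hW : IsGraphon W) :
    |decoratedDensity R (fun _ => U) - decoratedDensity R fun _ => W| ≤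
      R.card * cutDist U W := by
  have le_mul : ∀ r > cutDist U W,
      |decoratedDensity R (fun _ => U) - decoratedDensity R fun _ => W| ≤ R.card * r := by
    intro r hr
    obtain ⟨φ, hφ, hφr⟩ := exists_cutNorm_lt_of_cutDist_lt hr
    rw [← decoratedDensity_comp hW hφ]
    refine (abs_decoratedDensity_sub_le_sum_cutNorm (fun _ => hU)
      (fun _ => hW.comp hφ.measurable) hR).trans ?_
    rw [Finset.sum_const, nsmul_eq_mul]
    gcongr
  have tendsto_mul : Tendsto (fun r : ℝ => R.card * r)
      (nhdsWithin (cutDist U W) (Ioi (cutDist U W))) (nhds (R.card * cutDist U W)) :=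
    ((continuous_const.mul continuous_id).tendsto _).mono_left nhdsWithin_le_nhds
  exact ge_of_tendsto tendsto_mul (eventually_mem_nhdsWithin.mono le_mul)

end Counting

/-! ### Step kernels and the density of the 4-cycle -/

section C4Density

variable {ι κ : Type*} [Fintype ι] [Fintype κ]

/-- The homomorphism density of the 4-cycle in the bipartite weighted graph with matrix `D`, that
is, the fourth power of the normalised Schatten 4-norm of `D`. It controls the cut norm from above
and, being a polynomial average, it is stable under sampling. -/
noncomputable def c4Density (D : ι → κ → ℝ) : ℝ :=
  𝔼 p : κ × κ, (𝔼 i, D i p.1 * D i p.2) ^ 2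

theorem c4Density_nonneg (D : ι → κ → ℝ) : 0 ≤ c4Density D :=
  Finset.expect_nonneg fun _ _ => sq_nonneg _

theorem expect_mul_sq_le_of_abs_le_one {s f : ι → ℝ} (hs : ∀ i, |s i| ≤ 1) :
    (𝔼 i, s i * f i) ^ 2 ≤ 𝔼 i, f i ^ 2 := by
  have expect_sq_le : 𝔼 i, s i ^ 2 ≤ 1 := by
    rcases isEmpty_or_nonempty ι with hι | hι
    · simp
    · exact Finset.expect_le Finset.univ_nonempty fun i _ => (sq_le_one_iff_abs_le_one _).2 (hs i)
  exact (Finset.expect_mul_sq_le_sq_mul_sq _ s f).trans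
    (mul_le_of_le_one_left (Finset.expect_nonneg fun i _ => sq_nonneg _) expect_sq_le)

theorem expect_sq_expect_mul (D : ι → κ → ℝ) (t : κ → ℝ) :
    𝔼 i, (𝔼 j, t j * D i j) ^ 2 =
      𝔼 p : κ × κ, t p.1 * t p.2 * 𝔼 i, D i p.1 * D i p.2 := by
  simp only [sq, Finset.expect_mul_expect]
  simp only [Finset.mul_expect]
  rw [Finset.expect_comm, ← Finset.univ_product_univ, Finset.expect_product]
  refine Finset.expect_congr rfl fun j _ => ?_
  rw [Finset.expect_comm]
  exact Finset.expect_congr rfl fun j' _ => Finset.expect_congr rfl fun i _ => by ring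

theorem expect_expect_mul_pow_four_le_c4Density (D : ι → κ → ℝ) {s : ι → ℝ} {t : κ → ℝ}
    (hs : ∀ i, |s i| ≤ 1) (ht : ∀ j, |t j| ≤ 1) :
    (𝔼 i, s i * 𝔼 j, t j * D i j) ^ 4 ≤ c4Density D := by
  have htt (p : κ × κ) : |t p.1 * t p.2| ≤ 1 := by
    rw [abs_mul]
    exact mul_le_one₀ (ht _) (abs_nonneg _) (ht _)
  calc (𝔼 i, s i * 𝔼 j, t j * D i j) ^ 4
      = ((𝔼 i, s i * 𝔼 j, t j * D i j) ^ 2) ^ 2 := by ring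
    _ ≤ (𝔼 i, (𝔼 j, t j * D i j) ^ 2) ^ 2 := by
        gcongr
        exact expect_mul_sq_le_of_abs_le_one hs
    _ = (𝔼 p : κ × κ, t p.1 * t p.2 * 𝔼 i, D i p.1 * D i p.2) ^ 2 := by
        rw [expect_sq_expect_mul]
    _ ≤ c4Density D := expect_mul_sq_le_of_abs_le_one htt

end C4Density

section Step

variable (n : ℕ) [NeZero n]

/-- The index `⌊nx⌋` of the interval `[i/n, (i+1)/n)` containing `x`; only its values on `[0,1)` are
meaningful. -/
noncomputable def stepIndex (x : ℝ) : Fin n := Fin.ofNat n ⌊n * x⌋₊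

theorem measurable_stepIndex : Measurable (stepIndex n) :=
  (measurable_of_countable (Fin.ofNat n)).comp (Nat.measurable_floor.comp (measurable_const_mul _))

variable {n}

theorem val_stepIndex {x : ℝ} (hx : x ∈ Ico (0 : ℝ) 1) : (stepIndex n x : ℕ) = ⌊n * x⌋₊ := by
  have hn : (0 : ℝ) < n := Nat.cast_pos.2 (NeZero.pos n)
  rw [stepIndex, Fin.val_ofNat, Nat.mod_eq_of_lt]
  exact (Nat.floor_lt (mul_nonneg hn.le hx.1)).2 (by nlinarith [hx.2])

theorem mem_Ico_div_iff (i : Fin n) (x : ℝ) :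
    x ∈ Ico ((i : ℝ) / n) (((i : ℝ) + 1) / n) ↔ x ∈ Ico 0 1 ∧ stepIndex n x = i := by
  have hn : (0 : ℝ) < n := Nat.cast_pos.2 (NeZero.pos n)
  have index_eq_iff (hx : x ∈ Ico (0 : ℝ) 1) :
      stepIndex n x = i ↔ x ∈ Ico ((i : ℝ) / n) (((i : ℝ) + 1) / n) := by
    rw [Fin.ext_iff, val_stepIndex hx, Nat.floor_eq_iff (mul_nonneg hn.le hx.1), mem_Ico,
      div_le_iff₀ hn, lt_div_iff₀ hn, mul_comm x]
  refine ⟨fun hx => ?_, fun ⟨hx, hi⟩ => (index_eq_iff hx).1 hi⟩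
  have hx01 : x ∈ Ico (0 : ℝ) 1 := by
    refine ⟨le_trans (by positivity) hx.1, hx.2.trans_le ?_⟩
    rw [div_le_one hn]
    exact_mod_cast i.2
  exact ⟨hx01, (index_eq_iff hx01).2 hx⟩

theorem μ01_eq_restrict_Ico : μ01 = volume.restrict (Ico (0 : ℝ) 1) :=
  Measure.restrict_congr_set Ico_ae_eq_Icc.symm

theorem ae_mem_Ico_zero_one : ∀ᵐ x ∂μ01, x ∈ Ico (0 : ℝ) 1 := by
  rw [μ01_eq_restrict_Ico]
  exact ae_restrict_mem measurableSet_Ico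

theorem μ01_real_preimage_stepIndex (i : Fin n) : μ01.real (stepIndex n ⁻¹' {i}) = 1 / n := by
  have preimage_eq : stepIndex n ⁻¹' {i} ∩ Ico 0 1 = Ico ((i : ℝ) / n) (((i : ℝ) + 1) / n) := by
    ext x
    rw [mem_Ico_div_iff, and_comm]
    rfl
  rw [μ01_eq_restrict_Ico, measureReal_restrict_apply
    (measurable_stepIndex n (measurableSet_singleton i)), preimage_eq, Real.volume_real_Ico_of_le]
  · ring
  · gcongr
    linarith

theorem exists_setIntegral_comp_stepIndex_eq_expect (S : Set ℝ) :
    ∃ s : Fin n → ℝ, (∀ i, |s i| ≤ 1) ∧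
      ∀ f : Fin n → ℝ, ∫ x in S, f (stepIndex n x) ∂μ01 = 𝔼 i, s i * f i := by
  have hn : (0 : ℝ) < n := Nat.cast_pos.2 (NeZero.pos n)
  have real_map (i : Fin n) : ((μ01.restrict S).map (stepIndex n)).real {i} =
      (μ01.restrict S).real (stepIndex n ⁻¹' {i}) :=
    map_measureReal_apply (measurable_stepIndex n) (measurableSet_singleton i)
  refine ⟨fun i => n * ((μ01.restrict S).map (stepIndex n)).real {i}, fun i => ?_, fun f => ?_⟩
  · rw [abs_of_nonneg (by positivity), ← le_div_iff₀' hn, real_map,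
      ← μ01_real_preimage_stepIndex i]
    exact ENNReal.toReal_mono (measure_ne_top _ _) (Measure.restrict_apply_le _ _)
  · rw [← integral_map (measurable_stepIndex n).aemeasurable
      (measurable_of_finite f).aestronglyMeasurable, integral_fintype .of_finite,
      Fintype.expect_eq_sum_div_card, Finset.sum_div, Fintype.card_fin]
    exact Finset.sum_congr rfl fun i _ => by
      rw [smul_eq_mul]
      field_simp

/-- The kernel on `[0,1)²` that takes the value `A i j` on the rectangle
`[i/n, (i+1)/n) × [j/n, (j+1)/n)`. -/
noncomputable def stepKernel (A : Fin n → Fin n → ℝ) (x y : ℝ) : ℝ :=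
  A (stepIndex n x) (stepIndex n y)

theorem isBoundedKernel_stepKernel (A : Fin n → Fin n → ℝ) : IsBoundedKernel (stepKernel A) := by
  refine ⟨(measurable_of_finite (Function.uncurry A)).comp
    (((measurable_stepIndex n).comp measurable_fst).prodMk
      ((measurable_stepIndex n).comp measurable_snd)), ∑ i, ∑ j, |A i j|, fun x y => ?_⟩
  exact (Finset.single_le_sum (f := fun j => |A (stepIndex n x) j|) (fun _ _ => abs_nonneg _)
    (Finset.mem_univ (stepIndex n y))).trans (Finset.single_le_sum (f := fun i => ∑ j, |A i j|)
      (fun _ _ => Finset.sum_nonneg fun _ _ => abs_nonneg _) (Finset.mem_univ (stepIndex n x)))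

/-- The matrix of a weighted graph with edge weights in `[0,1]`, loops being allowed. -/
def IsWeightedGraph {ι : Type*} (A : ι → ι → ℝ) : Prop :=
  (∀ i j, A i j = A j i) ∧ ∀ i j, A i j ∈ Icc (0 : ℝ) 1

theorem IsWeightedGraph.comp {ι κ : Type*} {A : ι → ι → ℝ} (hA : IsWeightedGraph A) (f : κ → ι) :
    IsWeightedGraph fun i j => A (f i) (f j) :=
  ⟨fun _ _ => hA.1 _ _, fun _ _ => hA.2 _ _⟩

theorem IsWeightedGraph.isGraphon_stepKernel {A : Fin n → Fin n → ℝ} (hA : IsWeightedGraph A) :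
    IsGraphon (stepKernel A) :=
  ⟨(isBoundedKernel_stepKernel A).1, fun _ _ => hA.1 _ _, fun _ _ => hA.2 _ _⟩

-- The bound is linear in `c4Density D`, unlike `(c4Density D) ^ (1 / 4)`, so it can be averaged.
theorem cutNorm_stepKernel_le (D : Fin n → Fin n → ℝ) {r : ℝ} (hr : 0 < r) :
    cutNorm (stepKernel D) ≤ r + c4Density D / r ^ 3 := by
  refine cutNorm_le fun S T _ _ => ?_
  obtain ⟨s, hs, integral_S⟩ := exists_setIntegral_comp_stepIndex_eq_expect (n := n) S
  obtain ⟨t, ht, integral_T⟩ := exists_setIntegral_comp_stepIndex_eq_expect (n := n) T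
  have integral_eq : ∫ x in S, ∫ y in T, stepKernel D x y ∂μ01 ∂μ01 =
      𝔼 i, s i * 𝔼 j, t j * D i j :=
    (integral_congr_ae (.of_forall fun x => integral_T fun j => D (stepIndex n x) j)).trans
      (integral_S fun i => 𝔼 j, t j * D i j)
  rw [integral_eq]
  have pow_four_le := expect_expect_mul_pow_four_le_c4Density D hs ht
  set c := 𝔼 i, s i * 𝔼 j, t j * D i j
  rcases le_total |c| r with hc | hc
  · exact hc.trans (le_add_of_nonneg_right (div_nonneg (c4Density_nonneg D) (by positivity)))
  · refine le_add_of_nonneg_of_le hr.le ((le_div_iff₀ (by positivity)).2 ?_)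
    calc |c| * r ^ 3 ≤ |c| * |c| ^ 3 := by gcongr
      _ = c ^ 4 := by rw [← pow_succ', Even.pow_abs (by decide)]
      _ ≤ c4Density D := pow_four_le

end Step

section IntervalPerm

theorem add_div_mem_Ico_div_iff {n : ℕ} (i j : Fin n) (x : ℝ) :
    x + ((j : ℝ) - i) / n ∈ Ico ((j : ℝ) / n) (((j : ℝ) + 1) / n) ↔
      x ∈ Ico ((i : ℝ) / n) (((i : ℝ) + 1) / n) := by
  simp only [mem_Ico, add_div, sub_div]
  constructor <;> rintro ⟨h₁, h₂⟩ <;> constructor <;> linarith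

variable {n : ℕ} [NeZero n]

theorem μ01_apply_eq_sum_volume_inter_Ico {s : Set ℝ} (hs : MeasurableSet s) :
    μ01 s = ∑ i : Fin n, volume (s ∩ Ico ((i : ℝ) / n) (((i : ℝ) + 1) / n)) := by
  have inter_eq_iUnion : s ∩ Ico (0 : ℝ) 1 =
      ⋃ i : Fin n, s ∩ Ico ((i : ℝ) / n) (((i : ℝ) + 1) / n) := by
    ext x
    simp only [mem_iUnion, mem_inter_iff, mem_Ico_div_iff]
    exact ⟨fun ⟨hs, hx⟩ => ⟨_, hs, hx, rfl⟩, fun ⟨_, hs, hx, _⟩ => ⟨hs, hx⟩⟩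
  rw [μ01_eq_restrict_Ico, Measure.restrict_apply hs, inter_eq_iUnion,
    measure_iUnion _ fun i => hs.inter measurableSet_Ico, tsum_fintype]
  refine fun i j hij => Set.disjoint_left.2 fun x hxi hxj => hij ?_
  rw [← ((mem_Ico_div_iff i x).1 hxi.2).2, ((mem_Ico_div_iff j x).1 hxj.2).2]

open scoped Classical in
/-- The rearrangement of `[0,1)` that translates the `i`-th interval `[i/n, (i+1)/n)` onto the
`σ i`-th one. It is the identity outside `[0,1)`. -/
noncomputable def intervalPerm (σ : Equiv.Perm (Fin n)) (x : ℝ) : ℝ :=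
  if x ∈ Ico (0 : ℝ) 1 then x + ((σ (stepIndex n x) : ℝ) - stepIndex n x) / n else x

theorem intervalPerm_mem_Ico_and_stepIndex (σ : Equiv.Perm (Fin n)) {x : ℝ}
    (hx : x ∈ Ico (0 : ℝ) 1) :
    intervalPerm σ x ∈ Ico 0 1 ∧ stepIndex n (intervalPerm σ x) = σ (stepIndex n x) := by
  rw [← mem_Ico_div_iff, intervalPerm, if_pos hx, add_div_mem_Ico_div_iff, mem_Ico_div_iff]
  exact ⟨hx, rfl⟩

theorem intervalPerm_mem_Icc (σ : Equiv.Perm (Fin n)) {x : ℝ} (hx : x ∈ Icc (0 : ℝ) 1) :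
    intervalPerm σ x ∈ Icc (0 : ℝ) 1 := by
  by_cases hx' : x ∈ Ico (0 : ℝ) 1
  · exact Ico_subset_Icc_self (intervalPerm_mem_Ico_and_stepIndex σ hx').1
  · rwa [intervalPerm, if_neg hx']

theorem intervalPerm_inv_apply (σ : Equiv.Perm (Fin n)) (x : ℝ) :
    intervalPerm σ⁻¹ (intervalPerm σ x) = x := by
  by_cases hx : x ∈ Ico (0 : ℝ) 1
  · obtain ⟨hσx, index_eq⟩ := intervalPerm_mem_Ico_and_stepIndex σ hx
    rw [intervalPerm, if_pos hσx, index_eq, Equiv.Perm.inv_def,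
      Equiv.symm_apply_apply, intervalPerm, if_pos hx]
    ring
  · have hσx : intervalPerm σ x = x := if_neg hx
    rw [hσx, intervalPerm, if_neg hx]

theorem measurable_intervalPerm (σ : Equiv.Perm (Fin n)) : Measurable (intervalPerm σ) :=
  .ite measurableSet_Ico (measurable_id.add ((measurable_of_finite fun i : Fin n =>
    ((σ i : ℝ) - i) / n).comp (measurable_stepIndex n))) measurable_id

theorem measurePreserving_intervalPerm (σ : Equiv.Perm (Fin n)) :
    MeasurePreserving (intervalPerm σ) μ01 μ01 := by
  refine ⟨measurable_intervalPerm σ, Measure.ext fun s hs => ?_⟩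
  rw [Measure.map_apply (measurable_intervalPerm σ) hs, μ01_apply_eq_sum_volume_inter_Ico (n := n)
    (measurable_intervalPerm σ hs), μ01_apply_eq_sum_volume_inter_Ico (n := n) hs,
    ← Equiv.sum_comp σ fun i => volume (s ∩ Ico ((i : ℝ) / n) (((i : ℝ) + 1) / n))]
  refine Finset.sum_congr rfl fun i _ => ?_
  have preimage_inter : intervalPerm σ ⁻¹' s ∩ Ico ((i : ℝ) / n) (((i : ℝ) + 1) / n) =
      (fun x => x + ((σ i : ℝ) - i) / n) ⁻¹' (s ∩ Ico ((σ i : ℝ) / n) (((σ i : ℝ) + 1) / n)) := by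
    ext x
    rw [preimage_inter, mem_inter_iff, mem_inter_iff, mem_preimage (s := Ico _ _),
      add_div_mem_Ico_div_iff]
    refine and_congr_left fun hx => ?_
    obtain ⟨hx01, hxi⟩ := (mem_Ico_div_iff i x).1 hx
    rw [mem_preimage, mem_preimage, intervalPerm, if_pos hx01, hxi]
  rw [preimage_inter, measure_preimage_add_right]

theorem isInvMeasurePreserving_intervalPerm (σ : Equiv.Perm (Fin n)) :
    IsInvMeasurePreserving (intervalPerm σ) :=
  ⟨fun _ => intervalPerm_mem_Icc σ, measurePreserving_intervalPerm σ, intervalPerm σ⁻¹,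
    fun _ => intervalPerm_mem_Icc σ⁻¹, measurePreserving_intervalPerm σ⁻¹,
    fun x _ => intervalPerm_inv_apply σ x, fun x _ => intervalPerm_inv_apply σ⁻¹ x⟩

theorem cutDist_stepKernel_le_cutNorm_perm {k : ℕ} [NeZero k] (A : Fin n → Fin n → ℝ)
    (B : Fin k → Fin k → ℝ) (σ : Equiv.Perm (Fin n)) (τ : Equiv.Perm (Fin k)) :
    cutDist (stepKernel A) (stepKernel B) ≤ cutNorm fun x y =>
      stepKernel (fun i j => A (σ i) (σ j)) x y - stepKernel (fun i j => B (τ i) (τ j)) x y := by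
  refine (cutDist_le_cutNorm_comp_sub_comp (isBoundedKernel_stepKernel A)
    (isBoundedKernel_stepKernel B) (isInvMeasurePreserving_intervalPerm σ)
    (isInvMeasurePreserving_intervalPerm τ)).trans_eq (cutNorm_congr_ae ?_)
  filter_upwards [ae_mem_Ico_zero_one] with x hx
  filter_upwards [ae_mem_Ico_zero_one] with y hy
  simp only [stepKernel, (intervalPerm_mem_Ico_and_stepIndex _ hx).2,
    (intervalPerm_mem_Ico_and_stepIndex _ hy).2]

end IntervalPerm

section Labels

theorem cutNorm_le_two_mul_of_eq_zero_off {U : ℝ → ℝ → ℝ} (hU : IsBoundedKernel U)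
    (hU1 : ∀ x y, |U x y| ≤ 1) {M : Set ℝ} (hUM : ∀ x ∉ M, ∀ y ∉ M, U x y = 0) :
    cutNorm U ≤ 2 * μ01.real M := by
  calc cutNorm U ≤ ∫ p, |U p.1 p.2| ∂μ01.prod μ01 :=
        cutNorm_le_integral_abs hU.integrable_uncurry
    _ = ∫ p in M ×ˢ univ ∪ univ ×ˢ M, |U p.1 p.2| ∂μ01.prod μ01 := by
        refine (setIntegral_eq_integral_of_forall_compl_eq_zero fun p hp => ?_).symm
        simp only [mem_union, mem_prod, mem_univ, and_true, true_and, not_or] at hp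
        rw [hUM _ hp.1 _ hp.2, abs_zero]
    _ ≤ 1 * (μ01.prod μ01).real (M ×ˢ univ ∪ univ ×ˢ M) := by
        refine (Real.le_norm_self _).trans (norm_setIntegral_le_of_norm_le_const
          (measure_lt_top _ _) fun p _ => ?_)
        rw [Real.norm_eq_abs, abs_abs]
        exact hU1 p.1 p.2
    _ ≤ 2 * μ01.real M := by
        rw [one_mul, two_mul]
        refine (measureReal_union_le _ _).trans_eq ?_
        rw [measureReal_prod_prod, measureReal_prod_prod, probReal_univ, mul_one, one_mul]

/-- The cumulative distribution function of the label `f i` of a uniformly random `i`. -/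
noncomputable def labelCDF {ι κ : Type*} [Fintype ι] [LinearOrder κ] (f : ι → κ) (c : κ) : ℝ :=
  𝔼 i, if f i ≤ c then 1 else 0

theorem labelCDF_comp_equiv {ι ι' κ : Type*} [Fintype ι] [Fintype ι'] [LinearOrder κ] (f : ι → κ)
    (e : ι' ≃ ι) : labelCDF (f ∘ e) = labelCDF f :=
  funext fun _ => Fintype.expect_equiv e _ _ fun _ => rfl

variable {n k : ℕ} [NeZero n] [NeZero k] {κ : Type*} [LinearOrder κ]

theorem label_stepIndex_le_iff {f : Fin n → κ} (hf : Monotone f) (c : κ) {x : ℝ}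
    (hx : x ∈ Ico (0 : ℝ) 1) : f (stepIndex n x) ≤ c ↔ x < labelCDF f c := by
  have hn : (0 : ℝ) < n := Nat.cast_pos.2 (NeZero.pos n)
  rw [← Tuple.lt_card_le_iff_apply_le_of_monotone hf, val_stepIndex hx,
    Nat.floor_lt (mul_nonneg hn.le hx.1), labelCDF, Fintype.expect_eq_sum_div_card,
    Finset.sum_boole, Fintype.card_fin, lt_div_iff₀' hn]

theorem μ01_real_label_ne_le [Fintype κ] {f : Fin n → κ} {g : Fin k → κ} (hf : Monotone f)
    (hg : Monotone g) :
    μ01.real {x | f (stepIndex n x) ≠ g (stepIndex k x)} ≤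
      ∑ c, |labelCDF f c - labelCDF g c| := by
  have mem_uIcc_of_ne (x : ℝ) (hx : x ∈ Ico (0 : ℝ) 1)
      (hne : f (stepIndex n x) ≠ g (stepIndex k x)) :
      ∃ c, x ∈ uIcc (labelCDF f c) (labelCDF g c) := by
    rcases lt_or_gt_of_ne hne with h | h
    · exact ⟨_, Icc_subset_uIcc' ⟨not_lt.1 ((label_stepIndex_le_iff hg _ hx).not.1 h.not_ge),
        ((label_stepIndex_le_iff hf _ hx).1 le_rfl).le⟩⟩
    · exact ⟨_, Icc_subset_uIcc ⟨not_lt.1 ((label_stepIndex_le_iff hf _ hx).not.1 h.not_ge),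
        ((label_stepIndex_le_iff hg _ hx).1 le_rfl).le⟩⟩
  calc μ01.real {x | f (stepIndex n x) ≠ g (stepIndex k x)}
      ≤ μ01.real (⋃ c, uIcc (labelCDF f c) (labelCDF g c)) :=
        ENNReal.toReal_mono (measure_ne_top _ _) (measure_mono_ae
          (ae_mem_Ico_zero_one.mono fun x hx hne => mem_iUnion.2 (mem_uIcc_of_ne x hx hne)))
    _ ≤ ∑ c, μ01.real (uIcc (labelCDF f c) (labelCDF g c)) := measureReal_iUnion_fintype_le _
    _ ≤ ∑ c, |labelCDF f c - labelCDF g c| := by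
        refine Finset.sum_le_sum fun c _ => ENNReal.toReal_le_of_le_ofReal (abs_nonneg _) ?_
        rw [abs_sub_comm, ← Real.volume_interval]
        exact Measure.restrict_apply_le _ _

theorem cutDist_stepKernel_comp_le [Fintype κ] {B : κ → κ → ℝ}
    (hB : ∀ a b, B a b ∈ Icc (0 : ℝ) 1) (f : Fin n → κ) (g : Fin k → κ) :
    cutDist (stepKernel fun i j => B (f i) (f j)) (stepKernel fun i j => B (g i) (g j)) ≤
      2 * ∑ c, |labelCDF f c - labelCDF g c| := by
  refine (cutDist_stepKernel_le_cutNorm_perm _ _ (Tuple.sort f) (Tuple.sort g)).trans ?_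
  refine (cutNorm_le_two_mul_of_eq_zero_off
    (M := {x | (f ∘ Tuple.sort f) (stepIndex n x) ≠ (g ∘ Tuple.sort g) (stepIndex k x)})
    ((isBoundedKernel_stepKernel _).sub (isBoundedKernel_stepKernel _)) (fun _ _ => ?_)
    fun x hx y hy => ?_).trans ?_
  · exact abs_sub_le_of_nonneg_of_le (hB _ _).1 (hB _ _).2 (hB _ _).1 (hB _ _).2
  · have hfx : f (Tuple.sort f (stepIndex n x)) = g (Tuple.sort g (stepIndex k x)) := not_not.1 hx
    have hfy : f (Tuple.sort f (stepIndex n y)) = g (Tuple.sort g (stepIndex k y)) := not_not.1 hy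
    simp only [stepKernel, hfx, hfy, sub_self]
  · rw [← labelCDF_comp_equiv f (Tuple.sort f), ← labelCDF_comp_equiv g (Tuple.sort g)]
    gcongr
    exact μ01_real_label_ne_le (Tuple.monotone_sort f) (Tuple.monotone_sort g)

end Labels

/-! ### Densities of step kernels -/

section GraphDensity

variable {n : ℕ} [NeZero n] {V : Type*} [Fintype V] [DecidableEq V]

theorem integral_comp_stepIndex_eq_expect (f : (V → Fin n) → ℝ) :
    ∫ x, f (fun a => stepIndex n (x a)) ∂Measure.pi (fun _ => μ01) = 𝔼 y, f y := by
  have : IsProbabilityMeasure (μ01.map (stepIndex n)) :=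
    Measure.isProbabilityMeasure_map (measurable_stepIndex n).aemeasurable
  have map_index : MeasurePreserving (fun (x : V → ℝ) a => stepIndex n (x a))
      (Measure.pi fun _ => μ01) (Measure.pi fun _ => μ01.map (stepIndex n)) :=
    measurePreserving_pi _ _ fun _ => ⟨measurable_stepIndex n, rfl⟩
  have real_map (i : Fin n) : (μ01.map (stepIndex n)).real {i} = 1 / n := by
    rw [map_measureReal_apply (measurable_stepIndex n) (measurableSet_singleton i),
      μ01_real_preimage_stepIndex]
  rw [← integral_map map_index.measurable.aemeasurable
    (measurable_of_finite f).aestronglyMeasurable, map_index.map_eq, integral_fintype .of_finite,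
    Fintype.expect_eq_sum_div_card, Finset.sum_div]
  refine Finset.sum_congr rfl fun y _ => ?_
  rw [measureReal_def, Measure.pi_singleton, ENNReal.toReal_prod]
  simp only [← measureReal_def, real_map, Finset.prod_const, Finset.card_univ, Fintype.card_fun,
    Fintype.card_fin, smul_eq_mul, Nat.cast_pow]
  ring

theorem decoratedDensity_stepKernel (R : Finset (V × V)) (A : Fin n → Fin n → ℝ) :
    decoratedDensity R (fun _ => stepKernel A) =
      𝔼 y : V → Fin n, ∏ p ∈ R, A (y p.1) (y p.2) :=
  integral_comp_stepIndex_eq_expect fun y => ∏ p ∈ R, A (y p.1) (y p.2)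

open scoped Classical in
/-- The adjacency matrix of `G` with real entries. -/
noncomputable def adjWeight {ι : Type*} (G : SimpleGraph ι) (i j : ι) : ℝ :=
  if G.Adj i j then 1 else 0

theorem isWeightedGraph_adjWeight {ι : Type*} (G : SimpleGraph ι) :
    IsWeightedGraph (adjWeight G) := by
  classical
  refine ⟨fun i j => if_congr (G.adj_comm i j) rfl rfl, fun i j => ?_⟩
  unfold adjWeight
  split_ifs <;> simp

open scoped Classical in
theorem graphonOf_eq_ite_stepKernel (G : SimpleGraph (Fin n)) (x y : ℝ) :
    graphonOf G x y = if x ∈ Ico (0 : ℝ) 1 ∧ y ∈ Ico (0 : ℝ) 1 then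
      stepKernel (adjWeight G) x y else 0 := by
  unfold graphonOf stepKernel adjWeight
  rw [← ite_and]
  refine if_congr ?_ rfl rfl
  simp only [mem_Ico_div_iff]
  constructor
  · rintro ⟨_, _, hadj, ⟨hx, rfl⟩, hy, rfl⟩
    exact ⟨⟨hx, hy⟩, hadj⟩
  · rintro ⟨⟨hx, hy⟩, hadj⟩
    exact ⟨_, _, hadj, ⟨hx, rfl⟩, hy, rfl⟩

theorem isGraphon_graphonOf {n : ℕ} (G : SimpleGraph (Fin n)) : IsGraphon (graphonOf G) := by
  classical
  obtain rfl | _ := eq_zero_or_neZero n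
  · refine ⟨?_, fun _ _ => ?_, fun _ _ => ?_⟩ <;> simp [graphonOf, Function.uncurry_def]
  have hA := (isWeightedGraph_adjWeight G).isGraphon_stepKernel
  refine ⟨?_, fun x y => ?_, fun x y => ?_⟩
  · have : Function.uncurry (graphonOf G) = (Ico (0 : ℝ) 1 ×ˢ Ico (0 : ℝ) 1).indicator
        (Function.uncurry (stepKernel (adjWeight G))) :=
      funext fun p => by
        simp only [Function.uncurry_def, graphonOf_eq_ite_stepKernel, indicator_apply, mem_prod]
    rw [this]
    exact hA.1.indicator (measurableSet_Ico.prod measurableSet_Ico)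
  · rw [graphonOf_eq_ite_stepKernel, graphonOf_eq_ite_stepKernel]
    exact if_congr and_comm (hA.2.1 x y) rfl
  · rw [graphonOf_eq_ite_stepKernel]
    split_ifs
    · exact hA.2.2 x y
    · simp

theorem cutDist_graphonOf_stepKernel (G : SimpleGraph (Fin n)) :
    cutDist (graphonOf G) (stepKernel (adjWeight G)) = 0 := by
  refine le_antisymm ((cutDist_le_cutNorm _ _).trans ?_) (cutDist_nonneg _ _)
  refine (cutNorm_congr_ae (V := fun _ _ => 0) ?_).trans_le (cutNorm_le fun S T _ _ => by simp)
  filter_upwards [ae_mem_Ico_zero_one] with x hx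
  filter_upwards [ae_mem_Ico_zero_one] with y hy
  rw [graphonOf_eq_ite_stepKernel, if_pos ⟨hx, hy⟩, sub_self]

open scoped Classical in
/-- The edges of `F`, each listed once as an increasing pair. -/
noncomputable def edgePairs {m : ℕ} (F : SimpleGraph (Fin m)) : Finset (Fin m × Fin m) :=
  Finset.univ.filter fun p => p.1 < p.2 ∧ F.Adj p.1 p.2

theorem homDensity_eq_decoratedDensity {m : ℕ} (F : SimpleGraph (Fin m)) (W : ℝ → ℝ → ℝ) :
    homDensity F W = decoratedDensity (edgePairs F) fun _ => W := rfl

theorem lt_of_mem_edgePairs {m : ℕ} {F : SimpleGraph (Fin m)} {p : Fin m × Fin m}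
    (hp : p ∈ edgePairs F) : p.1 < p.2 := by
  classical exact (Finset.mem_filter.1 hp).2.1

open scoped Classical in
theorem prod_edgePairs_adjWeight {m : ℕ} {ι : Type*} (F : SimpleGraph (Fin m)) (G : SimpleGraph ι)
    (y : Fin m → ι) : ∏ p ∈ edgePairs F, adjWeight G (y p.1) (y p.2) =
      if ∀ i j, F.Adj i j → G.Adj (y i) (y j) then 1 else 0 := by
  simp only [adjWeight, Finset.prod_boole]
  congr 1
  refine propext ⟨fun h i j hij => ?_, fun h p hp => h _ _ (Finset.mem_filter.1 hp).2.2⟩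
  rcases lt_or_gt_of_ne hij.ne with hlt | hlt
  · exact h (i, j) (Finset.mem_filter.2 ⟨Finset.mem_univ _, hlt, hij⟩)
  · exact (h (j, i) (Finset.mem_filter.2 ⟨Finset.mem_univ _, hlt, hij.symm⟩)).symm

theorem homDensity_graphonOf {m : ℕ} (F : SimpleGraph (Fin m)) (G : SimpleGraph (Fin n)) :
    homDensity F (graphonOf G) = homDensityFin F G := by
  classical
  have density_eq : decoratedDensity (edgePairs F) (fun _ => graphonOf G) =
      decoratedDensity (edgePairs F) fun _ => stepKernel (adjWeight G) := by
    have := abs_decoratedDensity_sub_le_card_mul_cutDist (fun _ => lt_of_mem_edgePairs (F := F))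
      (isGraphon_graphonOf G) (isWeightedGraph_adjWeight G).isGraphon_stepKernel
    rw [cutDist_graphonOf_stepKernel, mul_zero] at this
    exact sub_eq_zero.1 (abs_nonpos_iff.1 this)
  rw [homDensity_eq_decoratedDensity, density_eq, decoratedDensity_stepKernel]
  simp only [prod_edgePairs_adjWeight, Fintype.expect_eq_sum_div_card, Finset.sum_boole,
    homDensityFin, Fintype.card_subtype, Fintype.card_fun, Fintype.card_fin, Nat.cast_pow]

end GraphDensity

/-! ### Weak regularity -/

section Regularity

variable {ι κ : Type*} [Fintype ι] [Fintype κ]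

theorem c4Density_eq_expect (D : ι → κ → ℝ) :
    c4Density D = 𝔼 j, 𝔼 j', 𝔼 i, 𝔼 i', D i j * D i j' * (D i' j * D i' j') := by
  simp only [c4Density, sq, Finset.expect_mul_expect, ← Finset.univ_product_univ,
    Finset.expect_product]

theorem c4Density_eq_expect_correlation (D : ι → κ → ℝ) :
    c4Density D = 𝔼 q : ι × κ, D q.1 q.2 * 𝔼 p : ι × κ, D p.1 p.2 * (D p.1 q.2 * D q.1 p.2) := by
  have expect_order : c4Density D =
      𝔼 j₀, 𝔼 i₀, 𝔼 i, 𝔼 j, D i j₀ * D i j * (D i₀ j₀ * D i₀ j) := by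
    rw [c4Density_eq_expect]
    refine Finset.expect_congr rfl fun j₀ _ => ?_
    exact (Finset.expect_comm _ _ _).trans ((Finset.expect_congr rfl fun i _ =>
      Finset.expect_comm _ _ _).trans (Finset.expect_comm _ _ _))
  rw [expect_order, Finset.expect_comm]
  simp only [← Finset.univ_product_univ, Finset.expect_product, Finset.mul_expect]
  exact Finset.expect_congr rfl fun i₀ _ => Finset.expect_congr rfl fun j₀ _ =>
    Finset.expect_congr rfl fun i _ => Finset.expect_congr rfl fun j _ => by ring

theorem exists_lt_abs_expect_of_lt_c4Density [Nonempty ι] [Nonempty κ] {D : ι → κ → ℝ}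
    (hD : ∀ i j, |D i j| ≤ 1) {η : ℝ} (h : η < c4Density D) :
    ∃ i₀ j₀, η < |𝔼 p : ι × κ, D p.1 p.2 * (D p.1 j₀ * D i₀ p.2)| := by
  rw [c4Density_eq_expect_correlation] at h
  obtain ⟨⟨i₀, j₀⟩, -, hlt⟩ := Finset.exists_lt_of_lt_expect Finset.univ_nonempty h
  refine ⟨i₀, j₀, hlt.trans_le ((le_abs_self _).trans ?_)⟩
  rw [abs_mul]
  exact mul_le_of_le_one_left (abs_nonneg _) (hD _ _)

theorem abs_expect_mul_sub_le {α : Type*} [Fintype α] {F w w' : α → ℝ} {δ : ℝ}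
    (hF : ∀ a, |F a| ≤ 1) (hδ : 0 ≤ δ) (hw : ∀ a, |w a - w' a| ≤ δ) :
    |𝔼 a, F a * w a - 𝔼 a, F a * w' a| ≤ δ := by
  rw [← Finset.expect_sub_distrib]
  simp only [← mul_sub]
  rcases isEmpty_or_nonempty α with hα | hα
  · simpa
  refine (Finset.abs_expect_le _ _).trans (Finset.expect_le Finset.univ_nonempty fun a _ => ?_)
  rw [abs_mul]
  exact (mul_le_of_le_one_left (abs_nonneg _) (hF a)).trans (hw a)

theorem expect_sub_mul_sq_le {α : Type*} [Fintype α] (F : α → ℝ) {w : α → ℝ}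
    (hw : ∀ a, |w a| ≤ 1) :
    𝔼 a, (F a - (𝔼 b, F b * w b) * w a) ^ 2 ≤ 𝔼 a, F a ^ 2 - (𝔼 a, F a * w a) ^ 2 := by
  set β := 𝔼 a, F a * w a with hβ
  have expect_sq_le : β ^ 2 * 𝔼 a, w a ^ 2 ≤ β ^ 2 := by
    rcases isEmpty_or_nonempty α with hα | hα
    · simp [sq_nonneg]
    · exact mul_le_of_le_one_right (sq_nonneg _)
        (Finset.expect_le Finset.univ_nonempty fun a _ => (sq_le_one_iff_abs_le_one _).2 (hw a))
  calc 𝔼 a, (F a - β * w a) ^ 2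
      = 𝔼 a, (F a ^ 2 - 2 * β * (F a * w a) + β ^ 2 * w a ^ 2) :=
        Finset.expect_congr rfl fun a _ => by ring
    _ = 𝔼 a, F a ^ 2 - 2 * β * β + β ^ 2 * 𝔼 a, w a ^ 2 := by
        rw [Finset.expect_add_distrib, Finset.expect_sub_distrib, ← Finset.mul_expect,
          ← Finset.mul_expect, ← hβ]
    _ ≤ 𝔼 a, F a ^ 2 - β ^ 2 := by linarith

theorem abs_mul_sub_mul_le {a a' b b' δ : ℝ} (ha' : |a'| ≤ 1) (hb : |b| ≤ 1) (ha : |a - a'| ≤ δ)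
    (hbb : |b - b'| ≤ δ) : |a * b - a' * b'| ≤ 2 * δ := by
  calc |a * b - a' * b'| = |(a - a') * b + a' * (b - b')| := by ring_nf
    _ ≤ |a - a'| * |b| + |a'| * |b - b'| := by
        rw [← abs_mul, ← abs_mul]
        exact abs_add_le _ _
    _ ≤ |a - a'| * 1 + 1 * |b - b'| := by gcongr
    _ ≤ 2 * δ := by linarith

theorem exists_finite_rounding {δ : ℝ} (hδ : 0 < δ) : ∃ Q : Set ℝ, Q.Finite ∧
    (∀ q ∈ Q, |q| ≤ 1) ∧ ∀ x : ℝ, |x| ≤ 1 → ∃ q ∈ Q, |x - q| ≤ δ := by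
  obtain ⟨Q, hQ, hQfin, hcover⟩ :=
    (isCompact_Icc : IsCompact (Icc (-1 : ℝ) 1)).finite_cover_balls hδ
  refine ⟨Q, hQfin, fun q hq => abs_le.2 (hQ hq), fun x hx => ?_⟩
  obtain ⟨q, hq, hxq⟩ := mem_iUnion₂.1 (hcover (abs_le.1 hx))
  exact ⟨q, hq, (Metric.mem_ball.1 hxq).le⟩

theorem exists_refinement {ι P : Type*} [Fintype ι] [Nonempty ι] {η : ℝ} (hη : 0 < η) {Q : Set ℝ}
    (hQ1 : ∀ q ∈ Q, |q| ≤ 1) (hQ : ∀ x : ℝ, |x| ≤ 1 → ∃ q ∈ Q, |x - q| ≤ η / 4)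
    {A : ι → ι → ℝ} (hA : ∀ i j, A i j ∈ Icc (0 : ℝ) 1) (f : ι → P) {B : P → P → ℝ}
    (hB : ∀ a b, B a b ∈ Icc (0 : ℝ) 1)
    (h : η < c4Density fun i j => A i j - B (f i) (f j)) :
    ∃ (u v : ι → Q) (B' : P × Q × Q → P × Q × Q → ℝ), (∀ a b, B' a b ∈ Icc (0 : ℝ) 1) ∧
      𝔼 p : ι × ι, (A p.1 p.2 - B' (f p.1, u p.1, v p.1) (f p.2, u p.2, v p.2)) ^ 2 ≤
        𝔼 p : ι × ι, (A p.1 p.2 - B (f p.1) (f p.2)) ^ 2 - η ^ 2 / 4 := by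
  set D : ι → ι → ℝ := fun i j => A i j - B (f i) (f j) with hD_def
  have hD (i j : ι) : |D i j| ≤ 1 :=
    abs_sub_le_of_nonneg_of_le (hA i j).1 (hA i j).2 (hB _ _).1 (hB _ _).2
  obtain ⟨i₀, j₀, correlation⟩ := exists_lt_abs_expect_of_lt_c4Density hD h
  choose u huQ hu using fun i => hQ (D i j₀) (hD i j₀)
  choose v hvQ hv using fun j => hQ (D i₀ j) (hD i₀ j)
  set β := 𝔼 p : ι × ι, D p.1 p.2 * (u p.1 * v p.2)
  have le_abs_β : η / 2 ≤ |β| := by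
    have := abs_expect_mul_sub_le (F := fun p : ι × ι => D p.1 p.2) (δ := 2 * (η / 4))
      (fun p => hD _ _) (by positivity)
      fun p => abs_mul_sub_mul_le (hQ1 _ (huQ p.1)) (hD i₀ p.2) (hu p.1) (hv p.2)
    linarith [abs_sub_abs_le_abs_sub
      (𝔼 p : ι × ι, D p.1 p.2 * (D p.1 j₀ * D i₀ p.2)) β]
  have projIcc_sq_le (a : ℝ) {b : ℝ} (hb : b ∈ Icc (0 : ℝ) 1) :
      (b - projIcc 0 1 zero_le_one a) ^ 2 ≤ (b - a) ^ 2 := by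
    have := abs_projIcc_sub_projIcc (zero_le_one' ℝ) (c := b) (d := a)
    rw [projIcc_of_mem zero_le_one hb] at this
    exact sq_le_sq.2 this
  refine ⟨fun i => ⟨u i, huQ i⟩, fun j => ⟨v j, hvQ j⟩,
    fun a b => projIcc 0 1 zero_le_one (B a.1 b.1 + β * (a.2.1 * b.2.2)),
    fun a b => Subtype.prop _, ?_⟩
  calc 𝔼 p : ι × ι, (A p.1 p.2 -
        projIcc 0 1 zero_le_one (B (f p.1) (f p.2) + β * (u p.1 * v p.2))) ^ 2
      ≤ 𝔼 p : ι × ι, (D p.1 p.2 - β * (u p.1 * v p.2)) ^ 2 := by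
        refine Finset.expect_le_expect fun p _ => (projIcc_sq_le _ (hA _ _)).trans_eq ?_
        rw [hD_def, sub_add_eq_sub_sub]
    _ ≤ 𝔼 p : ι × ι, D p.1 p.2 ^ 2 - β ^ 2 := expect_sub_mul_sq_le _ fun p => by
        rw [abs_mul]
        exact mul_le_one₀ (hQ1 _ (huQ _)) (abs_nonneg _) (hQ1 _ (hvQ _))
    _ ≤ 𝔼 p : ι × ι, D p.1 p.2 ^ 2 - η ^ 2 / 4 := by
        have : (η / 2) ^ 2 ≤ β ^ 2 := sq_le_sq.2 (by rwa [abs_of_pos (half_pos hη)])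
        linarith

theorem exists_labelling_c4Density_le_or_energy_le {η : ℝ} (hη : 0 < η) (m : ℕ) :
    ∃ (P : Type) (_ : Finite P), ∀ (ι : Type) [Fintype ι] [Nonempty ι] (A : ι → ι → ℝ),
      (∀ i j, A i j ∈ Icc (0 : ℝ) 1) → ∃ (f : ι → P) (B : P → P → ℝ),
        (∀ a b, B a b ∈ Icc (0 : ℝ) 1) ∧ (c4Density (fun i j => A i j - B (f i) (f j)) ≤ η ∨
          𝔼 p : ι × ι, (A p.1 p.2 - B (f p.1) (f p.2)) ^ 2 ≤ 1 - m * (η ^ 2 / 4)) := by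
  induction m with
  | zero =>
    refine ⟨Unit, inferInstance, fun ι _ _ A hA => ⟨fun _ => (), fun _ _ => 0, fun _ _ => by simp,
      .inr (Finset.expect_le Finset.univ_nonempty fun p _ => ?_)⟩⟩
    rw [sub_zero, Nat.cast_zero, zero_mul, sub_zero]
    exact pow_le_one₀ (hA _ _).1 (hA _ _).2
  | succ m ih =>
    obtain ⟨P, hP, exists_labelling⟩ := ih
    obtain ⟨Q, hQfin, hQ1, hQ⟩ := exists_finite_rounding (show 0 < η / 4 by positivity)
    have := hQfin.to_subtype
    refine ⟨P × Q × Q, inferInstance, fun ι _ _ A hA => ?_⟩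
    obtain ⟨f, B, hB, hfB⟩ := exists_labelling ι A hA
    rcases le_or_gt (c4Density fun i j => A i j - B (f i) (f j)) η with hc4 | hc4
    · obtain ⟨q, hq, -⟩ := hQ 0 (by simp)
      exact ⟨fun i => (f i, ⟨q, hq⟩, ⟨q, hq⟩), fun a b => B a.1 b.1, fun _ _ => hB _ _, .inl hc4⟩
    · obtain ⟨u, v, B', hB', energy_le⟩ := exists_refinement hη hQ1 hQ hA f hB hc4
      refine ⟨fun i => (f i, u i, v i), B', hB', .inr ?_⟩
      push_cast
      linarith [hfB.resolve_left hc4.not_ge]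

theorem exists_labelling_c4Density_le {η : ℝ} (hη : 0 < η) :
    ∃ K : ℕ, ∀ (ι : Type) [Fintype ι] [Nonempty ι] (A : ι → ι → ℝ),
      (∀ i j, A i j ∈ Icc (0 : ℝ) 1) → ∃ (f : ι → Fin K) (B : Fin K → Fin K → ℝ),
        (∀ a b, B a b ∈ Icc (0 : ℝ) 1) ∧ c4Density (fun i j => A i j - B (f i) (f j)) ≤ η := by
  obtain ⟨m, hm⟩ := exists_nat_gt (1 / (η ^ 2 / 4))
  obtain ⟨P, hP, exists_labelling⟩ := exists_labelling_c4Density_le_or_energy_le hη m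
  obtain ⟨K, ⟨e⟩⟩ := Finite.exists_equiv_fin P
  refine ⟨K, fun ι _ _ A hA => ?_⟩
  obtain ⟨f, B, hB, hfB⟩ := exists_labelling ι A hA
  refine ⟨fun i => e (f i), fun a b => B (e.symm a) (e.symm b), fun _ _ => hB _ _, ?_⟩
  simp only [Equiv.symm_apply_apply]
  refine hfB.resolve_right fun energy_le => ?_
  rw [div_lt_iff₀ (by positivity)] at hm
  linarith [Finset.expect_nonneg fun (p : ι × ι) (_ : p ∈ Finset.univ) =>
    sq_nonneg (A p.1 p.2 - B (f p.1) (f p.2))]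

end Regularity

/-! ### Sampling -/

section Sampling

/-- The four cycle factors of `c4Density D` along a map `y` of the vertices of the cycle. -/
def c4Weight {ι : Type*} (D : ι → ι → ℝ) (y : Fin 4 → ι) : ℝ :=
  D (y 2) (y 0) * D (y 2) (y 1) * (D (y 3) (y 0) * D (y 3) (y 1))

theorem c4Weight_le_one {ι : Type*} {D : ι → ι → ℝ} (hD : ∀ i j, |D i j| ≤ 1) (y : Fin 4 → ι) :
    c4Weight D y ≤ 1 := by
  refine (le_abs_self _).trans ?_
  rw [c4Weight, abs_mul, abs_mul, abs_mul]
  exact mul_le_one₀ (mul_le_one₀ (hD _ _) (abs_nonneg _) (hD _ _)) (by positivity)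
    (mul_le_one₀ (hD _ _) (abs_nonneg _) (hD _ _))

variable {ι κ : Type*} [Fintype ι] [Fintype κ]

theorem expect_comp_injective [Nonempty ι] {α β : Type*} [Fintype α] [DecidableEq α] [Fintype β]
    [DecidableEq β] {e : β → α} (he : Function.Injective e) (Φ : (β → ι) → ℝ) :
    𝔼 x : α → ι, Φ (x ∘ e) = 𝔼 y, Φ y := by
  classical
  let splitRange : β ⊕ ((range e)ᶜ : Set α) ≃ α :=
    ((Equiv.ofInjective e he).sumCongr (Equiv.refl _)).trans (Equiv.Set.sumCompl (range e))
  let splitFun : (α → ι) ≃ (β → ι) × (((range e)ᶜ : Set α) → ι) :=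
    (Equiv.arrowCongr splitRange.symm (Equiv.refl _)).trans (Equiv.sumArrowEquivProdArrow _ _ _)
  have comp_eq_fst (x : α → ι) : x ∘ e = (splitFun x).1 := by
    ext b
    simp [splitFun, splitRange, Equiv.sumArrowEquivProdArrow]
  calc 𝔼 x : α → ι, Φ (x ∘ e)
    _ = 𝔼 z : (β → ι) × (((range e)ᶜ : Set α) → ι), Φ z.1 :=
      Fintype.expect_equiv splitFun _ _ fun x => by rw [comp_eq_fst]
    _ = 𝔼 y, Φ y := by
      simp only [← Finset.univ_product_univ, Finset.expect_product, Fintype.expect_const]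

theorem expect_fin_succ {m : ℕ} (Φ : (Fin (m + 1) → ι) → ℝ) :
    𝔼 y, Φ y = 𝔼 i, 𝔼 y : Fin m → ι, Φ (Fin.cons i y) := by
  rw [← Finset.expect_product' (f := fun i y => Φ (Fin.cons i y)), Finset.univ_product_univ]
  exact Fintype.expect_equiv (Fin.consEquiv fun _ => ι).symm _ _ fun y => by
    simp [Fin.consEquiv]

theorem expect_fin_two (Φ : (Fin 2 → ι) → ℝ) : 𝔼 y, Φ y = 𝔼 i, 𝔼 j, Φ ![i, j] := by
  simp only [expect_fin_succ, Finset.univ_unique, Finset.expect_singleton]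
  rfl

theorem expect_fin_four (Φ : (Fin 4 → ι) → ℝ) :
    𝔼 y, Φ y = 𝔼 i, 𝔼 j, 𝔼 i', 𝔼 j', Φ ![i, j, i', j'] := by
  simp only [expect_fin_succ, Finset.univ_unique, Finset.expect_singleton]
  rfl

/-- The pairs of vertices `(a, b)` with `a < b`, encoding the unordered pairs of distinct
vertices. -/
def orderedPairs (V : Type*) [Fintype V] [LinearOrder V] : Finset (V × V) :=
  Finset.univ.filter fun p => p.1 < p.2

section LinearOrder

variable {V : Type*} [Fintype V] [LinearOrder V]

theorem mem_orderedPairs {p : V × V} : p ∈ orderedPairs V ↔ p.1 < p.2 := by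
  simp [orderedPairs]

theorem exists_mem_orderedPairs {a b : V} (hab : a ≠ b) :
    ∃ p ∈ orderedPairs V, s(p.1, p.2) = s(a, b) := by
  rcases lt_or_gt_of_ne hab with h | h
  · exact ⟨(a, b), mem_orderedPairs.2 h, rfl⟩
  · exact ⟨(b, a), mem_orderedPairs.2 h, Sym2.eq_swap⟩

theorem expect_boole_apply_eq_apply [Nonempty ι] [DecidableEq ι] {a b : V} (hab : a ≠ b) :
    𝔼 y : V → ι, (if y a = y b then (1 : ℝ) else 0) = 1 / Fintype.card ι := by
  have injective_pair : Function.Injective ![a, b] := by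
    simp [Function.Injective, Fin.forall_fin_two, hab, hab.symm]
  rw [← Fintype.expect_const (ι := ι) (1 / Fintype.card ι : ℝ)]
  refine (expect_comp_injective injective_pair
    fun y : Fin 2 → ι => if y 0 = y 1 then (1 : ℝ) else 0).trans ?_
  rw [expect_fin_two]
  simp

theorem expect_le_add_card_orderedPairs_div [Nonempty ι] {T : (V → ι) → ℝ} {c : ℝ} (hc : 0 ≤ c)
    (hT : ∀ y, T y ≤ 1) (hTc : ∀ y, Function.Injective y → T y ≤ c) :
    𝔼 y, T y ≤ c + (orderedPairs V).card / Fintype.card ι := by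
  classical
  have le_collisions (y : V → ι) :
      T y ≤ c + ∑ p ∈ orderedPairs V, if y p.1 = y p.2 then (1 : ℝ) else 0 := by
    have boole_nonneg (p : V × V) : 0 ≤ if y p.1 = y p.2 then (1 : ℝ) else 0 := by
      split_ifs <;> simp
    by_cases hy : Function.Injective y
    · linarith [hTc y hy, Finset.sum_nonneg fun p (_ : p ∈ orderedPairs V) => boole_nonneg p]
    · obtain ⟨a, b, hyab, hab⟩ := Function.not_injective_iff.1 hy
      obtain ⟨p, hp, hpab⟩ := exists_mem_orderedPairs hab
      have hyp : y p.1 = y p.2 := by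
        rcases Sym2.eq_iff.1 hpab with h | h <;> rw [h.1, h.2]
        exacts [hyab, hyab.symm]
      have one_le := Finset.single_le_sum (fun p _ => boole_nonneg p) hp
      rw [if_pos hyp] at one_le
      linarith [hT y]
  refine (Finset.expect_le_expect fun y _ => le_collisions y).trans_eq ?_
  rw [Finset.expect_add_distrib, Fintype.expect_const, Finset.expect_sum_comm,
    Finset.sum_congr rfl fun p hp => expect_boole_apply_eq_apply (mem_orderedPairs.1 hp).ne]
  simp [div_eq_mul_inv]

theorem expect_expect_comp_le [Nonempty ι] [Nonempty κ] [DecidableEq κ] {Φ : (V → ι) → ℝ}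
    (hΦ : ∀ y, Φ y ≤ 1) (hΦ₀ : 0 ≤ 𝔼 y, Φ y) :
    𝔼 x : κ → ι, 𝔼 y : V → κ, Φ (x ∘ y) ≤
      𝔼 y, Φ y + (orderedPairs V).card / Fintype.card κ := by
  rw [Finset.expect_comm]
  exact expect_le_add_card_orderedPairs_div hΦ₀
    (fun y => Finset.expect_le Finset.univ_nonempty fun x _ => hΦ _)
    fun y hy => (expect_comp_injective hy Φ).le

end LinearOrder

theorem expect_sq_eq_expect_fin_two (g : ι → ℝ) :
    (𝔼 i, g i) ^ 2 = 𝔼 y : Fin 2 → ι, g (y 0) * g (y 1) := by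
  rw [expect_fin_two, sq, Finset.expect_mul_expect]
  rfl

theorem c4Density_eq_expect_c4Weight (D : ι → ι → ℝ) :
    c4Density D = 𝔼 y, c4Weight D y := by
  rw [expect_fin_four, c4Density_eq_expect]
  rfl

variable [Nonempty ι] [Nonempty κ] [DecidableEq κ]

theorem expect_c4Density_comp_le {D : ι → ι → ℝ} (hD : ∀ i j, |D i j| ≤ 1) :
    𝔼 x : κ → ι, c4Density (fun a b => D (x a) (x b)) ≤ c4Density D + 6 / Fintype.card κ := by
  have sample_le := expect_expect_comp_le (κ := κ) (c4Weight_le_one hD)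
    (c4Density_eq_expect_c4Weight D ▸ c4Density_nonneg D)
  simp only [c4Density_eq_expect_c4Weight]
  exact sample_le

theorem expect_sq_expect_comp_le {g : ι → ℝ} (hg : ∀ i, |g i| ≤ 1) :
    𝔼 x : κ → ι, (𝔼 a, g (x a)) ^ 2 ≤ (𝔼 i, g i) ^ 2 + 1 / Fintype.card κ := by
  have mul_le_one (y : Fin 2 → ι) : g (y 0) * g (y 1) ≤ 1 := by
    refine (le_abs_self _).trans ?_
    rw [abs_mul]
    exact mul_le_one₀ (hg _) (abs_nonneg _) (hg _)
  have sample_le := expect_expect_comp_le (κ := κ) mul_le_one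
    (expect_sq_eq_expect_fin_two g ▸ sq_nonneg _)
  simp only [expect_sq_eq_expect_fin_two]
  rwa [show (orderedPairs (Fin 2)).card = 1 by decide, Nat.cast_one] at sample_le

theorem labelCDF_mem_Icc {α : Type*} [LinearOrder α] (f : ι → α) (c : α) :
    labelCDF f c ∈ Icc (0 : ℝ) 1 :=
  ⟨Finset.expect_nonneg fun i _ => by split_ifs <;> simp,
    Finset.expect_le Finset.univ_nonempty fun i _ => by split_ifs <;> simp⟩

theorem expect_sq_labelCDF_comp_sub_le {α : Type*} [LinearOrder α] (f : ι → α) (c : α) :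
    𝔼 x : κ → ι, (labelCDF (f ∘ x) c - labelCDF f c) ^ 2 ≤ 1 / Fintype.card κ := by
  have abs_boole_sub_le (i : ι) : |(if f i ≤ c then (1 : ℝ) else 0) - labelCDF f c| ≤ 1 :=
    Real.dist_le_of_mem_Icc_01 (by split_ifs <;> simp) (labelCDF_mem_Icc f c)
  have sample_le := expect_sq_expect_comp_le (κ := κ) abs_boole_sub_le
  simp only [Finset.expect_sub_distrib, Fintype.expect_const] at sample_le
  simpa [labelCDF] using sample_le

end Sampling

section BernoulliWeight

variable {α : Type*} [DecidableEq α] {S e : Finset α} {m : α → ℝ}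

/-- The probability that a random subset of `S`, which contains each `p ∈ S` independently with
probability `m p`, is equal to `e`. -/
def bernoulliWeight (S : Finset α) (m : α → ℝ) (e : Finset α) : ℝ :=
  (∏ p ∈ e, m p) * ∏ p ∈ S \ e, (1 - m p)

theorem bernoulliWeight_nonneg (hm : ∀ p, m p ∈ Icc (0 : ℝ) 1) : 0 ≤ bernoulliWeight S m e :=
  mul_nonneg (Finset.prod_nonneg fun p _ => (hm p).1)
    (Finset.prod_nonneg fun p _ => sub_nonneg.2 (hm p).2)

theorem sum_bernoulliWeight (S : Finset α) (m : α → ℝ) :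
    ∑ e ∈ S.powerset, bernoulliWeight S m e = 1 := by
  simp only [bernoulliWeight, ← Finset.prod_add, add_sub_cancel, Finset.prod_const_one]

theorem bernoulliWeight_eq_sum (S : Finset α) (m : α → ℝ) (e : Finset α) :
    bernoulliWeight S m e = ∑ T ∈ (S \ e).powerset, (-1) ^ T.card * ∏ p ∈ e ∪ T, m p := by
  have one_sub (p : α) : 1 - m p = -m p + 1 := by ring
  simp only [bernoulliWeight, one_sub, Finset.prod_add, Finset.mul_sum, Finset.prod_const_one,
    mul_one]
  refine Finset.sum_congr rfl fun T hT => ?_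
  rw [Finset.prod_union (Finset.disjoint_of_subset_right (Finset.mem_powerset.1 hT)
    Finset.disjoint_sdiff), Finset.prod_neg]
  ring

theorem sum_bernoulliWeight_mul_boole_sub_mul {p : α} (hp : p ∈ S) (m : α → ℝ)
    {Ψ : Finset α → ℝ} (hΨ : ∀ e, Ψ (insert p e) = Ψ e) :
    ∑ e ∈ S.powerset, bernoulliWeight S m e * (((if p ∈ e then 1 else 0) - m p) * Ψ e) = 0 := by
  have hS : S = insert p (S.erase p) := (Finset.insert_erase hp).symm
  rw [hS, Finset.sum_powerset_insert (Finset.notMem_erase _ _), ← hS, ← Finset.sum_add_distrib]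
  refine Finset.sum_eq_zero fun t ht => ?_
  have hpt : p ∉ t := fun h => Finset.notMem_erase p S (Finset.mem_powerset.1 ht h)
  have weight_without : bernoulliWeight S m t =
      (∏ q ∈ t, m q) * ((1 - m p) * ∏ q ∈ S.erase p \ t, (1 - m q)) := by
    rw [bernoulliWeight, Finset.erase_sdiff_comm,
      Finset.mul_prod_erase _ (fun q => 1 - m q) (Finset.mem_sdiff.2 ⟨hp, hpt⟩)]
  have weight_with : bernoulliWeight S m (insert p t) =
      (m p * ∏ q ∈ t, m q) * ∏ q ∈ S.erase p \ t, (1 - m q) := by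
    rw [bernoulliWeight, Finset.prod_insert hpt, Finset.sdiff_insert, Finset.erase_sdiff_comm]
  rw [weight_without, weight_with, hΨ, if_neg hpt, if_pos (Finset.mem_insert_self p t)]
  ring

end BernoulliWeight

section RandomGraph

variable {V : Type*}

/-- The graph in which `a` and `b` are adjacent if one of the pairs `(a, b)`, `(b, a)` lies
in `e`. -/
def graphOfPairs (e : Finset (V × V)) : SimpleGraph V :=
  SimpleGraph.fromRel fun a b => (a, b) ∈ e

theorem adjWeight_graphOfPairs_insert [DecidableEq V] {p : V × V} {a b : V}
    (h : s(a, b) ≠ s(p.1, p.2)) (e : Finset (V × V)) :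
    adjWeight (graphOfPairs (insert p e)) a b = adjWeight (graphOfPairs e) a b := by
  have ne_left : (a, b) ≠ p := fun h' => h (h' ▸ rfl)
  have ne_right : (b, a) ≠ p := fun h' => h (h' ▸ Sym2.eq_swap)
  simp [adjWeight, graphOfPairs, ne_left, ne_right]

variable [Fintype V] [LinearOrder V]

theorem adjWeight_graphOfPairs {e : Finset (V × V)} (he : e ⊆ orderedPairs V) {p : V × V}
    (hp : p ∈ orderedPairs V) :
    adjWeight (graphOfPairs e) p.1 p.2 = if p ∈ e then 1 else 0 := by
  classical
  have hlt := mem_orderedPairs.1 hp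
  have swap_notMem : (p.2, p.1) ∉ e := fun h => (mem_orderedPairs.1 (he h)).asymm hlt
  simp [adjWeight, graphOfPairs, hlt.ne, swap_notMem]

theorem edgePairs_graphOfPairs {k : ℕ} {e : Finset (Fin k × Fin k)}
    (he : e ⊆ orderedPairs (Fin k)) : edgePairs (graphOfPairs e) = e := by
  classical
  ext p
  simp only [edgePairs, graphOfPairs, SimpleGraph.fromRel_adj, Finset.mem_filter, Finset.mem_univ,
    true_and]
  refine ⟨fun ⟨hlt, _, h⟩ => h.resolve_right fun h => ?_, fun h => ?_⟩
  · exact (mem_orderedPairs.1 (he h)).asymm hlt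
  · exact ⟨mem_orderedPairs.1 (he h), (mem_orderedPairs.1 (he h)).ne, .inl h⟩

theorem sum_bernoulliWeight_mul_adjWeight_sub_mul {M : V → V → ℝ} (hM : ∀ a b, M a b = M b a)
    {a b : V} (hab : a ≠ b) {Ψ : Finset (V × V) → ℝ}
    (hΨ : ∀ p : V × V, s(p.1, p.2) = s(a, b) → ∀ e, Ψ (insert p e) = Ψ e) :
    ∑ e ∈ (orderedPairs V).powerset, bernoulliWeight (orderedPairs V) (fun p => M p.1 p.2) e *
      ((adjWeight (graphOfPairs e) a b - M a b) * Ψ e) = 0 := by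
  obtain ⟨p, hp, hpab⟩ := exists_mem_orderedPairs hab
  rw [← sum_bernoulliWeight_mul_boole_sub_mul hp (fun p => M p.1 p.2) (hΨ p hpab)]
  refine Finset.sum_congr rfl fun e he => ?_
  rw [← adjWeight_graphOfPairs (Finset.mem_powerset.1 he) hp]
  rcases Sym2.eq_iff.1 hpab with h | h <;> rw [h.1, h.2]
  rw [hM b a, (isWeightedGraph_adjWeight _).1 b a]

theorem sum_bernoulliWeight_mul_c4Weight_eq_zero {M : V → V → ℝ} (hM : ∀ a b, M a b = M b a)
    {y : Fin 4 → V} (hy : Function.Injective y) :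
    ∑ e ∈ (orderedPairs V).powerset, bernoulliWeight (orderedPairs V) (fun p => M p.1 p.2) e *
      c4Weight (fun a b => adjWeight (graphOfPairs e) a b - M a b) y = 0 := by
  have ne {i j : Fin 4} (h : i ≠ j) : y i ≠ y j := hy.ne h
  simp only [c4Weight, mul_assoc]
  refine sum_bernoulliWeight_mul_adjWeight_sub_mul hM (ne (by decide)) fun p hp e => ?_
  have insert_eq (i j : Fin 4) (h : s(i, j) ≠ s(2, 0)) :
      adjWeight (graphOfPairs (insert p e)) (y i) (y j) =
        adjWeight (graphOfPairs e) (y i) (y j) := by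
    rw [adjWeight_graphOfPairs_insert]
    exact fun h' => h (Sym2.map.injective hy (h'.trans hp))
  rw [insert_eq 2 1 (by decide), insert_eq 3 0 (by decide), insert_eq 3 1 (by decide)]

theorem sum_bernoulliWeight_mul_c4Density_le [Nonempty V] {M : V → V → ℝ}
    (hM : IsWeightedGraph M) :
    ∑ e ∈ (orderedPairs V).powerset, bernoulliWeight (orderedPairs V) (fun p => M p.1 p.2) e *
      c4Density (fun a b => adjWeight (graphOfPairs e) a b - M a b) ≤ 6 / Fintype.card V := by
  simp only [c4Density_eq_expect_c4Weight, Finset.mul_expect]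
  rw [← Finset.expect_sum_comm]
  refine (expect_le_add_card_orderedPairs_div le_rfl (fun y => ?_)
    fun y hy => (sum_bernoulliWeight_mul_c4Weight_eq_zero hM.1 hy).le).trans_eq (zero_add _)
  rw [← sum_bernoulliWeight (orderedPairs V) fun p => M p.1 p.2]
  refine Finset.sum_le_sum fun e _ => mul_le_of_le_one_right
    (bernoulliWeight_nonneg fun p => hM.2 _ _) (c4Weight_le_one (fun a b => ?_) y)
  exact Real.dist_le_of_mem_Icc_01 ((isWeightedGraph_adjWeight _).2 a b) (hM.2 a b)

end RandomGraph

section SampleProb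

variable {V : Type*} [Fintype V] [LinearOrder V] {W : ℝ → ℝ → ℝ}

/-- The probability that the `W`-random graph on the vertex set `V` has edge set `e`. In this
random graph the vertices carry independent uniform types in `[0,1]`, and conditionally on the types
two vertices of types `x` and `y` are joined independently with probability `W x y`. -/
noncomputable def sampleProb (e : Finset (V × V)) (W : ℝ → ℝ → ℝ) : ℝ :=
  ∫ x, bernoulliWeight (orderedPairs V) (fun p => W (x p.1) (x p.2)) e ∂Measure.pi fun _ => μ01

theorem sampleProb_nonneg (hW : IsGraphon W) (e : Finset (V × V)) : 0 ≤ sampleProb e W :=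
  integral_nonneg fun _ => bernoulliWeight_nonneg fun _ => hW.2.2 _ _

theorem integrable_bernoulliWeight (hW : IsGraphon W) (e : Finset (V × V)) :
    Integrable (fun x : V → ℝ => bernoulliWeight (orderedPairs V) (fun p => W (x p.1) (x p.2)) e)
      (Measure.pi fun _ => μ01) := by
  simp only [bernoulliWeight_eq_sum]
  exact integrable_finsetSum _ fun T _ =>
    (integrable_prod_graphon (fun _ => hW) (e ∪ T)).const_mul _

theorem sum_sampleProb (hW : IsGraphon W) :
    ∑ e ∈ (orderedPairs V).powerset, sampleProb e W = 1 := by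
  simp only [sampleProb]
  rw [← integral_finsetSum _ fun e _ => integrable_bernoulliWeight hW e]
  simp [sum_bernoulliWeight]

theorem sampleProb_eq_sum_decoratedDensity (hW : IsGraphon W) (e : Finset (V × V)) :
    sampleProb e W = ∑ T ∈ (orderedPairs V \ e).powerset,
      (-1) ^ T.card * decoratedDensity (e ∪ T) fun _ => W := by
  simp only [sampleProb, bernoulliWeight_eq_sum]
  rw [integral_finsetSum _ fun T _ =>
    (integrable_prod_graphon (fun _ => hW) (e ∪ T)).const_mul _]
  simp only [integral_const_mul, decoratedDensity]

theorem tendsto_sampleProb {ι : Type*} {l : Filter ι} {U : ι → ℝ → ℝ → ℝ}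
    (hU : ∀ i, IsGraphon (U i)) (hW : IsGraphon W)
    (h : ∀ R ⊆ orderedPairs V,
      Tendsto (fun i => decoratedDensity R fun _ => U i) l (nhds (decoratedDensity R fun _ => W)))
    {e : Finset (V × V)} (he : e ⊆ orderedPairs V) :
    Tendsto (fun i => sampleProb e (U i)) l (nhds (sampleProb e W)) := by
  simp only [sampleProb_eq_sum_decoratedDensity hW, sampleProb_eq_sum_decoratedDensity (hU _)]
  refine tendsto_finsetSum _ fun T hT => (h _ (Finset.union_subset he ?_)).const_mul _
  exact (Finset.mem_powerset.1 hT).trans Finset.sdiff_subset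

theorem sampleProb_stepKernel {n : ℕ} [NeZero n] (A : Fin n → Fin n → ℝ) (e : Finset (V × V)) :
    sampleProb e (stepKernel A) =
      𝔼 x : V → Fin n, bernoulliWeight (orderedPairs V) (fun p => A (x p.1) (x p.2)) e :=
  integral_comp_stepIndex_eq_expect fun x : V → Fin n =>
    bernoulliWeight (orderedPairs V) (fun p => A (x p.1) (x p.2)) e

end SampleProb

section StepSampling

variable {n k : ℕ} [NeZero n] [NeZero k] {κ : Type*} [Fintype κ] [LinearOrder κ] {r s : ℝ}

theorem cutDist_stepKernel_le (A B : Fin n → Fin n → ℝ) (hr : 0 < r) :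
    cutDist (stepKernel A) (stepKernel B) ≤ r + c4Density (fun i j => A i j - B i j) / r ^ 3 :=
  (cutDist_le_cutNorm _ _).trans (cutNorm_stepKernel_le (fun i j => A i j - B i j) hr)

variable {A : Fin n → Fin n → ℝ} {B : κ → κ → ℝ}

theorem cutDist_graphonOf_stepKernel_le (G : SimpleGraph (Fin k)) (A : Fin n → Fin n → ℝ)
    (hB : ∀ a b, B a b ∈ Icc (0 : ℝ) 1) (f : Fin n → κ) (x : Fin k → Fin n) (hr : 0 < r) :
    cutDist (graphonOf G) (stepKernel A) ≤ 3 * r +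
      (c4Density (fun a b => adjWeight G a b - A (x a) (x b)) +
        c4Density (fun a b => A (x a) (x b) - B (f (x a)) (f (x b))) +
        c4Density (fun i j => A i j - B (f i) (f j))) / r ^ 3 +
      2 * ∑ c, |labelCDF (f ∘ x) c - labelCDF f c| := by
  have bdd {m : ℕ} [NeZero m] (C : Fin m → Fin m → ℝ) := isBoundedKernel_stepKernel C
  have graph_bdd := (isGraphon_graphonOf G).isBoundedKernel
  have to_adj := cutDist_graphonOf_stepKernel G
  have adj_to_sample := cutDist_stepKernel_le (adjWeight G) (fun a b => A (x a) (x b)) hr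
  have sample_to_blocks := cutDist_stepKernel_le (fun a b => A (x a) (x b))
    (fun a b => B (f (x a)) (f (x b))) hr
  have relabel := cutDist_stepKernel_comp_le hB (f ∘ x) f
  have blocks_to_kernel := cutDist_stepKernel_le A (fun i j => B (f i) (f j)) hr
  rw [cutDist_comm (bdd _) (bdd _)] at blocks_to_kernel
  have via_adj := cutDist_triangle graph_bdd (bdd (adjWeight G)) (bdd A)
  have via_sample := cutDist_triangle (bdd (adjWeight G)) (bdd fun a b => A (x a) (x b)) (bdd A)
  have via_blocks := cutDist_triangle (bdd fun a b => A (x a) (x b))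
    (bdd fun a b => B (f (x a)) (f (x b))) (bdd A)
  have via_all_blocks := cutDist_triangle (bdd fun a b => B (f (x a)) (f (x b)))
    (bdd fun i j => B (f i) (f j)) (bdd A)
  simp only [Function.comp_apply] at relabel
  simp only [add_div]
  linarith

theorem abs_le_add_sq_div (hs : 0 < s) (t : ℝ) : |t| ≤ s + t ^ 2 / s := by
  rw [← sub_le_iff_le_add', le_div_iff₀ hs, ← sq_abs]
  nlinarith [sq_nonneg (|t| - s), abs_nonneg t]

theorem expect_sum_abs_labelCDF_comp_sub_le (f : Fin n → κ) (hs : 0 < s) :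
    𝔼 x : Fin k → Fin n, ∑ c, |labelCDF (f ∘ x) c - labelCDF f c| ≤
      Fintype.card κ * (s + 1 / (k * s)) := by
  rw [Finset.expect_sum_comm, ← nsmul_eq_mul]
  refine Finset.sum_le_card_nsmul _ _ _ fun c _ => ?_
  calc 𝔼 x : Fin k → Fin n, |labelCDF (f ∘ x) c - labelCDF f c|
    _ ≤ 𝔼 x : Fin k → Fin n, (s + (labelCDF (f ∘ x) c - labelCDF f c) ^ 2 / s) :=
      Finset.expect_le_expect fun x _ => abs_le_add_sq_div hs _
    _ = s + (𝔼 x : Fin k → Fin n, (labelCDF (f ∘ x) c - labelCDF f c) ^ 2) / s := by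
      rw [Finset.expect_add_distrib, Fintype.expect_const, Finset.expect_div]
    _ ≤ s + 1 / k / s := by
      gcongr
      simpa only [Fintype.card_fin] using expect_sq_labelCDF_comp_sub_le (κ := Fin k) f c
    _ = s + 1 / (k * s) := by rw [div_div]

theorem sum_bernoulliWeight_mul_cutDist_le (hA : IsWeightedGraph A)
    (hB : ∀ a b, B a b ∈ Icc (0 : ℝ) 1) (f : Fin n → κ) (x : Fin k → Fin n) (hr : 0 < r) :
    ∑ e ∈ (orderedPairs (Fin k)).powerset,
        bernoulliWeight (orderedPairs (Fin k)) (fun p => A (x p.1) (x p.2)) e *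
          cutDist (graphonOf (graphOfPairs e)) (stepKernel A) ≤
      3 * r + (6 / k + c4Density (fun a b => A (x a) (x b) - B (f (x a)) (f (x b))) +
        c4Density (fun i j => A i j - B (f i) (f j))) / r ^ 3 +
      2 * ∑ c, |labelCDF (f ∘ x) c - labelCDF f c| := by
  set w := bernoulliWeight (orderedPairs (Fin k)) fun p => A (x p.1) (x p.2)
  set adjError : Finset (Fin k × Fin k) → ℝ :=
    fun e => c4Density fun a b => adjWeight (graphOfPairs e) a b - A (x a) (x b)
  set rest := 3 * r +
    (c4Density (fun a b => A (x a) (x b) - B (f (x a)) (f (x b))) +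
      c4Density (fun i j => A i j - B (f i) (f j))) / r ^ 3 +
    2 * ∑ c, |labelCDF (f ∘ x) c - labelCDF f c| with rest_eq
  calc _ ≤ ∑ e ∈ (orderedPairs (Fin k)).powerset, w e * (adjError e / r ^ 3 + rest) := by
        refine Finset.sum_le_sum fun e _ => mul_le_mul_of_nonneg_left
          ((cutDist_graphonOf_stepKernel_le _ A hB f x hr).trans_eq ?_)
          (bernoulliWeight_nonneg fun _ => hA.2 _ _)
        ring
    _ = (∑ e ∈ (orderedPairs (Fin k)).powerset, w e * adjError e) / r ^ 3 + rest := by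
        simp only [mul_add, Finset.sum_add_distrib, ← Finset.sum_mul, w, sum_bernoulliWeight,
          one_mul, Finset.sum_div, mul_div_assoc]
    _ ≤ 6 / k / r ^ 3 + rest := by
        gcongr
        simpa only [Fintype.card_fin] using sum_bernoulliWeight_mul_c4Density_le (hA.comp x)
    _ = _ := by rw [rest_eq]; ring

theorem sum_sampleProb_mul_cutDist_le_of_labelling (hA : IsWeightedGraph A)
    (hB : ∀ a b, B a b ∈ Icc (0 : ℝ) 1) (f : Fin n → κ) (hr : 0 < r) (hs : 0 < s) :
    ∑ e ∈ (orderedPairs (Fin k)).powerset,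
        sampleProb e (stepKernel A) * cutDist (graphonOf (graphOfPairs e)) (stepKernel A) ≤
      3 * r + (12 / k + 2 * c4Density fun i j => A i j - B (f i) (f j)) / r ^ 3 +
        2 * (Fintype.card κ * (s + 1 / (k * s))) := by
  have block_sample_le := expect_c4Density_comp_le (κ := Fin k)
    (D := fun i j => A i j - B (f i) (f j))
    fun i j => Real.dist_le_of_mem_Icc_01 (hA.2 i j) (hB _ _)
  have label_le := expect_sum_abs_labelCDF_comp_sub_le (k := k) f hs
  set blockError := c4Density fun i j => A i j - B (f i) (f j)
  calc _ = 𝔼 x : Fin k → Fin n, ∑ e ∈ (orderedPairs (Fin k)).powerset,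
        bernoulliWeight (orderedPairs (Fin k)) (fun p => A (x p.1) (x p.2)) e *
          cutDist (graphonOf (graphOfPairs e)) (stepKernel A) := by
        simp only [sampleProb_stepKernel, Finset.expect_sum_comm, Finset.expect_mul]
    _ ≤ 𝔼 x : Fin k → Fin n, (3 * r +
          (6 / k + c4Density (fun a b => A (x a) (x b) - B (f (x a)) (f (x b))) + blockError) /
            r ^ 3 + 2 * ∑ c, |labelCDF (f ∘ x) c - labelCDF f c|) :=
        Finset.expect_le_expect fun x _ => sum_bernoulliWeight_mul_cutDist_le hA hB f x hr
    _ = 3 * r + (6 / k + 𝔼 x : Fin k → Fin n,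
          c4Density (fun a b => A (x a) (x b) - B (f (x a)) (f (x b))) + blockError) / r ^ 3 +
          2 * 𝔼 x : Fin k → Fin n, ∑ c, |labelCDF (f ∘ x) c - labelCDF f c| := by
        simp only [Finset.expect_add_distrib, Fintype.expect_const, ← Finset.expect_div,
          ← Finset.mul_expect]
    _ ≤ 3 * r + (6 / k + (blockError + 6 / k) + blockError) / r ^ 3 +
          2 * (Fintype.card κ * (s + 1 / (k * s))) := by
        gcongr
        simpa only [Fintype.card_fin] using block_sample_le
    _ = _ := by ring

theorem exists_forall_sum_sampleProb_stepKernel_mul_cutDist_le {ε : ℝ} (hε : 0 < ε) :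
    ∃ k : ℕ, ∀ (n : ℕ) [NeZero n] (A : Fin n → Fin n → ℝ), IsWeightedGraph A →
      ∑ e ∈ (orderedPairs (Fin (k + 1))).powerset,
        sampleProb e (stepKernel A) * cutDist (graphonOf (graphOfPairs e)) (stepKernel A) ≤ ε := by
  set r := ε / 8 with hr
  have r_pos : 0 < r := by positivity
  obtain ⟨K, exists_labelling⟩ := exists_labelling_c4Density_le (η := r ^ 4) (by positivity)
  obtain ⟨k, hk⟩ := exists_nat_ge ((12 / r ^ 3 + 2 * (K * (K + 1) / r)) / r)
  refine ⟨k, fun n _ A hA => ?_⟩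
  obtain ⟨f, B, hB, error_le⟩ := exists_labelling (Fin n) A hA.2
  refine (sum_sampleProb_mul_cutDist_le_of_labelling (k := k + 1) hA hB f r_pos
    (s := r / (K + 1)) (by positivity)).trans ?_
  have tail_le : (12 / r ^ 3 + 2 * (K * (K + 1) / r)) / (k + 1) ≤ r := by
    rw [div_le_comm₀ (by positivity) r_pos]
    linarith
  have K_div_le : (K : ℝ) / (K + 1) ≤ 1 := div_le_one_of_le₀ (by linarith) (by positivity)
  rw [Fintype.card_fin, Nat.cast_add_one]
  calc _ ≤ 3 * r + (12 / (k + 1) + 2 * r ^ 4) / r ^ 3 +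
        2 * (K * (r / (K + 1) + 1 / ((k + 1) * (r / (K + 1))))) := by gcongr
    _ = 5 * r + 2 * (r * (K / (K + 1))) + (12 / r ^ 3 + 2 * (K * (K + 1) / r)) / (k + 1) := by
        field_simp
        ring
    _ ≤ 5 * r + 2 * (r * 1) + r := by gcongr
    _ = ε := by rw [hr]; ring

end StepSampling

/-! ### Approximation by step kernels -/

section StepApproximation

theorem dist_stepIndex_div_le {n : ℕ} [NeZero n] {x : ℝ} (hx : x ∈ Ico (0 : ℝ) 1) :
    dist ((stepIndex n x : ℝ) / n) x ≤ 1 / n := by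
  obtain ⟨h₁, h₂⟩ := (mem_Ico_div_iff (stepIndex n x) x).2 ⟨hx, rfl⟩
  rw [add_div] at h₂
  rw [Real.dist_eq, abs_le]
  exact ⟨by linarith, by linarith⟩

theorem exists_forall_abs_stepKernel_sub_le {g : ℝ × ℝ → ℝ}
    (hg : UniformContinuous g) {ε : ℝ} (hε : 0 < ε) :
    ∃ (n : ℕ) (_ : NeZero n), ∀ x ∈ Ico (0 : ℝ) 1, ∀ y ∈ Ico (0 : ℝ) 1,
      |stepKernel (fun i j : Fin n => g ((i : ℝ) / n, (j : ℝ) / n)) x y - g (x, y)| ≤ ε := by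
  obtain ⟨δ, δ_pos, hδ⟩ := Metric.uniformContinuous_iff.1 hg ε hε
  obtain ⟨m, hm⟩ := exists_nat_one_div_lt δ_pos
  refine ⟨m + 1, inferInstance, fun x hx y hy => (hδ ?_).le⟩
  rw [← Nat.cast_add_one] at hm
  exact max_lt ((dist_stepIndex_div_le hx).trans_lt hm) ((dist_stepIndex_div_le hy).trans_lt hm)

theorem exists_integral_abs_sub_stepKernel_le {f : ℝ × ℝ → ℝ} (hf : Integrable f (μ01.prod μ01))
    {ε : ℝ} (hε : 0 < ε) : ∃ (n : ℕ) (_ : NeZero n) (A : Fin n → Fin n → ℝ),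
      ∫ p, |f p - stepKernel A p.1 p.2| ∂μ01.prod μ01 ≤ ε := by
  obtain ⟨g, g_supp, hfg, g_cont, g_int⟩ :=
    hf.exists_hasCompactSupport_integral_sub_le (half_pos hε)
  obtain ⟨n, _, step_sub_le⟩ := exists_forall_abs_stepKernel_sub_le
    (g_supp.uniformContinuous_of_continuous g_cont) (half_pos hε)
  refine ⟨n, ‹_›, fun i j => g ((i : ℝ) / n, (j : ℝ) / n), ?_⟩
  set S := stepKernel fun i j : Fin n => g ((i : ℝ) / n, (j : ℝ) / n)
  have S_int : Integrable (fun p : ℝ × ℝ => S p.1 p.2) (μ01.prod μ01) :=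
    (isBoundedKernel_stepKernel _).integrable_uncurry
  have g_sub_le : ∀ᵐ p ∂μ01.prod μ01, |f p - S p.1 p.2| ≤ |f p - g p| + ε / 2 := by
    filter_upwards [Measure.quasiMeasurePreserving_fst.ae ae_mem_Ico_zero_one,
      Measure.quasiMeasurePreserving_snd.ae ae_mem_Ico_zero_one] with p hx hy
    refine (abs_sub_le _ (g p) _).trans (add_le_add_right ?_ _)
    rw [abs_sub_comm]
    exact step_sub_le _ hx _ hy
  calc ∫ p, |f p - S p.1 p.2| ∂μ01.prod μ01
      ≤ ∫ p, (|f p - g p| + ε / 2) ∂μ01.prod μ01 :=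
        integral_mono_ae (hf.sub S_int).abs ((hf.sub g_int).abs.add (integrable_const _)) g_sub_le
    _ = (∫ p, |f p - g p| ∂μ01.prod μ01) + ε / 2 := by
        refine (integral_add (hf.sub g_int).abs (integrable_const _)).trans ?_
        simp
    _ ≤ ε := by
        simp only [Real.norm_eq_abs] at hfg
        linarith

section ClampedSymmetrization

variable {ι : Type*}

/-- The symmetrisation of the matrix `A` with entries clamped to `[0,1]`. -/
noncomputable def clampedSymmetrization (A : ι → ι → ℝ) (i j : ι) : ℝ :=
  projIcc (0 : ℝ) 1 zero_le_one ((A i j + A j i) / 2)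

theorem isWeightedGraph_clampedSymmetrization (A : ι → ι → ℝ) :
    IsWeightedGraph (clampedSymmetrization A) :=
  ⟨fun i j => by rw [clampedSymmetrization, add_comm, clampedSymmetrization],
    fun _ _ => Subtype.coe_prop _⟩

theorem abs_sub_clampedSymmetrization_le (A : ι → ι → ℝ) (i j : ι) {w : ℝ} (hw : w ∈ Icc 0 1) :
    |w - clampedSymmetrization A i j| ≤ (|w - A i j| + |w - A j i|) / 2 := by
  calc |w - clampedSymmetrization A i j|
      = |(projIcc (0 : ℝ) 1 zero_le_one w : ℝ) - clampedSymmetrization A i j| := by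
        rw [projIcc_of_mem _ hw]
    _ ≤ |w - (A i j + A j i) / 2| := abs_projIcc_sub_projIcc _
    _ = |(w - A i j) + (w - A j i)| / 2 := by
        rw [← abs_two (α := ℝ), ← abs_div, abs_two]
        ring_nf
    _ ≤ (|w - A i j| + |w - A j i|) / 2 := by
        gcongr
        exact abs_add_le _ _

end ClampedSymmetrization

theorem IsGraphon.exists_cutDist_stepKernel_le {W : ℝ → ℝ → ℝ} (hW : IsGraphon W) {ε : ℝ}
    (hε : 0 < ε) : ∃ (n : ℕ) (_ : NeZero n) (A : Fin n → Fin n → ℝ),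
      IsWeightedGraph A ∧ cutDist W (stepKernel A) ≤ ε := by
  obtain ⟨n, _, A, hA⟩ := exists_integral_abs_sub_stepKernel_le
    (hW.isBoundedKernel.integrable_uncurry (μ := μ01) (ν := μ01)) hε
  have hWA (B : Fin n → Fin n → ℝ) : IsBoundedKernel fun x y => W x y - stepKernel B x y :=
    hW.isBoundedKernel.sub (isBoundedKernel_stepKernel B)
  set h : ℝ × ℝ → ℝ := fun p => |W p.1 p.2 - stepKernel A p.1 p.2|
  have h_int : Integrable h (μ01.prod μ01) := (hWA A).integrable_uncurry.abs
  have clamped_le (p : ℝ × ℝ) :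
      |W p.1 p.2 - stepKernel (clampedSymmetrization A) p.1 p.2| ≤ (h p + h p.swap) / 2 := by
    simp only [h, Prod.fst_swap, Prod.snd_swap, hW.2.1 p.2 p.1]
    exact abs_sub_clampedSymmetrization_le A _ _ (hW.2.2 _ _)
  refine ⟨n, ‹_›, clampedSymmetrization A, isWeightedGraph_clampedSymmetrization A, ?_⟩
  calc cutDist W (stepKernel (clampedSymmetrization A))
      ≤ ∫ p, |W p.1 p.2 - stepKernel (clampedSymmetrization A) p.1 p.2| ∂μ01.prod μ01 :=
        (cutDist_le_cutNorm _ _).trans (cutNorm_le_integral_abs (hWA _).integrable_uncurry)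
    _ ≤ ∫ p, (h p + h p.swap) / 2 ∂μ01.prod μ01 :=
        integral_mono (hWA _).integrable_uncurry.abs ((h_int.add h_int.swap).div_const 2) clamped_le
    _ = ∫ p, h p ∂μ01.prod μ01 := by
        have integral_add_swap := integral_add h_int h_int.swap
        simp only [Function.comp_apply, integral_prod_swap] at integral_add_swap
        rw [integral_div, integral_add_swap, add_self_div_two]
    _ ≤ ε := hA

end StepApproximation

/-! ### Convergence -/

section Convergence

variable {ι : Type*} {l : Filter ι} {U : ι → ℝ → ℝ → ℝ} {W : ℝ → ℝ → ℝ}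

theorem tendsto_decoratedDensity_of_tendsto_cutDist {V : Type*} [Fintype V] [LinearOrder V]
    {R : Finset (V × V)} (hR : ∀ p ∈ R, p.1 < p.2) (hU : ∀ i, IsGraphon (U i)) (hW : IsGraphon W)
    (h : Tendsto (fun i => cutDist (U i) W) l (nhds 0)) :
    Tendsto (fun i => decoratedDensity R fun _ => U i) l
      (nhds (decoratedDensity R fun _ => W)) := by
  refine tendsto_iff_dist_tendsto_zero.2 (squeeze_zero (fun _ => dist_nonneg)
    (fun i => abs_decoratedDensity_sub_le_card_mul_cutDist hR (hU i) hW) ?_)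
  simpa only [mul_zero] using h.const_mul (R.card : ℝ)

theorem tendsto_cutDist_right {H : ℝ → ℝ → ℝ} (hH : IsGraphon H) (hU : ∀ i, IsGraphon (U i))
    (hW : IsGraphon W) (h : Tendsto (fun i => cutDist (U i) W) l (nhds 0)) :
    Tendsto (fun i => cutDist H (U i)) l (nhds (cutDist H W)) := by
  refine tendsto_iff_dist_tendsto_zero.2 (squeeze_zero (fun _ => dist_nonneg) (fun i => ?_) h)
  have bdd {V : ℝ → ℝ → ℝ} (hV : IsGraphon V) : IsBoundedKernel V := hV.isBoundedKernel
  have to_W := cutDist_triangle (bdd hH) (bdd (hU i)) (bdd hW)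
  have to_U := cutDist_triangle (bdd hH) (bdd hW) (bdd (hU i))
  rw [cutDist_comm (bdd hW) (bdd (hU i))] at to_U
  exact abs_sub_le_iff.2 ⟨by linarith, by linarith⟩

theorem exists_forall_sum_sampleProb_mul_cutDist_le {ε : ℝ} (hε : 0 < ε) :
    ∃ k : ℕ, ∀ W : ℝ → ℝ → ℝ, IsGraphon W →
      ∑ e ∈ (orderedPairs (Fin (k + 1))).powerset,
        sampleProb e W * cutDist (graphonOf (graphOfPairs e)) W ≤ ε := by
  obtain ⟨k, hk⟩ := exists_forall_sum_sampleProb_stepKernel_mul_cutDist_le hε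
  refine ⟨k, fun W hW => ?_⟩
  choose n _ A hA cutDist_le using fun j : ℕ =>
    hW.exists_cutDist_stepKernel_le (Nat.one_div_pos_of_nat (n := j))
  have step_graphon (j : ℕ) : IsGraphon (stepKernel (A j)) := (hA j).isGraphon_stepKernel
  have step_tendsto : Tendsto (fun j => cutDist (stepKernel (A j)) W) atTop (nhds 0) := by
    refine squeeze_zero (fun _ => cutDist_nonneg _ _) (fun j => ?_)
      (tendsto_one_div_add_atTop_nhds_zero_nat (𝕜 := ℝ))
    rw [cutDist_comm (step_graphon j).isBoundedKernel hW.isBoundedKernel]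
    exact cutDist_le j
  refine le_of_tendsto (x := atTop) (tendsto_finsetSum _ fun e he => .mul ?_ ?_)
    (.of_forall fun j => hk (n j) (A j) (hA j))
  · refine tendsto_sampleProb step_graphon hW (fun R hR => ?_) (Finset.mem_powerset.1 he)
    exact tendsto_decoratedDensity_of_tendsto_cutDist (fun p hp => mem_orderedPairs.1 (hR hp))
      step_graphon hW step_tendsto
  · exact tendsto_cutDist_right (isGraphon_graphonOf _) step_graphon hW step_tendsto

theorem cutDist_le_sum_sampleProb (k : ℕ) {U W : ℝ → ℝ → ℝ} (hU : IsGraphon U) (hW : IsGraphon W) :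
    cutDist U W ≤
      ∑ e ∈ (orderedPairs (Fin k)).powerset,
        sampleProb e U * cutDist (graphonOf (graphOfPairs e)) U +
      ∑ e ∈ (orderedPairs (Fin k)).powerset,
        sampleProb e W * cutDist (graphonOf (graphOfPairs e)) W +
      ∑ e ∈ (orderedPairs (Fin k)).powerset, |sampleProb e U - sampleProb e W| := by
  rw [← Finset.sum_add_distrib, ← Finset.sum_add_distrib, ← one_mul (cutDist U W),
    ← sum_sampleProb (V := Fin k) hU, Finset.sum_mul]
  refine Finset.sum_le_sum fun e _ => ?_
  set H := graphonOf (graphOfPairs e)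
  have hH : IsGraphon H := isGraphon_graphonOf _
  have triangle := cutDist_triangle hU.isBoundedKernel hH.isBoundedKernel hW.isBoundedKernel
  rw [cutDist_comm hU.isBoundedKernel hH.isBoundedKernel] at triangle
  calc sampleProb e U * cutDist U W
      ≤ sampleProb e U * (cutDist H U + cutDist H W) :=
        mul_le_mul_of_nonneg_left triangle (sampleProb_nonneg hU e)
    _ = sampleProb e U * cutDist H U + sampleProb e W * cutDist H W +
          (sampleProb e U - sampleProb e W) * cutDist H W := by ring
    _ ≤ sampleProb e U * cutDist H U + sampleProb e W * cutDist H W +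
          |sampleProb e U - sampleProb e W| * 1 := by
        gcongr
        · exact cutDist_nonneg H W
        · exact le_abs_self _
        · exact cutDist_le_one hH hW
    _ = _ := by rw [mul_one]

theorem tendsto_cutDist_of_tendsto_homDensity (hU : ∀ i, IsGraphon (U i)) (hW : IsGraphon W)
    (h : ∀ (m : ℕ) (F : SimpleGraph (Fin m)),
      Tendsto (fun i => homDensity F (U i)) l (nhds (homDensity F W))) :
    Tendsto (fun i => cutDist (U i) W) l (nhds 0) := by
  refine tendsto_order.2 ⟨fun r hr => .of_forall fun i => hr.trans_le (cutDist_nonneg _ _),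
    fun ε hε => ?_⟩
  obtain ⟨k, hk⟩ := exists_forall_sum_sampleProb_mul_cutDist_le (show 0 < ε / 3 by positivity)
  have density_tendsto (R : Finset (Fin (k + 1) × Fin (k + 1))) (hR : R ⊆ orderedPairs _) :
      Tendsto (fun i => decoratedDensity R fun _ => U i) l
        (nhds (decoratedDensity R fun _ => W)) := by
    simpa only [homDensity_eq_decoratedDensity, edgePairs_graphOfPairs hR] using
      h _ (graphOfPairs R)
  have sample_tendsto : Tendsto (fun i => ∑ e ∈ (orderedPairs (Fin (k + 1))).powerset,
      |sampleProb e (U i) - sampleProb e W|) l (nhds 0) := by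
    rw [← Finset.sum_const_zero (s := (orderedPairs (Fin (k + 1))).powerset)]
    exact tendsto_finsetSum _ fun e he => tendsto_iff_dist_tendsto_zero.1
      (tendsto_sampleProb hU hW density_tendsto (Finset.mem_powerset.1 he))
  filter_upwards [sample_tendsto.eventually_lt_const (show 0 < ε / 3 by positivity)] with i hi
  linarith [cutDist_le_sum_sampleProb (k + 1) (hU i) hW, hk (U i) (hU i), hk W hW]

theorem tendsto_homDensity_iff_tendsto_cutDist (hU : ∀ i, IsGraphon (U i)) (hW : IsGraphon W) :
    (∀ (m : ℕ) (F : SimpleGraph (Fin m)),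
      Tendsto (fun i => homDensity F (U i)) l (nhds (homDensity F W))) ↔
    Tendsto (fun i => cutDist (U i) W) l (nhds 0) :=
  ⟨tendsto_cutDist_of_tendsto_homDensity hU hW, fun h _ _ =>
    tendsto_decoratedDensity_of_tendsto_cutDist (fun _ => lt_of_mem_edgePairs) hU hW h⟩

end Convergence

theorem conv_to_graphon_iff_cutDist_general {ι : Type*} {l : Filter ι} (N : ι → ℕ)
    (G : ∀ i, SimpleGraph (Fin (N i))) (hN : ∀ᶠ i in l, N i ≠ 0) (W : ℝ → ℝ → ℝ)
    (hW : IsGraphon W) :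
    (∀ (m : ℕ) (F : SimpleGraph (Fin m)),
      Tendsto (fun i => homDensityFin F (G i)) l (nhds (homDensity F W))) ↔
    Tendsto (fun i => cutDist (graphonOf (G i)) W) l (nhds 0) := by
  rw [← tendsto_homDensity_iff_tendsto_cutDist (fun i => isGraphon_graphonOf (G i)) hW]
  refine forall₂_congr fun m F => tendsto_congr' (hN.mono fun i hi => ?_)
  have : NeZero (N i) := ⟨hi⟩
  exact (homDensity_graphonOf F (G i)).symm

/-- `t(F,G_n) → t(F,W)` for every finite simple graph `F` if and only if
`δ_□(W_{G_n}, W) → 0`. -/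
theorem conv_to_graphon_iff_cutDist (N : ℕ → ℕ) (G : ∀ i, SimpleGraph (Fin (N i)))
    (hN : Filter.Tendsto N Filter.atTop Filter.atTop)
    (W : ℝ → ℝ → ℝ) (hW : IsGraphon W) :
    (∀ (m : ℕ) (F : SimpleGraph (Fin m)),
        Filter.Tendsto (fun i => homDensityFin F (G i)) Filter.atTop (nhds (homDensity F W))) ↔
    Filter.Tendsto (fun i => cutDist (graphonOf (G i)) W) Filter.atTop (nhds 0) :=
  conv_to_graphon_iff_cutDist_general N G (hN.eventually_ne_atTop 0) W hW
end
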